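/- arXiv:1106.0722 — 2 statements merged into one kernel-verified Lean document; each statement's English description precedes it below -/
import Mathlib

section
/- There exists a constant C < ∞, depending only on d, such that for all Lebesgue measurable sets E, E* ⊆ ℝ^d of finite measure one has 𝒯(E, E*) ≤ C |E|^{d/(d+1)} |E*|^{d/(d+1)} (the endpoint restricted weak type inequality for T). -/
open MeasureTheory ENNReal

noncomputable section

/-- `ℝ^{d-1}` -/
abbrev Vec (n : ℕ) : Type := EuclideanSpace ℝ (Fin n)

/-- `ℝ^d = ℝ^{d-1} × ℝ`, a point `x = (x', x_d)` -/
abbrev Pt (n : ℕ) : Type := Vec n × ℝ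

/-- The Radon-like transform `Tf(x) = ∫_{ℝ^{d-1}} f(x' - t, x_d - |t|²) dt`. -/
def radonT (n : ℕ) (f : Pt n → ℝ≥0∞) (x : Pt n) : ℝ≥0∞ :=
  ∫⁻ t : Vec n, f (x.1 - t, x.2 - ‖t‖ ^ 2)

/-- The incidence functional `𝒯(E, E*) = ∫_E T(χ_{E*})`. -/
def incT (n : ℕ) (E Estar : Set (Pt n)) : ℝ≥0∞ :=
  ∫⁻ x in E, radonT n (Estar.indicator 1) x

/-! A partial Fourier transform in `x_d` turns the incidence functional into an integral over
frequencies `l` of bilinear forms on `ℝ^{d-1}` with the quadratic phase `e(l |x' - y'|²)` as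
kernel. The frequencies `|l| ≤ ρ / 2` contribute at most `ρ |E| |E*|`, by the trivial `L¹`
bound. Expanding the square exhibits the kernel as a Fourier transform, dilated by `2 l`,
between two multiplications by unimodular functions; by Plancherel it is bounded on `L²` with
norm `|2 l|^{-(d-1)/2}`, so the remaining frequencies contribute at most
`ρ^{-(d-1)/2} (|E| |E*|)^{1/2}`. The two bounds balance at `ρ = (|E| |E*|)^{-1/(d+1)}`. -/

section PlancherelIntegrable

open scoped FourierTransform InnerProductSpace

variable {V H : Type*} [NormedAddCommGroup V] [InnerProductSpace ℝ V] [FiniteDimensional ℝ V]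
  [MeasurableSpace V] [BorelSpace V]
  [NormedAddCommGroup H]

lemma continuous_fourier_of_integrable [NormedSpace ℂ H] {f : V → H} (hf : Integrable f) :
    Continuous (𝓕 f) :=
  VectorFourier.fourierIntegral_continuous Real.continuous_fourierChar (L := innerₗ V)
    continuous_inner hf

lemma fourier_comp_sub_right [NormedSpace ℂ H] (f : V → H) (a l : V) :
    𝓕 (fun x ↦ f (x - a)) l = 𝐞 (-⟪a, l⟫_ℝ) • 𝓕 f l := by
  have h := congrFun
    (VectorFourier.fourierIntegral_comp_add_right Real.fourierChar volume (innerₗ V) f (-a)) l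
  simp only [Function.comp_def, ← sub_eq_add_neg, innerₗ_apply_apply, inner_neg_left] at h
  exact h

variable [InnerProductSpace ℂ H] [CompleteSpace H] {f g : V → H}

lemma coeFn_fourier_toLp (hf : Integrable f) (hf₂ : MemLp f 2) :
    (𝓕 (hf₂.toLp f) : Lp (α := V) H 2) =ᵐ[volume] 𝓕 f := by
  refine ae_eq_of_integral_contDiff_smul_eq ((Lp.memLp _).locallyIntegrable one_le_two)
    (continuous_fourier_of_integrable hf).locallyIntegrable fun g hg hgc ↦ ?_
  have hgc' : HasCompactSupport (fun x ↦ (g x : ℂ)) :=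
    hgc.comp_left (g := ((↑) : ℝ → ℂ)) Complex.ofReal_zero
  let φ : SchwartzMap V ℂ := hgc'.toSchwartzMap (Complex.ofRealCLM.contDiff.comp hg)
  have h_distribution : ∫ x, 𝓕 φ x • hf₂.toLp f x = ∫ x, φ x • 𝓕 (hf₂.toLp f) x := by
    rw [← Lp.toTemperedDistribution_apply, ← TemperedDistribution.fourier_apply,
      Lp.fourier_toTemperedDistribution_eq, Lp.toTemperedDistribution_apply]
  have h_flip : ∫ x, 𝓕 φ x • f x = ∫ x, φ x • 𝓕 f x := by
    have := VectorFourier.integral_fourierIntegral_smul_eq_flip (L := innerₗ V)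
      Real.continuous_fourierChar continuous_inner φ.integrable hf (μ := volume) (ν := volume)
    rwa [flip_innerₗ] at this
  calc ∫ x, g x • 𝓕 (hf₂.toLp f) x
    _ = ∫ x, 𝓕 φ x • hf₂.toLp f x := h_distribution.symm
    _ = ∫ x, 𝓕 φ x • f x := integral_congr_ae <| by
        filter_upwards [hf₂.coeFn_toLp] with x hx
        rw [hx]
    _ = ∫ x, g x • 𝓕 f x := h_flip

lemma eLpNorm_two_fourier (hf : Integrable f) (hf₂ : MemLp f 2) :
    eLpNorm (𝓕 f) 2 = eLpNorm f 2 := by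
  rw [← eLpNorm_congr_ae (coeFn_fourier_toLp hf hf₂), ← eLpNorm_congr_ae hf₂.coeFn_toLp,
    ← Lp.enorm_def, ← Lp.enorm_def, ← ofReal_norm, ← ofReal_norm, Lp.norm_fourier_eq]

lemma integral_inner_fourier_fourier (hf : Integrable f) (hf₂ : MemLp f 2) (hg : Integrable g)
    (hg₂ : MemLp g 2) : ∫ l, ⟪𝓕 f l, 𝓕 g l⟫_ℂ = ∫ x, ⟪f x, g x⟫_ℂ := by
  calc ∫ l, ⟪𝓕 f l, 𝓕 g l⟫_ℂ
    _ = ⟪𝓕 (hf₂.toLp f), 𝓕 (hg₂.toLp g)⟫_ℂ := by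
        rw [L2.inner_def]
        refine integral_congr_ae ?_
        filter_upwards [coeFn_fourier_toLp hf hf₂, coeFn_fourier_toLp hg hg₂] with l hfl hgl
        rw [hfl, hgl]
    _ = ⟪hf₂.toLp f, hg₂.toLp g⟫_ℂ := Lp.inner_fourier_eq _ _
    _ = ∫ x, ⟪f x, g x⟫_ℂ := by
        rw [L2.inner_def]
        refine integral_congr_ae ?_
        filter_upwards [hf₂.coeFn_toLp, hg₂.coeFn_toLp] with x hfx hgx
        rw [hfx, hgx]

lemma integral_inner_comp_sub_eq_integral_fourier (hf : Integrable f) (hf₂ : MemLp f 2)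
    (hg : Integrable g) (hg₂ : MemLp g 2) (a : V) :
    ∫ x, ⟪g (x - a), f x⟫_ℂ = ∫ l, 𝐞 ⟪a, l⟫_ℝ • ⟪𝓕 g l, 𝓕 f l⟫_ℂ := by
  have h_conj (r : ℝ) : starRingEnd ℂ (𝐞 (-r) : ℂ) = 𝐞 r := by
    rw [AddChar.map_neg_eq_inv, Circle.coe_inv_eq_conj, Complex.conj_conj]
  rw [← integral_inner_fourier_fourier (hg.comp_sub_right a)
    (hg₂.comp_measurePreserving (measurePreserving_sub_right _ a)) hf hf₂]
  refine integral_congr_ae (.of_forall fun l ↦ ?_)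
  simp only [fourier_comp_sub_right, Circle.smul_def, inner_smul_left, h_conj, smul_eq_mul]

end PlancherelIntegrable

section MixedNorms

variable {α β E F : Type*} [MeasurableSpace α] [MeasurableSpace β] {μ : Measure α} {ν : Measure β}
  [NormedAddCommGroup E] [NormedAddCommGroup F]

lemma lintegral_enorm_mul_enorm_le_eLpNorm_two {f : α → E} {g : α → F}
    (hf : AEStronglyMeasurable f μ) (hg : AEStronglyMeasurable g μ) :
    ∫⁻ x, ‖f x‖ₑ * ‖g x‖ₑ ∂μ ≤ eLpNorm f 2 μ * eLpNorm g 2 μ := by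
  simp only [eLpNorm_eq_lintegral_rpow_enorm_toReal two_ne_zero ofNat_ne_top, toReal_ofNat]
  exact lintegral_mul_le_Lp_mul_Lq μ .two_two hf.enorm hg.enorm

variable [SFinite ν] {p : ℝ≥0∞}

lemma lintegral_eLpNorm_rpow_right {f : α × β → E} (hp : p ≠ 0) (hp_top : p ≠ ∞)
    (hf : AEStronglyMeasurable f (μ.prod ν)) :
    ∫⁻ x, eLpNorm (fun y ↦ f (x, y)) p ν ^ p.toReal ∂μ = eLpNorm f p (μ.prod ν) ^ p.toReal := by
  have hp' : p.toReal ≠ 0 := (toReal_pos hp hp_top).ne'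
  simp only [eLpNorm_eq_lintegral_rpow_enorm_toReal hp hp_top, one_div,
    ENNReal.rpow_inv_rpow hp']
  exact (lintegral_prod _ (hf.enorm.pow_const _)).symm

variable [SFinite μ]

lemma lintegral_eLpNorm_rpow_left {f : α × β → E} (hp : p ≠ 0) (hp_top : p ≠ ∞)
    (hf : AEStronglyMeasurable f (μ.prod ν)) :
    ∫⁻ y, eLpNorm (fun x ↦ f (x, y)) p μ ^ p.toReal ∂ν = eLpNorm f p (μ.prod ν) ^ p.toReal := by
  have hp' : p.toReal ≠ 0 := (toReal_pos hp hp_top).ne'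
  simp only [eLpNorm_eq_lintegral_rpow_enorm_toReal hp hp_top, one_div,
    ENNReal.rpow_inv_rpow hp']
  exact (lintegral_prod_symm _ (hf.enorm.pow_const _)).symm

lemma measurable_eLpNorm_left {f : α × β → E} (hp : p ≠ 0) (hp_top : p ≠ ∞)
    (hf : StronglyMeasurable f) : Measurable fun y ↦ eLpNorm (fun x ↦ f (x, y)) p μ := by
  simp only [eLpNorm_eq_lintegral_rpow_enorm_toReal hp hp_top]
  exact (hf.enorm.pow_const _).lintegral_prod_left'.pow_const _

lemma lintegral_eLpNorm_two_mul_eLpNorm_two_le {f : α × β → E} {g : α × β → F}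
    (hf : StronglyMeasurable f) (hg : StronglyMeasurable g) :
    ∫⁻ y, eLpNorm (fun x ↦ f (x, y)) 2 μ * eLpNorm (fun x ↦ g (x, y)) 2 μ ∂ν ≤
      eLpNorm f 2 (μ.prod ν) * eLpNorm g 2 (μ.prod ν) := by
  have h := lintegral_mul_le_Lp_mul_Lq ν .two_two
    (measurable_eLpNorm_left (μ := μ) two_ne_zero ofNat_ne_top hf).aemeasurable
    (measurable_eLpNorm_left (μ := μ) two_ne_zero ofNat_ne_top hg).aemeasurable
  have hf₂ := lintegral_eLpNorm_rpow_left (μ := μ) (ν := ν) two_ne_zero ofNat_ne_top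
    hf.aestronglyMeasurable
  have hg₂ := lintegral_eLpNorm_rpow_left (μ := μ) (ν := ν) two_ne_zero ofNat_ne_top
    hg.aestronglyMeasurable
  simp only [toReal_ofNat] at hf₂ hg₂
  simpa only [Pi.mul_apply, hf₂, hg₂, one_div, ENNReal.rpow_rpow_inv (two_ne_zero' ℝ)] using h

end MixedNorms

section QuadraticPhase

open Module
open scoped FourierTransform InnerProductSpace

section Circle

variable {X E : Type*} [MeasurableSpace X] {μ : Measure X} [NormedAddCommGroup E] [NormedSpace ℂ E]
  {p : ℝ≥0∞}

lemma enorm_circle_smul (z : Circle) (v : E) : ‖z • v‖ₑ = ‖v‖ₑ := by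
  simp [← ofReal_norm]

lemma eLpNorm_circle_smul (z : X → Circle) (f : X → E) :
    eLpNorm (fun x ↦ z x • f x) p μ = eLpNorm f p μ :=
  eLpNorm_congr_enorm_ae (.of_forall fun x ↦ enorm_circle_smul (z x) (f x))

lemma memLp_circle_smul {z : X → Circle} (hz : AEStronglyMeasurable z μ) {f : X → E}
    (hf : MemLp f p μ) : MemLp (fun x ↦ z x • f x) p μ :=
  ⟨hz.smul hf.1, (eLpNorm_circle_smul z f).trans_lt hf.2⟩

lemma integrable_circle_smul {z : X → Circle} (hz : AEStronglyMeasurable z μ) {f : X → E}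
    (hf : Integrable f μ) : Integrable (fun x ↦ z x • f x) μ :=
  memLp_one_iff_integrable.1 (memLp_circle_smul hz (memLp_one_iff_integrable.2 hf))

end Circle

lemma eLpNorm_comp_smul {V E : Type*} [NormedAddCommGroup V] [NormedSpace ℝ V]
    [FiniteDimensional ℝ V] [MeasurableSpace V] [BorelSpace V] (μ : Measure V)
    [μ.IsAddHaarMeasure] [NormedAddCommGroup E] (f : V → E) (p : ℝ≥0∞) {c : ℝ} (hc : c ≠ 0) :
    eLpNorm (fun x ↦ f (c • x)) p μ =
      ‖c‖ₑ ^ (-(finrank ℝ V : ℝ) * (1 / p).toReal) * eLpNorm f p μ := by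
  have h_emb : MeasurableEmbedding (fun x : V ↦ c • x) :=
    (Homeomorph.smulOfNeZero c hc).measurableEmbedding
  have h_factor : ENNReal.ofReal |(c ^ finrank ℝ V)⁻¹| = ‖c‖ₑ ^ (-(finrank ℝ V : ℝ)) := by
    rw [← Real.enorm_eq_ofReal_abs, enorm_inv (pow_ne_zero _ hc), enorm_pow, ENNReal.rpow_neg,
      ENNReal.rpow_natCast]
  have h_ne_zero : ENNReal.ofReal |(c ^ finrank ℝ V)⁻¹| ≠ 0 := by simp [hc]
  calc eLpNorm (fun x ↦ f (c • x)) p μ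
    _ = eLpNorm f p (μ.map (c • ·)) := (h_emb.eLpNorm_map_measure).symm
    _ = _ := by
      rw [Measure.map_addHaar_smul μ hc, eLpNorm_smul_measure_of_ne_zero h_ne_zero, h_factor,
        ← ENNReal.rpow_mul, smul_eq_mul]

variable {V : Type*} [NormedAddCommGroup V] [InnerProductSpace ℝ V] [FiniteDimensional ℝ V]
  [MeasurableSpace V] [BorelSpace V] {u v : V → ℂ}

lemma integral_fourierChar_norm_sub_sq_smul (l : ℝ) (hu : Integrable u) (hv : Integrable v) :
    ∫ q : V × V, 𝐞 (l * ‖q.1 - q.2‖ ^ 2) • (u q.1 * v q.2) =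
      ∫ x, (𝐞 (l * ‖x‖ ^ 2) • u x) * 𝓕 (fun y ↦ 𝐞 (l * ‖y‖ ^ 2) • v y) ((2 * l) • x) := by
  have h_phase (x y : V) : l * ‖x - y‖ ^ 2 =
      l * ‖x‖ ^ 2 + (-⟪y, (2 * l) • x⟫_ℝ + l * ‖y‖ ^ 2) := by
    rw [norm_sub_sq_real, inner_smul_right, real_inner_comm]
    ring
  have h_int : Integrable (fun q : V × V ↦ 𝐞 (l * ‖q.1 - q.2‖ ^ 2) • (u q.1 * v q.2))
      (volume.prod volume) :=
    integrable_circle_smul (Continuous.aestronglyMeasurable (by fun_prop)) (hu.mul_prod hv)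
  rw [Measure.volume_eq_prod, integral_prod _ h_int]
  refine integral_congr_ae (.of_forall fun x ↦ ?_)
  simp only [Real.fourier_eq, ← integral_const_mul, h_phase, AddChar.map_add_eq_mul, mul_smul,
    smul_mul_assoc, mul_smul_comm, smul_comm (𝐞 (l * ‖x‖ ^ 2))]

lemma enorm_integral_fourierChar_norm_sub_sq_smul_le {l : ℝ} (hl : l ≠ 0) (hu : Integrable u)
    (hv : Integrable v) (hv₂ : MemLp v 2) :
    ‖∫ q : V × V, 𝐞 (l * ‖q.1 - q.2‖ ^ 2) • (u q.1 * v q.2)‖ₑ ≤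
      ‖2 * l‖ₑ ^ (-(finrank ℝ V / 2 : ℝ)) * (eLpNorm u 2 * eLpNorm v 2) := by
  have h_chirp : AEStronglyMeasurable (fun y : V ↦ 𝐞 (l * ‖y‖ ^ 2)) :=
    Continuous.aestronglyMeasurable (by fun_prop)
  obtain ⟨w, hw⟩ : ∃ w : V → ℂ, w = fun y ↦ 𝐞 (l * ‖y‖ ^ 2) • v y := ⟨_, rfl⟩
  have hw₁ : Integrable w := hw ▸ integrable_circle_smul h_chirp hv
  have hw₂ : MemLp w 2 := hw ▸ memLp_circle_smul h_chirp hv₂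
  have h_cont : Continuous fun x ↦ 𝓕 w ((2 * l) • x) :=
    (continuous_fourier_of_integrable hw₁).comp (continuous_const_smul _)
  have h_norm : eLpNorm (fun x ↦ 𝓕 w ((2 * l) • x)) 2 =
      ‖2 * l‖ₑ ^ (-(finrank ℝ V / 2 : ℝ)) * eLpNorm v 2 := by
    rw [eLpNorm_comp_smul volume (𝓕 w) 2 (mul_ne_zero two_ne_zero hl),
      eLpNorm_two_fourier hw₁ hw₂, hw, eLpNorm_circle_smul]
    simp [div_eq_mul_inv]
  rw [integral_fourierChar_norm_sub_sq_smul l hu hv, ← hw, mul_left_comm, ← h_norm]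
  refine (enorm_integral_le_lintegral_enorm _).trans ?_
  simp only [enorm_mul, enorm_circle_smul]
  exact lintegral_enorm_mul_enorm_le_eLpNorm_two hu.1 h_cont.aestronglyMeasurable

end QuadraticPhase

section BoundedCompactSupport

/-- Bounded strongly measurable functions with compact support: a class on which all the integrals
below converge absolutely, and which is large enough to contain the indicators of bounded sets. -/
structure BoundedCompactSupport {X E : Type*} [TopologicalSpace X] [MeasurableSpace X]
    [NormedAddCommGroup E] (f : X → E) : Prop where
  stronglyMeasurable : StronglyMeasurable f
  hasCompactSupport : HasCompactSupport f
  exists_norm_le : ∃ C, ∀ x, ‖f x‖ ≤ C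

namespace BoundedCompactSupport

variable {X Y E : Type*} [TopologicalSpace X] [MeasurableSpace X] [NormedAddCommGroup E]

lemma memLp {f : X → E} (hf : BoundedCompactSupport f) (μ : Measure X)
    [IsFiniteMeasureOnCompacts μ] (p : ℝ≥0∞) : MemLp f p μ :=
  let ⟨C, hC⟩ := hf.exists_norm_le
  hf.hasCompactSupport.memLp_of_bound hf.stronglyMeasurable.aestronglyMeasurable C (.of_forall hC)

lemma integrable {f : X → E} (hf : BoundedCompactSupport f) (μ : Measure X)
    [IsFiniteMeasureOnCompacts μ] : Integrable f μ :=
  memLp_one_iff_integrable.1 (hf.memLp μ 1)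

lemma indicator_const [R1Space X] {s K : Set X} (hs : MeasurableSet s)
    (hK : IsCompact K) (hsK : s ⊆ K) (c : E) :
    BoundedCompactSupport (s.indicator fun _ ↦ c) where
  stronglyMeasurable := stronglyMeasurable_const.indicator hs
  hasCompactSupport := .intro hK fun _ hx ↦ Set.indicator_of_notMem (fun h ↦ hx (hsK h)) _
  exists_norm_le := ⟨‖c‖, fun x ↦ norm_indicator_le_norm_self _ x⟩

variable [TopologicalSpace Y] [MeasurableSpace Y] {f : X × Y → E}

lemma slice_right [R1Space Y] (hf : BoundedCompactSupport f) (x : X) :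
    BoundedCompactSupport fun y ↦ f (x, y) where
  stronglyMeasurable := hf.stronglyMeasurable.comp_measurable measurable_prodMk_left
  hasCompactSupport := .intro (hf.hasCompactSupport.isCompact.image continuous_snd) fun y hy ↦
    image_eq_zero_of_notMem_tsupport fun h ↦ hy ⟨(x, y), h, rfl⟩
  exists_norm_le := hf.exists_norm_le.imp fun _ hC y ↦ hC (x, y)

lemma exists_eLpNorm_slice_right_le_indicator [T2Space Y] [OpensMeasurableSpace Y]
    (hf : BoundedCompactSupport f) (ν : Measure Y) [IsFiniteMeasureOnCompacts ν] (p : ℝ≥0∞) :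
    ∃ K : Set X, IsCompact K ∧ ∃ M < ∞,
      ∀ x, eLpNorm (fun y ↦ f (x, y)) p ν ≤ K.indicator (fun _ ↦ M) x := by
  obtain ⟨C, hC⟩ := hf.exists_norm_le
  obtain ⟨L, hL, hfL⟩ : ∃ L, IsCompact L ∧ ∀ x, ∀ y ∉ L, f (x, y) = 0 :=
    ⟨_, hf.hasCompactSupport.isCompact.image continuous_snd, fun x y hy ↦
      image_eq_zero_of_notMem_tsupport fun h ↦ hy ⟨(x, y), h, rfl⟩⟩
  have h_memLp : MemLp (L.indicator fun _ ↦ C) p ν :=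
    memLp_indicator_const p hL.measurableSet C (.inr hL.measure_lt_top.ne)
  refine ⟨_, hf.hasCompactSupport.isCompact.image continuous_fst, _, h_memLp.2, fun x ↦ ?_⟩
  by_cases hx : x ∈ Prod.fst '' tsupport f
  · rw [Set.indicator_of_mem hx]
    refine eLpNorm_mono_real fun y ↦ ?_
    by_cases hy : y ∈ L
    · rw [Set.indicator_of_mem hy]
      exact hC _
    · rw [Set.indicator_of_notMem hy, hfL x y hy, norm_zero]
  · have h_zero (y : Y) : f (x, y) = 0 :=
      image_eq_zero_of_notMem_tsupport fun h ↦ hx ⟨(x, y), h, rfl⟩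
    simp [h_zero]

lemma lintegral_eLpNorm_slice_right_lt_top [T2Space X] [OpensMeasurableSpace X] [T2Space Y]
    [OpensMeasurableSpace Y] (hf : BoundedCompactSupport f) (μ : Measure X)
    [IsFiniteMeasureOnCompacts μ] (ν : Measure Y) [IsFiniteMeasureOnCompacts ν] (p : ℝ≥0∞) :
    ∫⁻ x, eLpNorm (fun y ↦ f (x, y)) p ν ∂μ < ∞ := by
  obtain ⟨K, hK, M, hM, hfM⟩ := hf.exists_eLpNorm_slice_right_le_indicator ν p
  calc ∫⁻ x, eLpNorm (fun y ↦ f (x, y)) p ν ∂μ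
    _ ≤ ∫⁻ x, K.indicator (fun _ ↦ M) x ∂μ := lintegral_mono hfM
    _ = M * μ K := lintegral_indicator_const hK.measurableSet M
    _ < ∞ := mul_lt_top hM hK.measure_lt_top

end BoundedCompactSupport

end BoundedCompactSupport

section PartialFourier

open scoped FourierTransform

variable {X : Type*} {f : X × ℝ → ℂ}

/-- The Fourier transform of a function on `X × ℝ` in the real variable. -/
def partialFourier (f : X × ℝ → ℂ) (p : X × ℝ) : ℂ :=
  𝓕 (fun s ↦ f (p.1, s)) p.2

lemma enorm_partialFourier_le (f : X × ℝ → ℂ) (p : X × ℝ) :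
    ‖partialFourier f p‖ₑ ≤ eLpNorm (fun s ↦ f (p.1, s)) 1 := by
  rw [partialFourier, Real.fourier_eq, eLpNorm_one_eq_lintegral_enorm]
  refine (enorm_integral_le_lintegral_enorm _).trans_eq ?_
  simp only [enorm_circle_smul]

variable [MeasurableSpace X]

lemma stronglyMeasurable_partialFourier (hf : StronglyMeasurable f) :
    StronglyMeasurable (partialFourier f) := by
  unfold partialFourier
  simp only [Real.fourier_eq]
  refine StronglyMeasurable.integral_prod_right' (f := fun q : (X × ℝ) × ℝ ↦
    𝐞 (-inner ℝ q.2 q.1.2) • f (q.1.1, q.2)) ?_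
  have h_phase : StronglyMeasurable fun q : (X × ℝ) × ℝ ↦ 𝐞 (-inner ℝ q.2 q.1.2) :=
    Real.continuous_fourierChar.comp_stronglyMeasurable
      (Measurable.stronglyMeasurable (by fun_prop))
  exact h_phase.smul (hf.comp_measurable (by fun_prop))

lemma eLpNorm_one_partialFourier_slice_le {μ : Measure X}
    (hf : AEStronglyMeasurable f (μ.prod volume)) (l : ℝ) :
    eLpNorm (fun x ↦ partialFourier f (x, l)) 1 μ ≤ eLpNorm f 1 (μ.prod volume) := by
  have h_fubini := lintegral_eLpNorm_rpow_right one_ne_zero one_ne_top hf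
  simp only [toReal_one, ENNReal.rpow_one] at h_fubini
  rw [eLpNorm_one_eq_lintegral_enorm, ← h_fubini]
  exact lintegral_mono fun x ↦ enorm_partialFourier_le f (x, l)

namespace BoundedCompactSupport

variable [TopologicalSpace X]

lemma partialFourier_slice [R1Space X] (hf : BoundedCompactSupport f) (l : ℝ) :
    BoundedCompactSupport fun x ↦ partialFourier f (x, l) := by
  obtain ⟨K, hK, M, hM, hfM⟩ := hf.exists_eLpNorm_slice_right_le_indicator volume 1
  have h_le (x : X) : ‖partialFourier f (x, l)‖ₑ ≤ K.indicator (fun _ ↦ M) x :=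
    (enorm_partialFourier_le f (x, l)).trans (hfM x)
  refine ⟨(stronglyMeasurable_partialFourier hf.stronglyMeasurable).comp_measurable
    measurable_prodMk_right, .intro hK fun x hx ↦ ?_, M.toReal, fun x ↦ ?_⟩
  · simpa [Set.indicator_of_notMem hx] using h_le x
  · rw [← toReal_enorm]
    exact toReal_mono hM.ne ((h_le x).trans (Set.indicator_le_self _ _ x))

lemma eLpNorm_two_partialFourier_slice_right (hf : BoundedCompactSupport f) (x : X) :
    eLpNorm (fun l ↦ partialFourier f (x, l)) 2 = eLpNorm (fun s ↦ f (x, s)) 2 := by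
  have h := hf.slice_right x
  rw [← eLpNorm_two_fourier (h.integrable _) (h.memLp _ _)]
  rfl

lemma eLpNorm_two_partialFourier (hf : BoundedCompactSupport f) (μ : Measure X) :
    eLpNorm (partialFourier f) 2 (μ.prod volume) = eLpNorm f 2 (μ.prod volume) := by
  have h_fubini {g : X × ℝ → ℂ} (hg : StronglyMeasurable g) :=
    lintegral_eLpNorm_rpow_right (μ := μ) (ν := (volume : Measure ℝ)) two_ne_zero ofNat_ne_top
      hg.aestronglyMeasurable
  have h := h_fubini (stronglyMeasurable_partialFourier hf.stronglyMeasurable)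
  simp only [hf.eLpNorm_two_partialFourier_slice_right, h_fubini hf.stronglyMeasurable] at h
  exact ENNReal.rpow_left_injective (by simp) h.symm

end BoundedCompactSupport

end PartialFourier

section ParaboloidForm

open Module
open scoped FourierTransform ComplexConjugate

lemma lintegral_enorm_mul_enorm_comp_sub_le {X E F : Type*} [MeasureSpace X]
    [SFinite (volume : Measure X)] [NormedAddCommGroup E] [NormedAddCommGroup F] {f : X × ℝ → E}
    {g : X × ℝ → F} (hf : StronglyMeasurable f) (hg : StronglyMeasurable g) {τ : X × X → ℝ}
    (hτ : Measurable τ) :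
    ∫⁻ p : (X × X) × ℝ, ‖f (p.1.1, p.2)‖ₑ * ‖g (p.1.2, p.2 - τ p.1)‖ₑ ≤
      (∫⁻ x, eLpNorm (fun s ↦ f (x, s)) 2) * ∫⁻ x, eLpNorm (fun s ↦ g (x, s)) 2 := by
  have hfx (x : X) : StronglyMeasurable fun s ↦ f (x, s) := hf.comp_measurable (by fun_prop)
  have hgx (x : X) : StronglyMeasurable fun s ↦ g (x, s) := hg.comp_measurable (by fun_prop)
  have h_norm (x : X) (a : ℝ) :
      eLpNorm (fun s ↦ g (x, s - a)) 2 = eLpNorm (fun s ↦ g (x, s)) 2 :=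
    eLpNorm_comp_measurePreserving (hgx x).aestronglyMeasurable (measurePreserving_sub_right _ a)
  have h_meas : Measurable fun p : (X × X) × ℝ ↦
      ‖f (p.1.1, p.2)‖ₑ * ‖g (p.1.2, p.2 - τ p.1)‖ₑ :=
    (hf.enorm.comp (by fun_prop)).mul (hg.enorm.comp (by fun_prop))
  calc ∫⁻ p : (X × X) × ℝ, ‖f (p.1.1, p.2)‖ₑ * ‖g (p.1.2, p.2 - τ p.1)‖ₑ
    _ = ∫⁻ q : X × X, ∫⁻ s, ‖f (q.1, s)‖ₑ * ‖g (q.2, s - τ q)‖ₑ :=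
        lintegral_prod _ h_meas.aemeasurable
    _ ≤ ∫⁻ q : X × X, eLpNorm (fun s ↦ f (q.1, s)) 2 volume *
          eLpNorm (fun s ↦ g (q.2, s)) 2 volume := by
        refine lintegral_mono fun q ↦ ?_
        rw [← h_norm q.2 (τ q)]
        exact lintegral_enorm_mul_enorm_le_eLpNorm_two (hfx q.1).aestronglyMeasurable
          ((hgx q.2).comp_measurable (measurable_sub_const _)).aestronglyMeasurable
    _ = _ := lintegral_prod_mul
        (measurable_eLpNorm_left two_ne_zero ofNat_ne_top
          (hf.comp_measurable measurable_swap)).aemeasurable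
        (measurable_eLpNorm_left two_ne_zero ofNat_ne_top
          (hg.comp_measurable measurable_swap)).aemeasurable

lemma integrable_mul_conj_comp_sub {X : Type*} [MeasureSpace X] [SFinite (volume : Measure X)]
    {f g : X × ℝ → ℂ} (hf : StronglyMeasurable f) (hg : StronglyMeasurable g)
    (hf₂ : ∫⁻ x, eLpNorm (fun s ↦ f (x, s)) 2 < ∞) (hg₂ : ∫⁻ x, eLpNorm (fun s ↦ g (x, s)) 2 < ∞)
    {τ : X × X → ℝ} (hτ : Measurable τ) :
    Integrable fun p : (X × X) × ℝ ↦ f (p.1.1, p.2) * conj (g (p.1.2, p.2 - τ p.1)) := by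
  refine ⟨StronglyMeasurable.aestronglyMeasurable ?_, ?_⟩
  · exact (hf.comp_measurable (by fun_prop)).mul
      (Complex.continuous_conj.comp_stronglyMeasurable (hg.comp_measurable (by fun_prop)))
  · simp only [HasFiniteIntegral, enorm_mul, RCLike.enorm_conj]
    exact (lintegral_enorm_mul_enorm_comp_sub_le hf hg hτ).trans_lt (mul_lt_top hf₂ hg₂)

variable {V : Type*} [NormedAddCommGroup V] [InnerProductSpace ℝ V] [FiniteDimensional ℝ V]
  [MeasurableSpace V] [BorelSpace V] {f g : V × ℝ → ℂ}

/-- The sesquilinear form of the Radon-like transform: the integral of `f ⊗ conj g` over the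
pairs of points whose difference lies on the paraboloid `{(t, ‖t‖ ^ 2)}`. -/
def paraboloidForm (f g : V × ℝ → ℂ) : ℂ :=
  ∫ p : (V × V) × ℝ, f (p.1.1, p.2) * conj (g (p.1.2, p.2 - ‖p.1.1 - p.1.2‖ ^ 2))

lemma integrable_paraboloidForm (hf : BoundedCompactSupport f) (hg : BoundedCompactSupport g) :
    Integrable fun p : (V × V) × ℝ ↦
      f (p.1.1, p.2) * conj (g (p.1.2, p.2 - ‖p.1.1 - p.1.2‖ ^ 2)) :=
  integrable_mul_conj_comp_sub hf.stronglyMeasurable hg.stronglyMeasurable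
    (hf.lintegral_eLpNorm_slice_right_lt_top _ _ _) (hg.lintegral_eLpNorm_slice_right_lt_top _ _ _)
    (τ := fun q ↦ ‖q.1 - q.2‖ ^ 2) (by fun_prop)

/-- The contribution of the frequency `l` to `paraboloidForm f g`. -/
def paraboloidFormFreq (f g : V × ℝ → ℂ) (l : ℝ) : ℂ :=
  ∫ q : V × V, 𝐞 (l * ‖q.1 - q.2‖ ^ 2) •
    (partialFourier f (q.1, l) * conj (partialFourier g (q.2, l)))

lemma integrable_paraboloidFormFreq (hf : BoundedCompactSupport f) (hg : BoundedCompactSupport g) :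
    Integrable fun p : (V × V) × ℝ ↦ 𝐞 (p.2 * ‖p.1.1 - p.1.2‖ ^ 2) •
      (partialFourier f (p.1.1, p.2) * conj (partialFourier g (p.1.2, p.2))) := by
  have h_mixed {f : V × ℝ → ℂ} (hf : BoundedCompactSupport f) :
      ∫⁻ x, eLpNorm (fun l ↦ partialFourier f (x, l)) 2 < ∞ := by
    simpa only [hf.eLpNorm_two_partialFourier_slice_right]
      using hf.lintegral_eLpNorm_slice_right_lt_top volume volume 2
  have h := integrable_mul_conj_comp_sub (stronglyMeasurable_partialFourier hf.stronglyMeasurable)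
    (stronglyMeasurable_partialFourier hg.stronglyMeasurable) (h_mixed hf) (h_mixed hg)
    (τ := fun _ ↦ 0) measurable_const
  simp only [sub_zero] at h
  exact integrable_circle_smul (Continuous.aestronglyMeasurable (by fun_prop)) h

lemma paraboloidForm_eq_integral_freq (hf : BoundedCompactSupport f)
    (hg : BoundedCompactSupport g) : paraboloidForm f g = ∫ l, paraboloidFormFreq f g l := by
  have h_parseval (q : V × V) :
      ∫ s, f (q.1, s) * conj (g (q.2, s - ‖q.1 - q.2‖ ^ 2)) =
        ∫ l, 𝐞 (l * ‖q.1 - q.2‖ ^ 2) •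
          (partialFourier f (q.1, l) * conj (partialFourier g (q.2, l))) := by
    have hfq := hf.slice_right q.1
    have hgq := hg.slice_right q.2
    have h := integral_inner_comp_sub_eq_integral_fourier (hfq.integrable _) (hfq.memLp _ _)
      (hgq.integrable _) (hgq.memLp _ _) (‖q.1 - q.2‖ ^ 2)
    simp only [RCLike.inner_apply, conj_trivial] at h
    exact h
  calc paraboloidForm f g
    _ = ∫ q : V × V, ∫ s, f (q.1, s) * conj (g (q.2, s - ‖q.1 - q.2‖ ^ 2)) :=
        integral_prod _ (integrable_paraboloidForm hf hg)
    _ = ∫ q : V × V, ∫ l, 𝐞 (l * ‖q.1 - q.2‖ ^ 2) •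
          (partialFourier f (q.1, l) * conj (partialFourier g (q.2, l))) := by
        simp only [h_parseval]
    _ = ∫ l, paraboloidFormFreq f g l :=
        integral_integral_swap (integrable_paraboloidFormFreq hf hg)

lemma enorm_paraboloidFormFreq_le_eLpNorm_one (hf : StronglyMeasurable f)
    (hg : StronglyMeasurable g) (l : ℝ) :
    ‖paraboloidFormFreq f g l‖ₑ ≤ eLpNorm f 1 * eLpNorm g 1 := by
  have h_meas {f : V × ℝ → ℂ} (hf : StronglyMeasurable f) :
      Measurable fun x ↦ ‖partialFourier f (x, l)‖ₑ :=
    (stronglyMeasurable_partialFourier hf).enorm.comp measurable_prodMk_right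
  calc ‖paraboloidFormFreq f g l‖ₑ
    _ ≤ ∫⁻ q : V × V, ‖partialFourier f (q.1, l)‖ₑ * ‖partialFourier g (q.2, l)‖ₑ := by
        refine (enorm_integral_le_lintegral_enorm _).trans_eq ?_
        simp only [enorm_circle_smul, enorm_mul, RCLike.enorm_conj]
    _ = eLpNorm (fun x ↦ partialFourier f (x, l)) 1 volume *
          eLpNorm (fun x ↦ partialFourier g (x, l)) 1 volume := by
        simp only [eLpNorm_one_eq_lintegral_enorm]
        exact lintegral_prod_mul (h_meas hf).aemeasurable (h_meas hg).aemeasurable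
    _ ≤ eLpNorm f 1 volume * eLpNorm g 1 volume :=
        mul_le_mul' (eLpNorm_one_partialFourier_slice_le hf.aestronglyMeasurable l)
          (eLpNorm_one_partialFourier_slice_le hg.aestronglyMeasurable l)

lemma enorm_paraboloidFormFreq_le_eLpNorm_two (hf : BoundedCompactSupport f)
    (hg : BoundedCompactSupport g) {l : ℝ} (hl : l ≠ 0) :
    ‖paraboloidFormFreq f g l‖ₑ ≤ ‖2 * l‖ₑ ^ (-(finrank ℝ V / 2 : ℝ)) *
      (eLpNorm (fun x ↦ partialFourier f (x, l)) 2 *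
        eLpNorm (fun x ↦ partialFourier g (x, l)) 2) := by
  have hfl := hf.partialFourier_slice l
  have hgl := (hg.partialFourier_slice l).memLp volume
  have h := enorm_integral_fourierChar_norm_sub_sq_smul_le hl (hfl.integrable _)
    (memLp_one_iff_integrable.1 (hgl 1).star) (hgl 2).star
  rwa [eLpNorm_star] at h

lemma enorm_paraboloidFormFreq_le (hf : BoundedCompactSupport f) (hg : BoundedCompactSupport g)
    {ρ : ℝ} (hρ : 0 < ρ) (l : ℝ) :
    ‖paraboloidFormFreq f g l‖ₑ ≤
      (Metric.closedBall 0 (ρ / 2)).indicator (fun _ ↦ eLpNorm f 1 * eLpNorm g 1) l +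
        ENNReal.ofReal ρ ^ (-(finrank ℝ V / 2 : ℝ)) *
          (eLpNorm (fun x ↦ partialFourier f (x, l)) 2 *
            eLpNorm (fun x ↦ partialFourier g (x, l)) 2) := by
  by_cases hl : l ∈ Metric.closedBall 0 (ρ / 2)
  · rw [Set.indicator_of_mem hl]
    exact le_add_right (enorm_paraboloidFormFreq_le_eLpNorm_one hf.stronglyMeasurable
      hg.stronglyMeasurable l)
  · rw [Set.indicator_of_notMem hl, zero_add]
    rw [mem_closedBall_zero_iff, Real.norm_eq_abs, not_le] at hl
    have hl₀ : l ≠ 0 := abs_pos.1 ((half_pos hρ).trans hl)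
    have h_le : ENNReal.ofReal ρ ≤ ‖2 * l‖ₑ := by
      rw [Real.enorm_eq_ofReal_abs, abs_mul, abs_two]
      exact ENNReal.ofReal_le_ofReal (by linarith)
    refine (enorm_paraboloidFormFreq_le_eLpNorm_two hf hg hl₀).trans (mul_le_mul_left ?_ _)
    rw [ENNReal.rpow_neg, ENNReal.rpow_neg]
    exact ENNReal.inv_le_inv' (ENNReal.rpow_le_rpow h_le (by positivity))

lemma enorm_paraboloidForm_le (hf : BoundedCompactSupport f) (hg : BoundedCompactSupport g)
    {ρ : ℝ} (hρ : 0 < ρ) :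
    ‖paraboloidForm f g‖ₑ ≤ ENNReal.ofReal ρ * (eLpNorm f 1 * eLpNorm g 1) +
      ENNReal.ofReal ρ ^ (-(finrank ℝ V / 2 : ℝ)) * (eLpNorm f 2 * eLpNorm g 2) := by
  have h_ne_top : ENNReal.ofReal ρ ^ (-(finrank ℝ V / 2 : ℝ)) ≠ ∞ :=
    ENNReal.rpow_ne_top_of_ne_zero (ENNReal.ofReal_pos.2 hρ).ne' ofReal_ne_top
  have h_ball : volume (Metric.closedBall (0 : ℝ) (ρ / 2)) = ENNReal.ofReal ρ := by
    rw [Real.volume_closedBall, mul_div_cancel₀ ρ two_ne_zero]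
  have h_high : ∫⁻ l, eLpNorm (fun x ↦ partialFourier f (x, l)) 2 volume *
      eLpNorm (fun x ↦ partialFourier g (x, l)) 2 volume ≤ eLpNorm f 2 * eLpNorm g 2 := by
    refine (lintegral_eLpNorm_two_mul_eLpNorm_two_le
      (stronglyMeasurable_partialFourier hf.stronglyMeasurable)
      (stronglyMeasurable_partialFourier hg.stronglyMeasurable)).trans_eq ?_
    rw [hf.eLpNorm_two_partialFourier, hg.eLpNorm_two_partialFourier]
    rfl
  rw [paraboloidForm_eq_integral_freq hf hg]
  refine (enorm_integral_le_lintegral_enorm _).trans <|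
    (lintegral_mono (enorm_paraboloidFormFreq_le hf hg hρ)).trans ?_
  rw [lintegral_add_left (measurable_const.indicator measurableSet_closedBall),
    lintegral_indicator_const measurableSet_closedBall, lintegral_const_mul' _ _ h_ne_top, h_ball,
    mul_comm (ENNReal.ofReal ρ)]
  exact add_le_add_right (mul_le_mul_right h_high _) _

end ParaboloidForm

section Incidence

open Module
open scoped ComplexConjugate

variable {V : Type*} [NormedAddCommGroup V] {E F : Set (V × ℝ)}

/-- The pairs `(x, s) ∈ E` and `(y, s - ‖x - y‖ ^ 2) ∈ F` of incident points, recorded as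
`((x, y), s)`. -/
def incidenceSet (E F : Set (V × ℝ)) : Set ((V × V) × ℝ) :=
  {p | (p.1.1, p.2) ∈ E ∧ (p.1.2, p.2 - ‖p.1.1 - p.1.2‖ ^ 2) ∈ F}

lemma incidenceSet_mono {E' F' : Set (V × ℝ)} (hE : E ⊆ E') (hF : F ⊆ F') :
    incidenceSet E F ⊆ incidenceSet E' F' :=
  fun _ hp ↦ ⟨hE hp.1, hF hp.2⟩

lemma incidenceSet_iUnion {E F : ℕ → Set (V × ℝ)} (hE : Monotone E) (hF : Monotone F) :
    incidenceSet (⋃ k, E k) (⋃ k, F k) = ⋃ k, incidenceSet (E k) (F k) := by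
  refine Set.Subset.antisymm (fun p ⟨hpE, hpF⟩ ↦ ?_) (Set.iUnion_subset fun k ↦
    incidenceSet_mono (Set.subset_iUnion E k) (Set.subset_iUnion F k))
  obtain ⟨i, hi⟩ := Set.mem_iUnion.1 hpE
  obtain ⟨j, hj⟩ := Set.mem_iUnion.1 hpF
  exact Set.mem_iUnion.2 ⟨max i j, hE (le_max_left i j) hi, hF (le_max_right i j) hj⟩

variable [InnerProductSpace ℝ V] [FiniteDimensional ℝ V] [MeasurableSpace V] [BorelSpace V]

lemma measurableSet_incidenceSet (hE : MeasurableSet E) (hF : MeasurableSet F) :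
    MeasurableSet (incidenceSet E F) :=
  .inter (hE.preimage (by fun_prop)) (hF.preimage (by fun_prop))

lemma lintegral_lintegral_indicator_eq_volume_incidenceSet (hE : MeasurableSet E)
    (hF : MeasurableSet F) :
    ∫⁻ x in E, ∫⁻ t : V, F.indicator 1 (x.1 - t, x.2 - ‖t‖ ^ 2) = volume (incidenceSet E F) := by
  have h_meas : Measurable ((incidenceSet E F).indicator (1 : (V × V) × ℝ → ℝ≥0∞)) :=
    measurable_one.indicator (measurableSet_incidenceSet hE hF)
  have h_slice (x : V × ℝ) :
      E.indicator (fun x ↦ ∫⁻ t : V, F.indicator 1 (x.1 - t, x.2 - ‖t‖ ^ 2)) x =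
        ∫⁻ y, (incidenceSet E F).indicator (1 : (V × V) × ℝ → ℝ≥0∞) ((x.1, y), x.2) := by
    classical
    rw [← lintegral_sub_left_eq_self (fun y ↦ (incidenceSet E F).indicator 1 ((x.1, y), x.2)) x.1]
    by_cases hx : x ∈ E <;> simp [hx, incidenceSet, Set.indicator_apply]
  calc ∫⁻ x in E, ∫⁻ t : V, F.indicator 1 (x.1 - t, x.2 - ‖t‖ ^ 2)
    _ = ∫⁻ x : V × ℝ, ∫⁻ y, (incidenceSet E F).indicator 1 ((x.1, y), x.2) := by
        rw [← lintegral_indicator hE, lintegral_congr h_slice]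
    _ = ∫⁻ x : V, ∫⁻ s : ℝ, ∫⁻ y, (incidenceSet E F).indicator 1 ((x, y), s) :=
        lintegral_prod _ (Measurable.lintegral_prod_right
          (f := fun (p : V × ℝ) y ↦ (incidenceSet E F).indicator 1 ((p.1, y), p.2))
          (h_meas.comp (by fun_prop))).aemeasurable
    _ = ∫⁻ x : V, ∫⁻ y, ∫⁻ s : ℝ, (incidenceSet E F).indicator 1 ((x, y), s) :=
        lintegral_congr fun x ↦ lintegral_lintegral_swap
          (f := fun s y ↦ (incidenceSet E F).indicator 1 ((x, y), s))
          (h_meas.comp (by fun_prop)).aemeasurable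
    _ = ∫⁻ q : V × V, ∫⁻ s : ℝ, (incidenceSet E F).indicator 1 (q, s) :=
        (lintegral_prod _ h_meas.lintegral_prod_right'.aemeasurable).symm
    _ = ∫⁻ p : (V × V) × ℝ, (incidenceSet E F).indicator 1 p :=
        (lintegral_prod _ h_meas.aemeasurable).symm
    _ = volume (incidenceSet E F) := lintegral_indicator_one (measurableSet_incidenceSet hE hF)

lemma enorm_paraboloidForm_indicator (hE : MeasurableSet E) (hF : MeasurableSet F)
    (hE_bdd : Bornology.IsBounded E) (hF_bdd : Bornology.IsBounded F) :
    ‖paraboloidForm (E.indicator fun _ ↦ 1) (F.indicator fun _ ↦ 1)‖ₑ =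
      volume (incidenceSet E F) := by
  classical
  have hS := measurableSet_incidenceSet hE hF
  have h_indicator : (fun p : (V × V) × ℝ ↦ E.indicator (fun _ ↦ (1 : ℂ)) (p.1.1, p.2) *
      conj (F.indicator (fun _ ↦ (1 : ℂ)) (p.1.2, p.2 - ‖p.1.1 - p.1.2‖ ^ 2))) =
        (incidenceSet E F).indicator fun _ ↦ 1 := by
    ext p
    by_cases hp : (p.1.1, p.2) ∈ E <;> simp [hp, incidenceSet, Set.indicator_apply, apply_ite conj]
  have h_lt_top : volume (incidenceSet E F) < ∞ := by
    have h_int := integrable_paraboloidForm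
      (.indicator_const hE hE_bdd.isCompact_closure subset_closure (1 : ℂ))
      (.indicator_const hF hF_bdd.isCompact_closure subset_closure (1 : ℂ))
    rw [h_indicator, integrable_indicator_iff hS, integrableOn_const_iff] at h_int
    simpa using h_int
  rw [paraboloidForm, h_indicator, integral_indicator_const _ hS]
  simp [Measure.real, ← ofReal_norm, h_lt_top.ne]

lemma volume_incidenceSet_le_of_isBounded (hE : MeasurableSet E) (hF : MeasurableSet F)
    (hE_bdd : Bornology.IsBounded E) (hF_bdd : Bornology.IsBounded F) {ρ : ℝ} (hρ : 0 < ρ) :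
    volume (incidenceSet E F) ≤ ENNReal.ofReal ρ * (volume E * volume F) +
      ENNReal.ofReal ρ ^ (-(finrank ℝ V / 2 : ℝ)) * (volume E * volume F) ^ (1 / 2 : ℝ) := by
  have h := enorm_paraboloidForm_le
    (.indicator_const hE hE_bdd.isCompact_closure subset_closure (1 : ℂ))
    (.indicator_const hF hF_bdd.isCompact_closure subset_closure (1 : ℂ)) hρ
  rw [enorm_paraboloidForm_indicator hE hF hE_bdd hF_bdd] at h
  simp only [eLpNorm_indicator_const hE one_ne_zero one_ne_top,
    eLpNorm_indicator_const hF one_ne_zero one_ne_top,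
    eLpNorm_indicator_const hE two_ne_zero ofNat_ne_top,
    eLpNorm_indicator_const hF two_ne_zero ofNat_ne_top, enorm_one, one_mul, toReal_one,
    toReal_ofNat, div_one, ENNReal.rpow_one] at h
  rwa [ENNReal.mul_rpow_of_nonneg _ _ (by norm_num)]

lemma volume_incidenceSet_le (hE : MeasurableSet E) (hF : MeasurableSet F) {ρ : ℝ} (hρ : 0 < ρ) :
    volume (incidenceSet E F) ≤ ENNReal.ofReal ρ * (volume E * volume F) +
      ENNReal.ofReal ρ ^ (-(finrank ℝ V / 2 : ℝ)) * (volume E * volume F) ^ (1 / 2 : ℝ) := by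
  have h_mono (S : Set (V × ℝ)) : Monotone fun k : ℕ ↦ S ∩ Metric.closedBall 0 k := fun i j hij ↦
    Set.inter_subset_inter_right S (Metric.closedBall_subset_closedBall (Nat.cast_le.2 hij))
  have h_iUnion (S : Set (V × ℝ)) : ⋃ k : ℕ, S ∩ Metric.closedBall 0 k = S := by
    rw [← Set.inter_iUnion, Metric.iUnion_closedBall_nat, Set.inter_univ]
  have h_bdd (S : Set (V × ℝ)) (k : ℕ) : Bornology.IsBounded (S ∩ Metric.closedBall 0 k) :=
    Metric.isBounded_closedBall.subset Set.inter_subset_right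
  rw [← h_iUnion E, ← h_iUnion F, incidenceSet_iUnion (h_mono E) (h_mono F),
    Monotone.measure_iUnion fun i j hij ↦ incidenceSet_mono (h_mono E hij) (h_mono F hij),
    h_iUnion, h_iUnion]
  refine iSup_le fun k ↦ (volume_incidenceSet_le_of_isBounded
    (hE.inter measurableSet_closedBall) (hF.inter measurableSet_closedBall) (h_bdd E k)
    (h_bdd F k) hρ).trans ?_
  gcongr <;> exact Set.inter_subset_left

end Incidence

lemma le_two_mul_rpow_of_forall_le {X P : ℝ≥0∞} {α : ℝ} (hα : 0 ≤ α)
    (h : ∀ ρ : ℝ, 0 < ρ → X ≤ ENNReal.ofReal ρ * P + ENNReal.ofReal ρ ^ (-α) * P ^ (1 / 2 : ℝ)) :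
    X ≤ 2 * P ^ ((2 * α + 1) / (2 * (α + 1))) := by
  have h_exp : 0 < (2 * α + 1) / (2 * (α + 1)) := by positivity
  rcases eq_or_ne P 0 with rfl | hP
  · simpa [ENNReal.zero_rpow_of_pos h_exp] using h 1 one_pos
  rcases eq_or_ne P ∞ with rfl | hP_top
  · simp [ENNReal.top_rpow_of_pos h_exp]
  have hα₁ : α + 1 ≠ 0 := by positivity
  have hρ_top : P ^ (-(1 / (2 * (α + 1)))) ≠ ∞ := ENNReal.rpow_ne_top_of_ne_zero hP hP_top
  have hρ_pos : 0 < (P ^ (-(1 / (2 * (α + 1))))).toReal :=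
    toReal_pos (ENNReal.rpow_pos (pos_iff_ne_zero.2 hP) hP_top).ne' hρ_top
  have h_low : P ^ (-(1 / (2 * (α + 1)))) * P = P ^ ((2 * α + 1) / (2 * (α + 1))) := by
    nth_rewrite 2 [← ENNReal.rpow_one P]
    rw [← ENNReal.rpow_add _ _ hP hP_top]
    congr 1
    field_simp
    ring
  have h_high : (P ^ (-(1 / (2 * (α + 1))))) ^ (-α) * P ^ (1 / 2 : ℝ) =
      P ^ ((2 * α + 1) / (2 * (α + 1))) := by
    rw [← ENNReal.rpow_mul, ← ENNReal.rpow_add _ _ hP hP_top]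
    congr 1
    field_simp
    ring
  have h_optimal := h _ hρ_pos
  rwa [ofReal_toReal hρ_top, h_low, h_high, ← two_mul] at h_optimal

theorem stmt0_general {V : Type*} [NormedAddCommGroup V] [InnerProductSpace ℝ V]
    [FiniteDimensional ℝ V] [MeasurableSpace V] [BorelSpace V] {d : ℕ}
    (hd : Module.finrank ℝ V + 1 = d) {E Es : Set (V × ℝ)} (hE : MeasurableSet E)
    (hEs : MeasurableSet Es) :
    ∫⁻ x in E, ∫⁻ t : V, Es.indicator 1 (x.1 - t, x.2 - ‖t‖ ^ 2) ≤
      2 * volume E ^ ((d : ℝ) / (d + 1)) * volume Es ^ ((d : ℝ) / (d + 1)) := by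
  have h_exp : (2 * (Module.finrank ℝ V / 2 : ℝ) + 1) / (2 * (Module.finrank ℝ V / 2 + 1)) =
      (d : ℝ) / (d + 1) := by
    rw [← hd]
    push_cast
    congr 1 <;> ring
  rw [lintegral_lintegral_indicator_eq_volume_incidenceSet hE hEs, mul_assoc,
    ← ENNReal.mul_rpow_of_nonneg _ _ (by positivity), ← h_exp]
  exact le_two_mul_rpow_of_forall_le (by positivity) fun ρ hρ ↦ volume_incidenceSet_le hE hEs hρ

/-- the endpoint restricted weak type inequality
`𝒯(E,E*) ≤ C |E|^{d/(d+1)} |E*|^{d/(d+1)}`. -/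
theorem stmt0 (d : ℕ) (hd : 2 ≤ d) :
    ∃ C : ℝ, 0 < C ∧
      ∀ (E Es : Set (Pt (d - 1))), MeasurableSet E → MeasurableSet Es →
        volume E < ⊤ → volume Es < ⊤ →
        incT (d - 1) E Es ≤
          ENNReal.ofReal C * volume E ^ ((d : ℝ) / (d + 1)) *
            volume Es ^ ((d : ℝ) / (d + 1)) := by
  refine ⟨2, two_pos, fun E Es hE hEs _ _ ↦ ?_⟩
  rw [ENNReal.ofReal_ofNat]
  exact stmt0_general (V := Vec (d - 1)) (by rw [finrank_euclideanSpace_fin]; omega) hE hEs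
end
end

section
/- Let d ≥ 2. There exist constants C, A < ∞, depending only on d, with the following property: for any ε > 0 and any Lebesgue measurable sets E, E* ⊆ ℝ^d of positive finite measure satisfying 𝒯(E, E*) ≥ ε |E|^{d/(d+1)} |E*|^{d/(d+1)}, there exists a ball ℬ = ℬ(z̄, e, r, r*) such that the associated pair (B, B*) = (π(ℬ), π*(ℬ)) satisfies 𝒯(E ∩ B, E* ∩ B*) ≥ C^{−1} ε^A 𝒯(E, E*), together with |B| ≤ |E| and |B*| ≤ |E*|. -/
open MeasureTheory ENNReal
open scoped RealInnerProductSpace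

noncomputable section

/-- Admissibility of the parameters of a ball `ℬ(z̄, e, r, r*)`:
the center `z̄ = (x̄, x̄*)` lies on the incidence manifold `ℐ`, `ρ > 0`,
`e` is an orthonormal basis of `ℝ^{d-1}`, and `r_j r*_j = ρ > 0` for all `j`. -/
def IsBallParams (n : ℕ) (zb : Pt n × Pt n) (e : Fin n → Vec n)
    (r rs : Fin n → ℝ) (ρ : ℝ) : Prop :=
  zb.2.2 = zb.1.2 - ‖zb.2.1 - zb.1.1‖ ^ 2 ∧ 0 < ρ ∧ Orthonormal ℝ e ∧
    (∀ j, 0 < r j) ∧ (∀ j, 0 < rs j) ∧ (∀ j, r j * rs j = ρ)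

/-- The ball `ℬ(z̄, e, r, r*)`, a subset of the incidence manifold
`ℐ = {(x,y) : y_d = x_d - |y' - x'|²} ⊆ ℝ^d × ℝ^d`. -/
def ballI (n : ℕ) (zb : Pt n × Pt n) (e : Fin n → Vec n)
    (r rs : Fin n → ℝ) (ρ : ℝ) : Set (Pt n × Pt n) :=
  fun z => z.2.2 = z.1.2 - ‖z.2.1 - z.1.1‖ ^ 2 ∧
    (∀ j, |⟪z.1.1 - zb.1.1, e j⟫| < r j) ∧
    |z.1.2 - zb.2.2 - ‖z.1.1 - zb.2.1‖ ^ 2| < ρ ∧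
    (∀ j, |⟪z.2.1 - zb.2.1, e j⟫| < rs j) ∧
    |z.2.2 - zb.1.2 + ‖z.2.1 - zb.1.1‖ ^ 2| < ρ

/-!
Shearing both factors turns incidence into the symmetric bilinear relation
`h.2 + p.2 = 2⟪h.1, p.1⟫`. Let `n = d - 1`. Passing repeatedly to the points with many incidences
gives a point `p` of `F` incident to many points `q` of `E`, each of them incident to points of `F`
above a large set `S_q` of `v`'s. For fixed `v₁, …, vₙ`, the map from `q` to the `n` points of `F`
above them is affine in `q.1`, with Jacobian a multiple of the volume form of `(vᵢ - p.1)`.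
Integrating over `q` and the `vᵢ` bounds the volume form by `|F| ^ n`, so for some `q` its integral
over `S_q ^ n` is small.

Among the ellipsoids centred at `p.1`, one that nearly maximises a high power of the mass of
`S = S_q` divided by the volume leaves no slab direction carrying most of its mass, and if it missed
most of `S` the volume form would be large on average. Hence a box `B` around it, of volume
comparable to `|S|` up to powers of `ε`, contains a proportion of `S`.

For `y` in `B`, the slice over `y` lives mostly in the dual box around `q.1`: if `u` is outside it,
`y ↦ 2⟪u, y⟫` varies so much on `B` that few `y` produce an incidence. So a proportion of all
incidences comes from a pair of dual boxes, and partitioning these into cells of relative size a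
power of `ε` leaves a ball small enough for the measure constraints.
-/

section Incidence

variable {V : Type*} [NormedAddCommGroup V] [InnerProductSpace ℝ V]

/-- The point of `V × ℝ` above `v` that is incident to `q`. Two points `h`, `p` are incident when
`h.2 + p.2 = 2⟪h.1, p.1⟫`; the incidence manifold takes this symmetric form, with
`h = (x', |x'|² - x_d)` and `p = (y', y_d + |y'|²)`, under the shears `shearLeft`, `shearRight`. -/
def incPt (q : V × ℝ) (v : V) : V × ℝ := (v, 2 * ⟪q.1, v⟫ - q.2)

/-- The set of those `v` for which the point above `v` incident to `q` lies in `F`. -/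
def slice (F : Set (V × ℝ)) (q : V × ℝ) : Set V := incPt q ⁻¹' F

/-- The incident pairs of `E × F`, with the member of `F` recorded by its `V`-component. -/
def incPairs (E F : Set (V × ℝ)) : Set ((V × ℝ) × V) := {z | z.1 ∈ E ∧ z.2 ∈ slice F z.1}

theorem mem_slice_incPt {F : Set (V × ℝ)} {p : V × ℝ} {a v : V} :
    v ∈ slice F (incPt p a) ↔ (v, 2 * ⟪v - p.1, a⟫ + p.2) ∈ F := by
  have height : (incPt (incPt p a) v).2 = 2 * ⟪v - p.1, a⟫ + p.2 := by
    simp only [incPt, inner_sub_left, real_inner_comm v a]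
    ring
  rw [← height]
  rfl

variable [MeasurableSpace V] [BorelSpace V] [FiniteDimensional ℝ V]

/-- The incidence functional between subsets of `V × ℝ` for the relation of `incPt`. -/
def linInc (E F : Set (V × ℝ)) : ℝ≥0∞ := ∫⁻ q in E, volume (slice F q)

theorem measurable_incPt : Measurable fun z : (V × ℝ) × V => incPt z.1 z.2 := by
  unfold incPt
  fun_prop

theorem measurable_incPt_right (q : V × ℝ) : Measurable (incPt q) :=
  measurable_incPt.comp measurable_prodMk_left

theorem measurableSet_slice {F : Set (V × ℝ)} (hF : MeasurableSet F) (q : V × ℝ) :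
    MeasurableSet (slice F q) :=
  measurable_incPt_right q hF

theorem measurable_volume_slice {F : Set (V × ℝ)} (hF : MeasurableSet F) :
    Measurable fun q => volume (slice F q) :=
  measurable_measure_prodMk_left (measurable_incPt hF)

theorem measurableSet_incPairs {E F : Set (V × ℝ)} (hE : MeasurableSet E) (hF : MeasurableSet F) :
    MeasurableSet (incPairs E F) :=
  (measurable_fst hE).inter (measurable_incPt hF)

theorem linInc_mono {E F E' F' : Set (V × ℝ)} (hE : E ⊆ E') (hF : F ⊆ F') :
    linInc E F ≤ linInc E' F' :=
  (lintegral_mono fun _ => measure_mono (Set.preimage_mono hF)).trans (lintegral_mono_set hE)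

theorem volume_incPairs {E F : Set (V × ℝ)} (hE : MeasurableSet E) (hF : MeasurableSet F) :
    volume (incPairs E F) = linInc E F := by
  rw [Measure.volume_eq_prod, Measure.prod_apply (measurableSet_incPairs hE hF), linInc,
    ← lintegral_indicator hE]
  refine lintegral_congr fun q => ?_
  by_cases hq : q ∈ E <;> simp [incPairs, Set.preimage, hq]

theorem linInc_comm {E F : Set (V × ℝ)} (hE : MeasurableSet E) (hF : MeasurableSet F) :
    linInc E F = linInc F E := by
  have regroup : MeasurePreserving fun z : (V × V) × ℝ => (((z.1.1, z.2), z.1.2) : (V × ℝ) × V) :=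
    (volume_preserving_prodAssoc.symm _).comp
      (((MeasurePreserving.id volume).prod Measure.measurePreserving_swap).comp
        volume_preserving_prodAssoc)
  have flip : MeasurePreserving
      fun z : (V × V) × ℝ => ((z.1.swap, 2 * ⟪z.1.1, z.1.2⟫ - z.2) : (V × V) × ℝ) :=
    Measure.measurePreserving_swap.skew_product (g := fun z t => 2 * ⟪z.1, z.2⟫ - t)
      (by fun_prop) (.of_forall fun z => Measure.map_sub_left_eq_self volume (2 * ⟪z.1, z.2⟫))
  have hEF := (measurableSet_incPairs hE hF).nullMeasurableSet (μ := volume)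
  have hFE := (measurableSet_incPairs hF hE).nullMeasurableSet (μ := volume)
  rw [← volume_incPairs hE hF, ← volume_incPairs hF hE, ← regroup.measure_preimage hFE,
    ← (regroup.comp flip).measure_preimage hEF]
  congr 1
  ext ⟨⟨a, v⟩, z⟩
  simp [incPairs, slice, incPt, real_inner_comm, and_comm]

end Incidence

section Boxes

variable {V ι : Type*} [NormedAddCommGroup V] [InnerProductSpace ℝ V] [Fintype ι]

/-- The open box with centre `c` and half-widths `s` along the orthonormal basis `b`. -/
def box (b : OrthonormalBasis ι ℝ V) (c : V) (s : ι → ℝ) : Set V :=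
  {v | ∀ j, |⟪b j, v - c⟫| < s j}

theorem box_eq_setOf_forall_inner_mem (b : OrthonormalBasis ι ℝ V) (c : V) (s : ι → ℝ) :
    box b c s = {v | ∀ i, ⟪b i, v⟫ ∈ Metric.ball ⟪b i, c⟫ (s i)} := by
  simp only [box, Metric.mem_ball, Real.dist_eq, inner_sub_right]

theorem isOpen_box (b : OrthonormalBasis ι ℝ V) (c : V) (s : ι → ℝ) : IsOpen (box b c s) := by
  simp only [box, Set.ofPred_forall]
  exact isOpen_iInter_of_finite fun j => isOpen_lt (by fun_prop) continuous_const

theorem abs_inner_sub_le_of_mem_box {b : OrthonormalBasis ι ℝ V} {u v c c' : V} {r s : ι → ℝ}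
    {ρ : ℝ} (hu : u ∈ box b c r) (hv : v ∈ box b c' s) (hρ : ∀ j, r j * s j ≤ ρ) :
    |⟪u - c, v - c'⟫| ≤ Fintype.card ι * ρ := by
  rw [← b.sum_inner_mul_inner, ← nsmul_eq_mul]
  refine (Finset.abs_sum_le_sum_abs _ _).trans (Finset.sum_le_card_nsmul _ _ _ fun j _ => ?_)
  rw [abs_mul, real_inner_comm]
  exact (mul_le_mul (hu j).le (hv j).le (abs_nonneg _)
    ((abs_nonneg _).trans (hu j).le)).trans (hρ j)

variable [MeasurableSpace V] [BorelSpace V]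

theorem measurableSet_box (b : OrthonormalBasis ι ℝ V) (c : V) (s : ι → ℝ) :
    MeasurableSet (box b c s) :=
  (isOpen_box b c s).measurableSet

variable [FiniteDimensional ℝ V]

theorem volume_setOf_forall_inner_mem (b : OrthonormalBasis ι ℝ V) (J : ι → Set ℝ) :
    volume {v | ∀ i, ⟪b i, v⟫ ∈ J i} = ∏ i, volume (J i) := by
  have coords := (EuclideanSpace.volume_preserving_symm_measurableEquiv_toLp ι).comp
    b.measurePreserving_measurableEquiv
  rw [← volume_pi_pi, ← coords.measure_preimage_equiv
    (f := b.measurableEquiv.trans (MeasurableEquiv.toLp 2 (ι → ℝ)).symm)]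
  congr 1
  ext v
  simp [OrthonormalBasis.measurableEquiv, ← b.repr_apply_apply]

theorem volume_box_eq_prod (b : OrthonormalBasis ι ℝ V) (c : V) (s : ι → ℝ) :
    volume (box b c s) = ∏ i, ENNReal.ofReal (2 * s i) := by
  simp only [box_eq_setOf_forall_inner_mem, volume_setOf_forall_inner_mem, Real.volume_ball]

theorem volume_box (b : OrthonormalBasis ι ℝ V) (c : V) {s : ι → ℝ} (hs : ∀ j, 0 < s j) :
    volume (box b c s) = ENNReal.ofReal (2 ^ Fintype.card ι * ∏ j, s j) := by
  rw [volume_box_eq_prod, ← ENNReal.ofReal_prod_of_nonneg fun j _ => by linarith [hs j],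
    Finset.prod_mul_distrib, Finset.prod_const, Finset.card_univ]

theorem volume_setOf_inner_mem_and_forall_ne (b : OrthonormalBasis ι ℝ V) {a : V} {j : ι}
    (ha : ⟪b j, a⟫ ≠ 0) (J : ι → Set ℝ) :
    volume {y | ⟪a, y⟫ ∈ J j ∧ ∀ i ≠ j, ⟪b i, y⟫ ∈ J i} =
      ENNReal.ofReal |⟪b j, a⟫⁻¹| * ∏ i, volume (J i) := by
  classical
  -- The shear replacing the `j`-th coordinate of `y` by `⟪a, y⟫` turns the set into a box.
  set L : V →ₗ[ℝ] V := LinearMap.transvection (innerₗ V (a - b j)) (b j) with hL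
  have inner_self (y : V) : ⟪b j, L y⟫ = ⟪a, y⟫ := by
    simp [hL, LinearMap.transvection.apply, inner_add_right, inner_smul_right]
  have inner_of_ne (i : ι) (hij : i ≠ j) (y : V) : ⟪b i, L y⟫ = ⟪b i, y⟫ := by
    simp [hL, LinearMap.transvection.apply, inner_add_right, inner_smul_right,
      b.inner_eq_zero hij]
  have det_L : LinearMap.det L = ⟪b j, a⟫ := by
    simp [hL, LinearMap.transvection.det, real_inner_comm]
  have eq_preimage : {y | ⟪a, y⟫ ∈ J j ∧ ∀ i ≠ j, ⟪b i, y⟫ ∈ J i} =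
      L ⁻¹' {u | ∀ i, ⟪b i, u⟫ ∈ J i} := by
    ext y
    constructor
    · rintro ⟨hj, hi⟩ i
      rcases eq_or_ne i j with rfl | hij
      · rwa [inner_self]
      · rw [inner_of_ne i hij]
        exact hi i hij
    · exact fun hy => ⟨inner_self y ▸ hy j, fun i hij => inner_of_ne i hij y ▸ hy i⟩
  rw [eq_preimage, Measure.addHaar_preimage_linearMap _ (by rwa [det_L]),
    volume_setOf_forall_inner_mem, det_L]

theorem mul_volume_box_inter_slab_le (b : OrthonormalBasis ι ℝ V) (c a : V) (s : ι → ℝ)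
    {l : ℝ} (hl : 0 < l) {j : ι} (hj : l ≤ s j * |⟪b j, a⟫|) (k : ℝ) (J : Set ℝ) :
    ENNReal.ofReal l * volume {y ∈ box b c s | 2 * ⟪a, y⟫ + k ∈ J} ≤
      volume (box b c s) * volume J := by
  classical
  have inner_ne : ⟪b j, a⟫ ≠ 0 := fun h => by simp [h] at hj; linarith
  have inner_two : ⟪b j, (2 : ℝ) • a⟫ = 2 * ⟪b j, a⟫ := inner_smul_right ..
  have inner_two_ne : ⟪b j, (2 : ℝ) • a⟫ ≠ 0 := inner_two ▸ mul_ne_zero two_ne_zero inner_ne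
  set J' : ι → Set ℝ := Function.update (fun i => Metric.ball ⟪b i, c⟫ (s i)) j ((· + k) ⁻¹' J)
  have slab_subset : {y ∈ box b c s | 2 * ⟪a, y⟫ + k ∈ J} ⊆
      {y | ⟪(2 : ℝ) • a, y⟫ ∈ J' j ∧ ∀ i ≠ j, ⟪b i, y⟫ ∈ J' i} := by
    rw [box_eq_setOf_forall_inner_mem]
    rintro y ⟨hy, hyJ⟩
    exact ⟨by simpa [J', inner_smul_left] using hyJ, fun i hij => by simpa [J', hij] using hy i⟩
  have prod_J' : ∏ i, volume (J' i) =
      volume J * ∏ i ∈ Finset.univ.erase j, ENNReal.ofReal (2 * s i) := by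
    rw [← Finset.mul_prod_erase _ _ (Finset.mem_univ j)]
    congr 1
    · simp only [J', Function.update_self, measure_preimage_add_right]
    · refine Finset.prod_congr rfl fun i hi => ?_
      simp only [J', Function.update_of_ne (Finset.ne_of_mem_erase hi), Real.volume_ball]
  have inv_le : l * |(2 * ⟪b j, a⟫)⁻¹| ≤ 2 * s j := by
    rw [abs_inv, abs_mul, abs_two, ← div_eq_mul_inv, div_le_iff₀ (by positivity)]
    linarith
  calc ENNReal.ofReal l * volume {y ∈ box b c s | 2 * ⟪a, y⟫ + k ∈ J}
      ≤ ENNReal.ofReal l * (ENNReal.ofReal |(2 * ⟪b j, a⟫)⁻¹| * ∏ i, volume (J' i)) := by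
        rw [← inner_two, ← volume_setOf_inner_mem_and_forall_ne b inner_two_ne]
        gcongr
    _ = ENNReal.ofReal (l * |(2 * ⟪b j, a⟫)⁻¹|) * ∏ i, volume (J' i) := by
        rw [← mul_assoc, ENNReal.ofReal_mul hl.le]
    _ ≤ ENNReal.ofReal (2 * s j) * ∏ i, volume (J' i) := by gcongr
    _ = volume (box b c s) * volume J := by
        rw [prod_J', volume_box_eq_prod, ← Finset.mul_prod_erase _ _ (Finset.mem_univ j)]
        ring

theorem mul_lintegral_volume_slice_diff_box_le (b : OrthonormalBasis ι ℝ V) (c : V) {s : ι → ℝ}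
    (hs : ∀ j, 0 < s j) {E : Set (V × ℝ)} (hE : MeasurableSet E) (h : V × ℝ) {l : ℝ} (hl : 0 < l) :
    ENNReal.ofReal l *
        ∫⁻ y in box b c s, volume (slice E (incPt h y) \ box b h.1 fun j => l / s j) ≤
      volume (box b c s) * volume E := by
  set S : Set (V × V) := {z | z.2 ∈ slice E (incPt h z.1) \ box b h.1 fun j => l / s j} with hS
  have mS : MeasurableSet S := by
    have : Measurable fun z : V × V => incPt (incPt h z.1) z.2 := by unfold incPt; fun_prop
    exact (this hE).diff ((measurableSet_box b _ _).preimage measurable_snd)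
  calc _ = ENNReal.ofReal l * ((volume.restrict (box b c s)).prod volume) S := by
        rw [Measure.prod_apply mS]; rfl
    _ = ∫⁻ a, ENNReal.ofReal l * volume.restrict (box b c s) ((·, a) ⁻¹' S) := by
        rw [Measure.prod_apply_symm mS, lintegral_const_mul _ (measurable_measure_prodMk_right mS)]
    _ ≤ ∫⁻ a, volume (box b c s) * volume (Prod.mk a ⁻¹' E) := lintegral_mono fun a => ?_
    _ = volume (box b c s) * volume E := by
        rw [lintegral_const_mul _ (measurable_measure_prodMk_left hE), Measure.volume_eq_prod,
          Measure.prod_apply hE]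
  by_cases ha : a ∈ box b h.1 fun j => l / s j
  · simp [hS, ha, Set.preimage]
  obtain ⟨j, hj⟩ : ∃ j, l / s j ≤ |⟪b j, a - h.1⟫| := by simpa [box] using ha
  rw [div_le_iff₀' (hs j)] at hj
  rw [Measure.restrict_apply (mS.preimage measurable_prodMk_right)]
  refine le_trans (mul_le_mul_right (measure_mono ?_) _)
    (mul_volume_box_inter_slab_le b c (a - h.1) s hl hj h.2 _)
  exact fun y ⟨⟨hyE, _⟩, hy⟩ => ⟨hy, mem_slice_incPt.mp hyE⟩

end Boxes

theorem lintegral_pi_fin_succ {k : ℕ} {α : Fin (k + 1) → Type*} [∀ i, MeasurableSpace (α i)]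
    (μ : ∀ i, Measure (α i)) [∀ i, SigmaFinite (μ i)] {g : (∀ i, α i) → ℝ≥0∞} (hg : Measurable g) :
    ∫⁻ x, g x ∂Measure.pi μ =
      ∫⁻ x₀, ∫⁻ x, g (Fin.cons x₀ x) ∂Measure.pi (fun i : Fin k => μ i.succ) ∂μ 0 := by
  have split := (measurePreserving_piFinSuccAbove μ 0).symm
  rw [← split.lintegral_comp hg]
  refine (lintegral_prod _ (hg.comp split.measurable).aemeasurable).trans ?_
  exact lintegral_congr fun x₀ => lintegral_congr fun x => congrArg g (Fin.insertNth_zero x₀ x)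

theorem lintegral_pi_prod {α : Type*} [MeasurableSpace α] (μ : Measure α) [SigmaFinite μ]
    {g : α → ℝ≥0∞} (hg : Measurable g) (k : ℕ) :
    ∫⁻ x, ∏ i, g (x i) ∂Measure.pi (fun _ : Fin k => μ) = (∫⁻ x, g x ∂μ) ^ k := by
  induction k with
  | zero => simp
  | succ k ih =>
    have prod_meas : Measurable fun x : Fin k → α => ∏ i, g (x i) := by fun_prop
    rw [lintegral_pi_fin_succ _ (by fun_prop)]
    simp only [Fin.prod_univ_succ, Fin.cons_zero, Fin.cons_succ, lintegral_const_mul _ prod_meas,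
      ih, lintegral_mul_const _ hg, pow_succ']

section VolumeForm

variable {V : Type*} [NormedAddCommGroup V] [InnerProductSpace ℝ V] {n : ℕ}
  [Fact (Module.finrank ℝ V = n)] (o : Orientation ℝ V (Fin n))

/-- The volume form as a continuous multilinear map, so that it can be curried isometrically. -/
def volumeFormL : ContinuousMultilinearMap ℝ (fun _ : Fin n => V) ℝ :=
  o.volumeForm.toMultilinearMap.mkContinuous 1 fun v => by
    simpa using o.abs_volumeForm_apply_le v

variable [FiniteDimensional ℝ V] [MeasurableSpace V] [BorelSpace V]

theorem enorm_volumeForm_mul_volume_setOf_forall_inner_mem_le (w : Fin n → V) (J : Fin n → Set ℝ) :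
    ‖o.volumeForm w‖ₑ * volume {a | ∀ i, ⟪w i, a⟫ ∈ J i} ≤ ∏ i, volume (J i) := by
  rcases eq_or_ne (o.volumeForm w) 0 with hw | hw
  · simp [hw]
  set b : OrthonormalBasis (Fin n) ℝ V :=
    (stdOrthonormalBasis ℝ V).reindex (finCongr Fact.out)
  set A : V →ₗ[ℝ] V := ∑ i, (innerₗ V (w i)).smulRight (b i)
  have coord (i : Fin n) (a : V) : ⟪b i, A a⟫ = ⟪w i, a⟫ := by
    simp [A, b.orthonormal.inner_right_fintype]
  have abs_det : |LinearMap.det A| = |o.volumeForm w| := by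
    rw [o.volumeForm_robust' b, Module.Basis.det_apply, ← LinearMap.det_toMatrix b.toBasis,
      ← Matrix.det_transpose]
    congr 2
    ext i j
    simp [LinearMap.toMatrix_apply, Module.Basis.toMatrix_apply, b.repr_apply_apply, coord,
      real_inner_comm]
  have det_ne : LinearMap.det A ≠ 0 := by rwa [← abs_ne_zero, abs_det, abs_ne_zero]
  have preimage_eq : {a | ∀ i, ⟪w i, a⟫ ∈ J i} = A ⁻¹' {u | ∀ i, ⟪b i, u⟫ ∈ J i} := by
    simp only [Set.preimage_ofPred_eq, coord]
  rw [preimage_eq, Measure.addHaar_preimage_linearMap _ det_ne, volume_setOf_forall_inner_mem,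
    ← mul_assoc, abs_inv, abs_det, Real.enorm_eq_ofReal_abs, ← ENNReal.ofReal_mul (abs_nonneg _),
    mul_inv_cancel₀ (abs_ne_zero.mpr hw), ENNReal.ofReal_one, one_mul]

theorem lintegral_lintegral_slice_volumeForm_le {F : Set (V × ℝ)} (hF : MeasurableSet F)
    (p : V × ℝ) :
    ∫⁻ a, ∫⁻ v in Set.univ.pi fun _ : Fin n => slice F (incPt p a),
        ‖o.volumeForm fun i => v i - p.1‖ₑ ≤ volume F ^ n := by
  set ω : (Fin n → V) → ℝ≥0∞ := fun v => ‖o.volumeForm fun i => v i - p.1‖ₑ with hω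
  have ω_meas : Measurable ω :=
    ((volumeFormL o).cont.comp (continuous_pi fun i => by fun_prop)).measurable.enorm
  set S : Set (V × (Fin n → V)) := {z | ∀ i, z.2 i ∈ slice F (incPt p z.1)} with hS
  have S_meas : MeasurableSet S := by
    simp only [hS, Set.ofPred_forall]
    refine MeasurableSet.iInter fun i => ?_
    have : Measurable fun z : V × (Fin n → V) => incPt (incPt p z.1) (z.2 i) := by
      unfold incPt; fun_prop
    exact this hF
  calc _ = (volume.prod (volume.withDensity ω)) S := by
        rw [Measure.prod_apply S_meas]
        refine lintegral_congr fun a => ?_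
        rw [withDensity_apply _ (S_meas.preimage measurable_prodMk_left)]
        simp only [hS, hω, Set.preimage_ofPred_eq, ← Set.mem_univ_pi, Set.ofPred_mem_eq]
    _ = ∫⁻ v, ω v * volume {a | (a, v) ∈ S} := by
        rw [Measure.prod_apply_symm S_meas, lintegral_withDensity_eq_lintegral_mul _ ω_meas
          (measurable_measure_prodMk_right S_meas)]
        rfl
    _ ≤ ∫⁻ v : Fin n → V, ∏ i, volume (Prod.mk (v i) ⁻¹' F) := lintegral_mono fun v => ?_
    _ = volume F ^ n := by
        rw [volume_pi, lintegral_pi_prod _ (measurable_measure_prodMk_left hF),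
          Measure.volume_eq_prod, Measure.prod_apply hF]
  simp only [hS, mem_slice_incPt, Set.mem_ofPred_eq]
  refine (enorm_volumeForm_mul_volume_setOf_forall_inner_mem_le o _
    fun i => (2 * ·) ⁻¹' ((· + p.2) ⁻¹' (Prod.mk (v i) ⁻¹' F))).trans
    (Finset.prod_le_prod' fun i _ => ?_)
  rw [Real.volume_preimage_mul_left two_ne_zero, measure_preimage_add_right]
  exact mul_le_of_le_one_left' (by norm_num [abs_of_pos])

end VolumeForm

section Nondegenerate

variable {E : Type*} [NormedAddCommGroup E] [NormedSpace ℝ E] [MeasurableSpace E]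
  {μ : Measure E} {c : NNReal}

theorem mul_enorm_le_lintegral_enorm_apply (hc : ∀ ℓ : StrongDual ℝ E, c * ‖ℓ‖ₑ ≤ ∫⁻ x, ‖ℓ x‖ₑ ∂μ)
    {W : Type*} [NormedAddCommGroup W] [NormedSpace ℝ W] (Φ : E →L[ℝ] W) :
    c * ‖Φ‖ₑ ≤ ∫⁻ x, ‖Φ x‖ₑ ∂μ := by
  rcases eq_or_ne c 0 with rfl | c_ne
  · simp
  rw [mul_comm, ← ENNReal.le_div_iff_mul_le (by simp [c_ne]) (by simp)]
  refine Φ.opENorm_le_bound fun x => ?_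
  obtain ⟨g, norm_g, g_apply⟩ := exists_dual_vector'' ℝ (Φ x)
  have enorm_g (w : W) : ‖g w‖ₑ ≤ ‖w‖ₑ :=
    enorm_le_iff_norm_le.mpr (by simpa using g.le_of_opNorm_le norm_g w)
  rw [← ENNReal.mul_div_right_comm, ENNReal.le_div_iff_mul_le (by simp [c_ne]) (by simp)]
  calc ‖Φ x‖ₑ * c = c * ‖(g.comp Φ) x‖ₑ := by simp [g_apply, mul_comm]
    _ ≤ c * (‖g.comp Φ‖ₑ * ‖x‖ₑ) := by gcongr; exact ContinuousLinearMap.le_opENorm _ x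
    _ ≤ (∫⁻ y, ‖(g.comp Φ) y‖ₑ ∂μ) * ‖x‖ₑ := by rw [← mul_assoc]; gcongr; exact hc _
    _ ≤ (∫⁻ y, ‖Φ y‖ₑ ∂μ) * ‖x‖ₑ := by gcongr; exact enorm_g _

variable [BorelSpace E] [SecondCountableTopology E] [SigmaFinite μ]

theorem pow_mul_enorm_le_lintegral_enorm_multilinear
    (hc : ∀ ℓ : StrongDual ℝ E, c * ‖ℓ‖ₑ ≤ ∫⁻ x, ‖ℓ x‖ₑ ∂μ) {W : Type*} [NormedAddCommGroup W]
    [NormedSpace ℝ W] (k : ℕ) (Λ : ContinuousMultilinearMap ℝ (fun _ : Fin k => E) W) :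
    c ^ k * ‖Λ‖ₑ ≤ ∫⁻ x, ‖Λ x‖ₑ ∂Measure.pi fun _ => μ := by
  induction k with
  | zero =>
    have enorm_apply (x : Fin 0 → E) : ‖Λ x‖ₑ = ‖Λ‖ₑ := by
      rw [← ofReal_norm, ← ofReal_norm, Λ.fin0_apply_norm]
    simp [enorm_apply]
  | succ k ih =>
    have enorm_curry : ‖Λ.curryLeft‖ₑ = ‖Λ‖ₑ := by
      rw [← ofReal_norm, ← ofReal_norm, Λ.curryLeft_norm]
    calc c ^ (k + 1) * ‖Λ‖ₑ = c ^ k * (c * ‖Λ.curryLeft‖ₑ) := by rw [enorm_curry]; ring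
      _ ≤ c ^ k * ∫⁻ x, ‖Λ.curryLeft x‖ₑ ∂μ := by
        gcongr; exact mul_enorm_le_lintegral_enorm_apply hc _
      _ = ∫⁻ x, c ^ k * ‖Λ.curryLeft x‖ₑ ∂μ :=
        (lintegral_const_mul _ Λ.curryLeft.continuous.enorm.measurable).symm
      _ ≤ ∫⁻ x, ∫⁻ y, ‖Λ.curryLeft x y‖ₑ ∂(Measure.pi fun _ => μ) ∂μ := lintegral_mono fun x => ih _
      _ = ∫⁻ x, ‖Λ x‖ₑ ∂Measure.pi fun _ => μ :=
        (lintegral_pi_fin_succ (fun _ => μ) Λ.cont.enorm.measurable).symm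

end Nondegenerate

section VolumeFormLowerBound

variable {V : Type*} [NormedAddCommGroup V] [InnerProductSpace ℝ V] {k : ℕ}
  [Fact (Module.finrank ℝ V = k + 1)] (o : Orientation ℝ V (Fin (k + 1)))

theorem norm_le_norm_curryLeft_volumeFormL (x : V) : ‖x‖ ≤ ‖(volumeFormL o).curryLeft x‖ := by
  rcases eq_or_ne x 0 with rfl | hx
  · simp
  have finrank_eq : Module.finrank ℝ V = k + 1 := Fact.out
  have : FiniteDimensional ℝ V := .of_finrank_eq_succ finrank_eq
  obtain ⟨b, hb⟩ : ∃ b : OrthonormalBasis (Fin (k + 1)) ℝ V, ‖x‖ • b 0 = x := by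
    have unit : Orthonormal ℝ (({0} : Set (Fin (k + 1))).domRestrict fun _ => ‖x‖⁻¹ • x) :=
      ⟨fun _ => by simp [norm_smul, hx], fun i j hij => absurd (Subsingleton.elim i j) hij⟩
    obtain ⟨b, hb⟩ := unit.exists_orthonormalBasis_extension_of_card_eq (by simpa using finrank_eq)
    exact ⟨b, by simp [hb 0 rfl, smul_smul, hx]⟩
  have cons_eq : Fin.cons x (fun i => b i.succ) = Function.update (⇑b) 0 (‖x‖ • b 0) := by
    rw [hb, ← Fin.cons_self_tail b, Fin.update_cons_zero, Fin.cons_self_tail]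
    rfl
  calc ‖x‖ = ‖o.volumeForm (Fin.cons x fun i => b i.succ)‖ := by
        rw [cons_eq, AlternatingMap.map_update_smul, Function.update_eq_self, smul_eq_mul,
          norm_mul, norm_norm, Real.norm_eq_abs (o.volumeForm _),
          o.abs_volumeForm_apply_of_orthonormal b, mul_one]
    _ = ‖(volumeFormL o).curryLeft x fun i => b i.succ‖ := rfl
    _ ≤ ‖(volumeFormL o).curryLeft x‖ * ∏ i : Fin k, ‖b i.succ‖ :=
        ContinuousMultilinearMap.le_opNorm _ _
    _ = ‖(volumeFormL o).curryLeft x‖ := by simp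

variable [MeasurableSpace V] [BorelSpace V] [FiniteDimensional ℝ V]

theorem pow_mul_lintegral_enorm_le_lintegral_volumeForm {μ : Measure V} [SigmaFinite μ] {c : NNReal}
    (hc : ∀ ℓ : StrongDual ℝ V, c * ‖ℓ‖ₑ ≤ ∫⁻ x, ‖ℓ x‖ₑ ∂μ) :
    c ^ k * ∫⁻ x, ‖x‖ₑ ∂μ ≤ ∫⁻ v, ‖o.volumeForm v‖ₑ ∂Measure.pi fun _ => μ := by
  calc c ^ k * ∫⁻ x, ‖x‖ₑ ∂μ = ∫⁻ x, c ^ k * ‖x‖ₑ ∂μ :=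
        (lintegral_const_mul _ continuous_enorm.measurable).symm
    _ ≤ ∫⁻ x, ∫⁻ y, ‖(volumeFormL o).curryLeft x y‖ₑ ∂(Measure.pi fun _ => μ) ∂μ := by
        refine lintegral_mono fun x => ?_
        refine le_trans ?_ (pow_mul_enorm_le_lintegral_enorm_multilinear hc k _)
        gcongr
        exact enorm_le_iff_norm_le.mpr (norm_le_norm_curryLeft_volumeFormL o x)
    _ = ∫⁻ v, ‖o.volumeForm v‖ₑ ∂Measure.pi fun _ => μ :=
        (lintegral_pi_fin_succ (fun _ => μ) (volumeFormL o).cont.enorm.measurable).symm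

end VolumeFormLowerBound

section NearOptimal

variable {E : Type*} [NormedAddCommGroup E] [NormedSpace ℝ E] [MeasurableSpace E]

theorem measureReal_map_symm [BorelSpace E] (μ : Measure E) (e : E ≃L[ℝ] E) (X : Set E) :
    (μ.map e.symm).real X = μ.real (e '' X) := by
  rw [e.image_eq_preimage_symm, measureReal_def, measureReal_def]
  congr 1
  exact e.symm.toHomeomorph.toMeasurableEquiv.map_apply X

theorem exists_measureReal_image_ball_pos {μ : Measure E} [IsFiniteMeasure μ] (hμ : μ ≠ 0) :
    ∃ e : E ≃L[ℝ] E, 0 < μ.real (e '' Metric.ball 0 1) := by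
  obtain ⟨r, hr⟩ := exists_pos_measure_of_cover (Metric.iUnion_ball_nat (0 : E)) hμ
  have r_ne : (r : ℝ) ≠ 0 := by
    intro h
    simp [h] at hr
  let e : E ≃L[ℝ] E := ContinuousLinearEquiv.smulLeft (Units.mk0 (r : ℝ) r_ne)
  refine ⟨e, ?_⟩
  have image_eq : e '' Metric.ball 0 1 = Metric.ball 0 r := by
    rw [← smul_unitBall_of_pos (r.cast_nonneg.lt_of_ne' r_ne)]
    rfl
  rw [image_eq]
  exact ENNReal.toReal_pos hr.ne' (measure_ne_top _ _)

variable {V : Type*} [NormedAddCommGroup V] [InnerProductSpace ℝ V] [FiniteDimensional ℝ V]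

theorem exists_linearMap_slab_subset {u : V} (hu : ‖u‖ = 1) {τ : ℝ} (hτ : 0 < τ) :
    ∃ L : V →ₗ[ℝ] V, LinearMap.det L = 2 ^ Module.finrank ℝ V * τ ∧
      {x ∈ Metric.ball 0 1 | |⟪u, x⟫| < τ} ⊆ L '' Metric.ball 0 1 := by
  have inner_self : ⟪u, u⟫ = 1 := by rw [real_inner_self_eq_norm_sq, hu, one_pow]
  refine ⟨(2 : ℝ) • LinearMap.transvection (innerₗ V u) (-(1 - τ) • u), ?_, ?_⟩
  · simp [LinearMap.det_smul, LinearMap.transvection.det, hu]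
  rintro x ⟨hx, hxτ⟩
  set s : ℝ := ⟪u, x⟫ / τ - ⟪u, x⟫ with hs
  refine ⟨(1 / 2 : ℝ) • (x + s • u), ?_, ?_⟩
  · have norm_x_sq : ‖x‖ ^ 2 < 1 := by
      rw [mem_ball_zero_iff] at hx
      exact pow_lt_one₀ (norm_nonneg x) hx two_ne_zero
    have stretched_sq : (⟪u, x⟫ / τ) ^ 2 < 1 := by
      rwa [sq_lt_one_iff_abs_lt_one, abs_div, abs_of_pos hτ, div_lt_one hτ]
    have norm_sq : ‖x + s • u‖ ^ 2 = ‖x‖ ^ 2 - ⟪u, x⟫ ^ 2 + (⟪u, x⟫ / τ) ^ 2 := by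
      rw [norm_add_sq_real, norm_smul, hu, inner_smul_right, real_inner_comm, mul_one,
        Real.norm_eq_abs, sq_abs, hs]
      ring
    rw [mem_ball_zero_iff, norm_smul, Real.norm_of_nonneg (by norm_num)]
    nlinarith [sq_nonneg ⟪u, x⟫, norm_nonneg (x + s • u)]
  · simp only [LinearMap.smul_apply, LinearMap.transvection.apply, innerₗ_apply_apply,
      inner_smul_right, inner_add_right, inner_self, hs]
    match_scalars <;> field_simp
    ring

variable [MeasurableSpace V]

theorem measureReal_image_ball_le [BorelSpace V] {μ : Measure V} (hμ : μ ≤ volume)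
    (e : V ≃L[ℝ] V) :
    μ.real (e '' Metric.ball 0 1) ≤
      |LinearMap.det (e : V →ₗ[ℝ] V)| * volume.real (Metric.ball (0 : V) 1) := by
  have volume_image : volume (e '' Metric.ball 0 1) =
      ENNReal.ofReal |LinearMap.det (e : V →ₗ[ℝ] V)| * volume (Metric.ball (0 : V) 1) :=
    Measure.addHaar_image_linearMap volume (e : V →ₗ[ℝ] V) _
  refine (ENNReal.toReal_mono (by rw [volume_image]; finiteness) (hμ _)).trans_eq ?_
  rw [volume_image, ENNReal.toReal_mul, ENNReal.toReal_ofReal (abs_nonneg _), measureReal_def]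

/-- Among the ellipsoids `L '' ball 0 1`, the unit ball maximises `μ (L '' ball 0 1) ^ N / |det L|`
up to a factor of two. -/
def IsNearOptimal (N : ℕ) (μ : Measure V) : Prop :=
  ∀ L : V →ₗ[ℝ] V, LinearMap.det L ≠ 0 →
    μ.real (L '' Metric.ball 0 1) ^ N ≤ 2 * μ.real (Metric.ball 0 1) ^ N * |LinearMap.det L|

variable {N : ℕ} {μ : Measure V} [IsFiniteMeasure μ]

theorem IsNearOptimal.measureReal_slab_le (hN : N ≠ 0) (hμ : IsNearOptimal N μ) {u : V}
    (hu : ‖u‖ = 1) :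
    μ.real {x ∈ Metric.ball 0 1 | |⟪u, x⟫| < (1 / 2) ^ (N + Module.finrank ℝ V + 1)} ≤
      μ.real (Metric.ball 0 1) / 2 := by
  obtain ⟨L, det_L, slab_subset⟩ :=
    exists_linearMap_slab_subset hu (τ := (1 / 2) ^ (N + Module.finrank ℝ V + 1)) (by positivity)
  refine le_of_pow_le_pow_left₀ hN (by positivity) ?_
  calc _ ≤ μ.real (L '' Metric.ball 0 1) ^ N := by gcongr; finiteness
    _ ≤ 2 * μ.real (Metric.ball 0 1) ^ N * |LinearMap.det L| := hμ L (by rw [det_L]; positivity)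
    _ = (μ.real (Metric.ball 0 1) / 2) ^ N := by
      rw [det_L, abs_of_pos (by positivity)]
      simp only [div_pow, one_pow, pow_add, pow_one]
      field_simp

variable [BorelSpace V]

theorem IsNearOptimal.le_lintegral_enorm_inner (hN : N ≠ 0) (hμ : IsNearOptimal N μ) {u : V}
    (hu : ‖u‖ = 1) :
    ENNReal.ofReal ((1 / 2) ^ (N + Module.finrank ℝ V + 2) * μ.real (Metric.ball 0 1)) ≤
      ∫⁻ x, ‖⟪u, x⟫‖ₑ ∂μ := by
  set τ : ℝ := (1 / 2) ^ (N + Module.finrank ℝ V + 1) with hτ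
  have slab_meas : MeasurableSet {x : V | |⟪u, x⟫| < τ} :=
    measurableSet_lt (by fun_prop) measurable_const
  have half_le : μ.real (Metric.ball 0 1) / 2 ≤
      μ.real (Metric.ball 0 1 \ {x : V | |⟪u, x⟫| < τ}) := by
    have split := measureReal_inter_add_sdiff (μ := μ) (s := Metric.ball (0 : V) 1) slab_meas
    have : μ.real (Metric.ball 0 1 ∩ {x : V | |⟪u, x⟫| < τ}) ≤ _ := hμ.measureReal_slab_le hN hu
    linarith
  calc _ = ENNReal.ofReal τ * ENNReal.ofReal (μ.real (Metric.ball 0 1) / 2) := by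
        rw [← ENNReal.ofReal_mul (by positivity), hτ]
        ring_nf
    _ ≤ ENNReal.ofReal τ * μ (Metric.ball 0 1 \ {x : V | |⟪u, x⟫| < τ}) := by
        gcongr
        exact ENNReal.ofReal_le_of_le_toReal half_le
    _ ≤ ENNReal.ofReal τ * μ {x | ENNReal.ofReal τ ≤ ‖⟪u, x⟫‖ₑ} := by
        gcongr
        rintro x ⟨-, hx⟩
        rw [Set.mem_ofPred_eq, Real.enorm_eq_ofReal_abs]
        exact ENNReal.ofReal_le_ofReal (not_lt.mp hx)
    _ ≤ ∫⁻ x, ‖⟪u, x⟫‖ₑ ∂μ := mul_meas_ge_le_lintegral (by fun_prop) _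

theorem IsNearOptimal.mul_enorm_le_lintegral (hN : N ≠ 0) (hμ : IsNearOptimal N μ)
    (ℓ : StrongDual ℝ V) :
    ENNReal.ofReal ((1 / 2) ^ (N + Module.finrank ℝ V + 2) * μ.real (Metric.ball 0 1)) * ‖ℓ‖ₑ ≤
      ∫⁻ x, ‖ℓ x‖ₑ ∂μ := by
  obtain ⟨w, rfl⟩ := (InnerProductSpace.toDual ℝ V).surjective ℓ
  rcases eq_or_ne w 0 with rfl | hw
  · rw [LinearIsometryEquiv.enorm_map]
    simp
  have apply_eq (x : V) : ⟪w, x⟫ = ‖w‖ * ⟪‖w‖⁻¹ • w, x⟫ := by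
    rw [real_inner_smul_left, mul_inv_cancel_left₀ (norm_ne_zero_iff.mpr hw)]
  calc _ ≤ (∫⁻ x, ‖⟪‖w‖⁻¹ • w, x⟫‖ₑ ∂μ) * ‖w‖ₑ := by
        rw [LinearIsometryEquiv.enorm_map]
        gcongr
        exact hμ.le_lintegral_enorm_inner hN (by simp [norm_smul, hw])
    _ = ∫⁻ x, ‖⟪w, x⟫‖ₑ ∂μ := by
        rw [mul_comm, ← lintegral_const_mul _ (by fun_prop)]
        simp only [apply_eq, enorm_mul, enorm_norm]

theorem exists_isNearOptimal_map (hN : N ≠ 0) (hμ : μ ≤ volume) (hμ₀ : μ ≠ 0) :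
    ∃ e : V ≃L[ℝ] V, 0 < μ.real (e '' Metric.ball 0 1) ∧ IsNearOptimal N (μ.map e.symm) := by
  set B := Metric.ball (0 : V) 1
  set D : (V ≃L[ℝ] V) → ℝ := fun e => |LinearMap.det (e : V →ₗ[ℝ] V)| with hD
  have D_pos (e) : 0 < D e := abs_pos.mpr e.toLinearEquiv.isUnit_det'.ne_zero
  set quality : (V ≃L[ℝ] V) → ℝ := fun e => μ.real (e '' B) ^ N / D e with hquality
  have bdd : BddAbove (Set.range quality) := by
    refine ⟨μ.real Set.univ ^ (N - 1) * volume.real B, ?_⟩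
    rintro _ ⟨e, rfl⟩
    rw [div_le_iff₀ (D_pos e), ← pow_sub_one_mul hN, mul_assoc, mul_comm (volume.real B)]
    gcongr
    · finiteness
    · exact Set.subset_univ _
    · exact measureReal_image_ball_le hμ e
  obtain ⟨e₀, he₀⟩ := exists_measureReal_image_ball_pos hμ₀
  have sSup_pos : 0 < sSup (Set.range quality) :=
    (div_pos (pow_pos he₀ N) (D_pos e₀)).trans_le (le_csSup bdd ⟨e₀, rfl⟩)
  obtain ⟨_, ⟨e, rfl⟩, he⟩ := exists_lt_of_lt_csSup (Set.range_nonempty_iff_nonempty.mpr ⟨e₀⟩)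
    (half_lt_self sSup_pos)
  have pos : 0 < μ.real (e '' B) := measureReal_nonneg.lt_of_ne' fun h => by
    simp only [hquality, h, zero_pow hN, zero_div] at he
    linarith
  refine ⟨e, pos, fun L hL => ?_⟩
  set e' := (L.equivOfDetNeZero hL).toContinuousLinearEquiv.trans e
  have quality_le : quality e' ≤ 2 * quality e := by linarith [le_csSup bdd ⟨e', rfl⟩]
  have image_eq : e '' (L '' B) = e' '' B := Set.image_image _ _ _
  have D_eq : D e' = D e * |LinearMap.det L| := by
    simp only [hD, ← abs_mul, ← LinearMap.det_comp]
    rfl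
  rw [measureReal_map_symm, measureReal_map_symm, image_eq]
  calc _ = quality e' * D e' := (div_mul_cancel₀ _ (D_pos e').ne').symm
    _ ≤ 2 * quality e * D e' := by gcongr
    _ = 2 * μ.real (e '' B) ^ N * |LinearMap.det L| := by
      rw [D_eq, hquality]
      have := (D_pos e).ne'
      field_simp

end NearOptimal

section MassInBox

theorem pow_le_mul_of_half_pow_le {k : ℕ} {f g D Φ c w : ℝ} (hf : 0 < f) (hg : 0 < g) (hD : 0 < D)
    (hΦ : 0 < Φ) (hc : 0 < c) (hgD : g ≤ D * w)
    (h : (f / 2) ^ ((k + 1) ^ 2 + 1) ≤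
      2 * g ^ ((k + 1) ^ 2 + 1) * (2 * (Φ / D / (c * g) ^ k) / f) ^ (k + 1)) :
    f ^ ((k + 1) ^ 2 + (k + 1) + 1) * c ^ (k * (k + 1)) ≤
      2 ^ ((k + 1) ^ 2 + (k + 1) + 2) * w ^ (k + 1) * g * Φ ^ (k + 1) := by
  have cleared : f ^ ((k + 1) ^ 2 + 1) * (D * (c * g) ^ k * f) ^ (k + 1) ≤
      2 ^ ((k + 1) ^ 2 + 2) * g ^ ((k + 1) ^ 2 + 1) * (2 * Φ) ^ (k + 1) := by
    have combine : 2 * (Φ / D / (c * g) ^ k) / f = 2 * Φ / (D * (c * g) ^ k * f) := by field_simp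
    rw [combine, div_pow, div_pow, ← mul_div_assoc, div_le_div_iff₀ (by positivity) (by positivity)]
      at h
    exact h.trans_eq (by ring)
  refine le_of_mul_le_mul_right ?_ (show 0 < g ^ ((k + 1) ^ 2) by positivity)
  calc f ^ ((k + 1) ^ 2 + (k + 1) + 1) * c ^ (k * (k + 1)) * g ^ ((k + 1) ^ 2)
      = f ^ ((k + 1) ^ 2 + 1) * ((c * g) ^ k * f) ^ (k + 1) * g ^ (k + 1) := by ring
    _ ≤ f ^ ((k + 1) ^ 2 + 1) * ((c * g) ^ k * f) ^ (k + 1) * (D * w) ^ (k + 1) := by gcongr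
    _ = f ^ ((k + 1) ^ 2 + 1) * (D * (c * g) ^ k * f) ^ (k + 1) * w ^ (k + 1) := by ring
    _ ≤ 2 ^ ((k + 1) ^ 2 + 2) * g ^ ((k + 1) ^ 2 + 1) * (2 * Φ) ^ (k + 1) * w ^ (k + 1) := by
      have : 0 < w := pos_of_mul_pos_right (hg.trans_le hgD) hD.le
      gcongr
    _ = 2 ^ ((k + 1) ^ 2 + (k + 1) + 2) * w ^ (k + 1) * g * Φ ^ (k + 1) * g ^ ((k + 1) ^ 2) := by
      ring

variable {V : Type*} [NormedAddCommGroup V] [InnerProductSpace ℝ V] [FiniteDimensional ℝ V]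

theorem exists_image_ball_subset_box {n : ℕ} (hn : Module.finrank ℝ V = n) {M : V →ₗ[ℝ] V}
    (hM : LinearMap.det M ≠ 0) :
    ∃ (b : OrthonormalBasis (Fin n) ℝ V) (σ : Fin n → ℝ), (∀ j, 0 < σ j) ∧
      ∏ j, σ j = |LinearMap.det M| ∧ M '' Metric.ball 0 1 ⊆ box b 0 σ := by
  have symm : (M ∘ₗ M.adjoint).IsSymmetric := LinearMap.isSymmetric_self_comp_adjoint M
  set b := symm.eigenvectorBasis hn
  have det_adjoint : LinearMap.det M.adjoint = LinearMap.det M := by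
    rw [← LinearMap.det_toMatrix b.toBasis, LinearMap.toMatrix_adjoint,
      Matrix.det_conjTranspose, LinearMap.det_toMatrix, star_trivial]
  have eigenvalue_eq (j : Fin n) : symm.eigenvalues hn j = ‖M.adjoint (b j)‖ ^ 2 := by
    rw [← real_inner_self_eq_norm_sq, LinearMap.adjoint_inner_left, ← LinearMap.comp_apply,
      symm.apply_eigenvectorBasis hn j, inner_smul_right, real_inner_self_eq_norm_sq,
      b.norm_eq_one]
    simp
  have prod_eq : ∏ j, ‖M.adjoint (b j)‖ = |LinearMap.det M| := by
    rw [← sq_eq_sq₀ (Finset.prod_nonneg fun _ _ => norm_nonneg _) (abs_nonneg _), sq_abs,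
      ← Finset.prod_pow, sq]
    nth_rewrite 2 [← det_adjoint]
    rw [← LinearMap.det_comp, symm.det_eq_prod_eigenvalues hn]
    simp [eigenvalue_eq]
  have pos (j : Fin n) : 0 < ‖M.adjoint (b j)‖ := by
    refine (norm_nonneg _).lt_of_ne' fun h => hM ?_
    rw [← abs_eq_zero, ← prod_eq, Finset.prod_eq_zero (Finset.mem_univ j) h]
  refine ⟨b, fun j => ‖M.adjoint (b j)‖, pos, prod_eq, ?_⟩
  rintro _ ⟨x, hx, rfl⟩ j
  rw [sub_zero, ← LinearMap.adjoint_inner_left]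
  exact (abs_real_inner_le_norm _ _).trans_lt
    (mul_lt_of_lt_one_right (pos j) (mem_ball_zero_iff.mp hx))

theorem abs_volumeForm_comp {n : ℕ} [Fact (Module.finrank ℝ V = n)]
    (o : Orientation ℝ V (Fin n)) (A : V →ₗ[ℝ] V) (v : Fin n → V) :
    |o.volumeForm (A ∘ v)| = |LinearMap.det A| * |o.volumeForm v| := by
  set b : OrthonormalBasis (Fin n) ℝ V :=
    (stdOrthonormalBasis ℝ V).reindex (finCongr Fact.out)
  rw [o.volumeForm_robust' b, o.volumeForm_robust' b, ← abs_mul]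
  congr 1
  exact Module.Basis.det_comp _ A v

variable [MeasurableSpace V] [BorelSpace V]

theorem lintegral_volumeForm_map_symm {n : ℕ} [Fact (Module.finrank ℝ V = n)]
    (o : Orientation ℝ V (Fin n)) {μ : Measure V}
    [SigmaFinite μ] (e : V ≃L[ℝ] V) :
    ENNReal.ofReal |LinearMap.det (e : V →ₗ[ℝ] V)| *
        ∫⁻ v, ‖o.volumeForm v‖ₑ ∂(Measure.pi fun _ => μ.map e.symm) =
      ∫⁻ v, ‖o.volumeForm v‖ₑ ∂(Measure.pi fun _ => μ) := by
  have : SigmaFinite (μ.map e.symm) :=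
    e.symm.toHomeomorph.toMeasurableEquiv.sigmaFinite_map
  have meas : Measurable fun v => ‖o.volumeForm v‖ₑ := (volumeFormL o).cont.enorm.measurable
  have meas_symm : Measurable fun (v : Fin n → V) i => e.symm (v i) := by fun_prop
  rw [← Measure.pi_map_pi fun _ => e.symm.continuous.measurable.aemeasurable,
    lintegral_map meas meas_symm,
    ← lintegral_const_mul' _ _ ENNReal.ofReal_ne_top]
  refine lintegral_congr fun v => ?_
  rw [Real.enorm_eq_ofReal_abs, Real.enorm_eq_ofReal_abs, ← ENNReal.ofReal_mul (abs_nonneg _),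
    ← abs_volumeForm_comp]
  congr 3
  exact funext fun i => e.apply_symm_apply (v i)

theorem lintegral_volumeForm_map_symm_le {n : ℕ} [Fact (Module.finrank ℝ V = n)]
    (o : Orientation ℝ V (Fin n)) {μ : Measure V} [SigmaFinite μ] (e : V ≃L[ℝ] V) {Φ : ℝ}
    (hΦ : ∫⁻ v, ‖o.volumeForm v‖ₑ ∂(Measure.pi fun _ => μ) ≤ ENNReal.ofReal Φ) :
    ∫⁻ v, ‖o.volumeForm v‖ₑ ∂(Measure.pi fun _ => μ.map e.symm) ≤
      ENNReal.ofReal (Φ / |LinearMap.det (e : V →ₗ[ℝ] V)|) := by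
  have det_pos : 0 < |LinearMap.det (e : V →ₗ[ℝ] V)| :=
    abs_pos.mpr e.toLinearEquiv.isUnit_det'.ne_zero
  rwa [ENNReal.ofReal_div_of_pos det_pos,
    ENNReal.le_div_iff_mul_le (.inl (ENNReal.ofReal_pos.mpr det_pos).ne')
      (.inl ENNReal.ofReal_ne_top), mul_comm, lintegral_volumeForm_map_symm]

variable {μ : Measure V} [IsFiniteMeasure μ]

theorem IsNearOptimal.le_lintegral_enorm [Nontrivial V] {N : ℕ} (hN : N ≠ 0)
    (hμ : IsNearOptimal N μ) :
    ENNReal.ofReal ((1 / 2) ^ (N + Module.finrank ℝ V + 2) * μ.real (Metric.ball 0 1)) ≤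
      ∫⁻ x, ‖x‖ₑ ∂μ := by
  have enorm_id : ‖ContinuousLinearMap.id ℝ V‖ₑ = 1 := by
    rw [← ofReal_norm, ContinuousLinearMap.norm_id, ENNReal.ofReal_one]
  have bound := mul_enorm_le_lintegral_enorm_apply (hμ.mul_enorm_le_lintegral hN)
    (ContinuousLinearMap.id ℝ V)
  rwa [enorm_id, mul_one] at bound

theorem IsNearOptimal.measureReal_univ_pow_le {N : ℕ} (hμ : IsNearOptimal N μ)
    (hμ₀ : 0 < μ.real Set.univ) {m : ℝ} (hm : 0 < m)
    (hμm : ∫⁻ x, ‖x‖ₑ ∂μ ≤ ENNReal.ofReal m) :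
    (μ.real Set.univ / 2) ^ N ≤ 2 * μ.real (Metric.ball 0 1) ^ N *
      (2 * m / μ.real Set.univ) ^ Module.finrank ℝ V := by
  set f := μ.real Set.univ
  set R := 2 * m / f with hR
  have R_pos : 0 < R := by positivity
  have outside_le : R * μ.real (Metric.ball 0 R)ᶜ ≤ m := by
    rw [← ENNReal.ofReal_le_ofReal_iff hm.le, ENNReal.ofReal_mul R_pos.le, ofReal_measureReal]
    refine le_trans ?_
      ((mul_meas_ge_le_lintegral continuous_enorm.measurable (ENNReal.ofReal R)).trans hμm)
    gcongr
    intro x hx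
    rw [Set.mem_compl_iff, mem_ball_zero_iff, not_lt] at hx
    rw [Set.mem_ofPred_eq, ← ofReal_norm]
    exact ENNReal.ofReal_le_ofReal hx
  have half_le : f / 2 ≤ μ.real (Metric.ball 0 R) := by
    have split := measureReal_add_measureReal_compl (μ := μ) (measurableSet_ball (x := 0) (ε := R))
    have : μ.real (Metric.ball 0 R)ᶜ ≤ f / 2 := by
      rw [hR, div_mul_eq_mul_div, div_le_iff₀ hμ₀] at outside_le
      nlinarith
    linarith
  have ball_eq : (R • LinearMap.id : V →ₗ[ℝ] V) '' Metric.ball 0 1 = Metric.ball 0 R := by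
    rw [← smul_unitBall_of_pos R_pos]
    rfl
  have scaled := hμ (R • LinearMap.id) (by simp [LinearMap.det_smul, R_pos.ne'])
  rw [ball_eq, LinearMap.det_smul, LinearMap.det_id, mul_one, abs_of_pos (by positivity)] at scaled
  exact (pow_le_pow_left₀ (by positivity) half_le N).trans scaled

theorem IsNearOptimal.volumeForm_bounds {k N : ℕ} [Fact (Module.finrank ℝ V = k + 1)]
    (o : Orientation ℝ V (Fin (k + 1))) (hN : N ≠ 0) (hμ : IsNearOptimal N μ)
    (hg : 0 < μ.real (Metric.ball 0 1)) {Ψ : ℝ}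
    (hΨ : ∫⁻ v, ‖o.volumeForm v‖ₑ ∂(Measure.pi fun _ => μ) ≤ ENNReal.ofReal Ψ) :
    ((1 / 2) ^ (N + k + 3) * μ.real (Metric.ball 0 1)) ^ (k + 1) ≤ Ψ ∧
      (μ.real Set.univ / 2) ^ N ≤ 2 * μ.real (Metric.ball 0 1) ^ N *
        (2 * (Ψ / ((1 / 2) ^ (N + k + 3) * μ.real (Metric.ball 0 1)) ^ k) / μ.real Set.univ) ^
          (k + 1) := by
  have finrank_eq : Module.finrank ℝ V = k + 1 := Fact.out
  have : Nontrivial V := Module.nontrivial_of_finrank_eq_succ finrank_eq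
  set c : ℝ := (1 / 2) ^ (N + k + 3) * μ.real (Metric.ball 0 1) with hc
  have c_pos : 0 < c := by positivity
  have c_eq : (1 / 2) ^ (N + Module.finrank ℝ V + 2) * μ.real (Metric.ball 0 1) = c := by
    rw [hc, finrank_eq]
    rfl
  have norm_ge := hμ.le_lintegral_enorm hN
  have form_ge := pow_mul_lintegral_enorm_le_lintegral_volumeForm o (hμ.mul_enorm_le_lintegral hN)
  rw [c_eq] at norm_ge form_ge
  have mean_le : ENNReal.ofReal (c ^ k) * ∫⁻ x, ‖x‖ₑ ∂μ ≤ ENNReal.ofReal Ψ :=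
    (ENNReal.ofReal_pow c_pos.le k).symm ▸ form_ge.trans hΨ
  have pow_le : c ^ (k + 1) ≤ Ψ := by
    have : ENNReal.ofReal (c ^ (k + 1)) ≤ ENNReal.ofReal Ψ := by
      rw [pow_succ, ENNReal.ofReal_mul (by positivity)]
      exact (mul_le_mul_right norm_ge _).trans mean_le
    exact (ENNReal.ofReal_le_ofReal_iff' .. |>.mp this).resolve_right (by
      have : 0 < c ^ (k + 1) := by positivity
      linarith)
  have Ψ_pos : 0 < Ψ := (pow_pos c_pos _).trans_le pow_le
  refine ⟨pow_le, ?_⟩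
  rw [← finrank_eq]
  refine hμ.measureReal_univ_pow_le (hg.trans_le (measureReal_mono (Set.subset_univ _)))
    (by positivity) ?_
  rwa [ENNReal.ofReal_div_of_pos (by positivity),
    ENNReal.le_div_iff_mul_le (.inl (ENNReal.ofReal_pos.mpr (pow_pos c_pos k)).ne')
      (.inl ENNReal.ofReal_ne_top), mul_comm]

theorem exists_box_of_lintegral_volumeForm_le {k : ℕ} [Fact (Module.finrank ℝ V = k + 1)]
    (o : Orientation ℝ V (Fin (k + 1))) :
    ∃ C : ℝ, 0 < C ∧ ∀ (μ : Measure V) [IsFiniteMeasure μ] (Φ : ℝ), μ ≤ volume → μ ≠ 0 →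
      ∫⁻ v, ‖o.volumeForm v‖ₑ ∂(Measure.pi fun _ => μ) ≤ ENNReal.ofReal Φ →
      ∃ (b : OrthonormalBasis (Fin (k + 1)) ℝ V) (σ : Fin (k + 1) → ℝ) (g : ℝ),
        (∀ j, 0 < σ j) ∧ 0 < g ∧ g ≤ μ.real (box b 0 σ) ∧
        μ.real Set.univ ^ ((k + 1) ^ 2 + (k + 1) + 1) ≤ C * g * Φ ^ (k + 1) ∧
        g ^ (k + 1) * ∏ j, σ j ≤ C * Φ := by
  set N := (k + 1) ^ 2 + 1
  set c : ℝ := (1 / 2) ^ (N + k + 3) with hc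
  have c_pos : 0 < c := by positivity
  set w := volume.real (Metric.ball (0 : V) 1)
  set C₁ : ℝ := 2 ^ ((k + 1) ^ 2 + (k + 1) + 2) * w ^ (k + 1) / c ^ (k * (k + 1)) with hC₁
  refine ⟨max C₁ (1 / c ^ (k + 1)), by positivity, fun μ _ Φ hμ hμ₀ hΦ => ?_⟩
  obtain ⟨e, g_pos, optimal⟩ := exists_isNearOptimal_map (N := N) (by omega) hμ hμ₀
  set g := μ.real (e '' Metric.ball 0 1) with hg
  set D := |LinearMap.det (e : V →ₗ[ℝ] V)|
  have det_ne : LinearMap.det (e : V →ₗ[ℝ] V) ≠ 0 := e.toLinearEquiv.isUnit_det'.ne_zero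
  have D_pos : 0 < D := abs_pos.mpr det_ne
  have bounds := optimal.volumeForm_bounds o (by omega) (by rwa [measureReal_map_symm])
    (lintegral_volumeForm_map_symm_le o e hΦ)
  rw [measureReal_map_symm, measureReal_map_symm, Set.image_univ_of_surjective e.surjective,
    ← hc, ← hg] at bounds
  obtain ⟨pow_le, half_pow_le⟩ := bounds
  have f_pos : 0 < μ.real Set.univ := g_pos.trans_le (measureReal_mono (Set.subset_univ _))
  have Φ_pos : 0 < Φ := by
    have := (pow_pos (mul_pos c_pos g_pos) _).trans_le pow_le
    rwa [div_pos_iff_of_pos_right D_pos] at this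
  have f_le := pow_le_mul_of_half_pow_le f_pos g_pos D_pos Φ_pos c_pos
    (measureReal_image_ball_le hμ e) half_pow_le
  obtain ⟨b, σ, σ_pos, prod_σ, image_subset⟩ := exists_image_ball_subset_box
    (Fact.out : Module.finrank ℝ V = k + 1) det_ne
  refine ⟨b, σ, g, σ_pos, g_pos, measureReal_mono image_subset, ?_, ?_⟩
  · calc _ ≤ C₁ * g * Φ ^ (k + 1) := by
          rw [hC₁, div_mul_eq_mul_div, div_mul_eq_mul_div, le_div_iff₀ (by positivity)]
          exact f_le
      _ ≤ _ := by gcongr; exact le_max_left _ _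
  · calc _ ≤ 1 / c ^ (k + 1) * Φ := by
          rw [prod_σ, one_div_mul_eq_div, le_div_iff₀ (by positivity)]
          rw [mul_pow, le_div_iff₀ D_pos] at pow_le
          linarith
      _ ≤ _ := by gcongr; exact le_max_right _ _

end MassInBox

section RichPart

variable {V : Type*} [NormedAddCommGroup V] [InnerProductSpace ℝ V] [MeasurableSpace V]
  [BorelSpace V] [FiniteDimensional ℝ V] {E F : Set (V × ℝ)} {α β ω : ℝ}

/-- The points of `E` that are incident to many points of `F`: their slices have measure at
least `c`. -/
def richPart (E F : Set (V × ℝ)) (c : ℝ) : Set (V × ℝ) :=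
  {q ∈ E | ENNReal.ofReal c ≤ volume (slice F q)}

theorem richPart_subset (E F : Set (V × ℝ)) (c : ℝ) : richPart E F c ⊆ E := fun _ h => h.1

theorem measurableSet_richPart (hE : MeasurableSet E) (hF : MeasurableSet F) (c : ℝ) :
    MeasurableSet (richPart E F c) :=
  hE.inter (measurableSet_le measurable_const (measurable_volume_slice hF))

theorem linInc_le_linInc_richPart_add (hE : MeasurableSet E) (hF : MeasurableSet F) (c : ℝ) :
    linInc E F ≤ linInc (richPart E F c) F + ENNReal.ofReal c * volume E := by
  unfold linInc
  rw [← lintegral_inter_add_sdiff _ E (measurableSet_richPart hE hF c),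
    Set.inter_eq_right.mpr (richPart_subset E F c)]
  gcongr
  calc ∫⁻ q in E \ richPart E F c, volume (slice F q)
      ≤ ∫⁻ _ in E \ richPart E F c, ENNReal.ofReal c :=
        setLIntegral_mono' (hE.diff (measurableSet_richPart hE hF c)) fun q hq =>
          le_of_not_ge fun h => hq.2 ⟨hq.1, h⟩
    _ ≤ ENNReal.ofReal c * volume E := by
        rw [setLIntegral_const]
        gcongr
        exact Set.sdiff_subset

theorem ofReal_le_linInc_richPart (hE : MeasurableSet E) (hF : MeasurableSet F) {c e t t' : ℝ}
    (hc : 0 ≤ c) (he : 0 ≤ e) (hEe : volume E ≤ ENNReal.ofReal e)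
    (ht : ENNReal.ofReal t ≤ linInc E F) (ht' : t' + c * e = t) :
    ENNReal.ofReal t' ≤ linInc (richPart E F c) F := by
  rw [eq_sub_of_add_eq ht', ENNReal.ofReal_sub _ (by positivity), tsub_le_iff_right,
    ENNReal.ofReal_mul hc]
  exact ht.trans ((linInc_le_linInc_richPart_add hE hF c).trans (by gcongr))

theorem exists_le_volume_slice_richPart (hE : MeasurableSet E) (hF : MeasurableSet F) (hα : 0 < α)
    (hβ : 0 < β) (hω : 0 < ω) (hEe : volume E ≤ ENNReal.ofReal (β * ω))
    (hFf : volume F ≤ ENNReal.ofReal (α * ω)) (ht : ENNReal.ofReal (α * β * ω) ≤ linInc E F)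
    {E₁ F₁ : Set (V × ℝ)} (hE₁ : E₁ = richPart E F (α / 2)) (hF₁ : F₁ = richPart F E₁ (β / 4)) :
    ∃ p, ENNReal.ofReal (β / 16) ≤ volume (slice (richPart E₁ F₁ (α / 8)) p) := by
  have mE₁ : MeasurableSet E₁ := hE₁ ▸ measurableSet_richPart hE hF _
  have mF₁ : MeasurableSet F₁ := hF₁ ▸ measurableSet_richPart hF mE₁ _
  have mE₂ := measurableSet_richPart mE₁ mF₁ (α / 8)
  have E₁_le : volume E₁ ≤ ENNReal.ofReal (β * ω) :=
    (measure_mono (hE₁ ▸ richPart_subset E F _)).trans hEe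
  have F₁_le : volume F₁ ≤ ENNReal.ofReal (α * ω) :=
    (measure_mono (hF₁ ▸ richPart_subset F E₁ _)).trans hFf
  have half_le : ENNReal.ofReal (α * β * ω / 2) ≤ linInc F E₁ := by
    rw [linInc_comm hF mE₁, hE₁]
    exact ofReal_le_linInc_richPart hE hF (by positivity) (by positivity) hEe ht (by ring)
  have quarter_le : ENNReal.ofReal (α * β * ω / 4) ≤ linInc E₁ F₁ := by
    rw [linInc_comm mE₁ mF₁, hF₁]
    exact ofReal_le_linInc_richPart hF mE₁ (by positivity) (by positivity) hFf half_le (by ring)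
  have eighth_le : ENNReal.ofReal (α * β * ω / 8) ≤ linInc F₁ (richPart E₁ F₁ (α / 8)) := by
    rw [linInc_comm mF₁ mE₂]
    exact ofReal_le_linInc_richPart mE₁ mF₁ (by positivity) (by positivity) E₁_le quarter_le
      (by ring)
  have sixteenth_le := ofReal_le_linInc_richPart (c := β / 16) (t' := α * β * ω / 16) mF₁ mE₂
    (by positivity) (by positivity) F₁_le eighth_le (by ring)
  have nonempty : (richPart F₁ (richPart E₁ F₁ (α / 8)) (β / 16)).Nonempty := by
    refine Set.nonempty_iff_ne_empty.mpr fun h => ?_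
    rw [h, linInc, setLIntegral_empty, nonpos_iff_eq_zero, ENNReal.ofReal_eq_zero] at sixteenth_le
    have : 0 < α * β * ω := by positivity
    linarith
  exact nonempty.imp fun p hp => hp.2

theorem exists_mem_slice_lintegral_volumeForm_le {n : ℕ} [Fact (Module.finrank ℝ V = n)]
    (o : Orientation ℝ V (Fin n)) (hE : MeasurableSet E) (hF : MeasurableSet F) {p : V × ℝ}
    {M : ℝ≥0∞} (hM : volume F ^ n < M * volume (slice E p)) :
    ∃ a ∈ slice E p, ∫⁻ v in Set.univ.pi fun _ : Fin n => slice F (incPt p a),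
      ‖o.volumeForm fun i => v i - p.1‖ₑ ≤ M := by
  by_contra! h
  refine hM.not_ge ?_
  calc M * volume (slice E p)
      ≤ ∫⁻ a in slice E p, ∫⁻ v in Set.univ.pi fun _ : Fin n => slice F (incPt p a),
          ‖o.volumeForm fun i => v i - p.1‖ₑ := by
        rw [← setLIntegral_const]
        exact setLIntegral_mono' (measurableSet_slice hE p) fun a ha => (h a ha).le
    _ ≤ volume F ^ n :=
        (setLIntegral_le_lintegral _ _).trans (lintegral_lintegral_slice_volumeForm_le o hF p)

theorem pow_lt_ofReal_mul {n : ℕ} {X : ℝ} {m m' : ℝ≥0∞} (hα : 0 < α) (hβ : 0 < β) (hω : 0 < ω)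
    (hX : 0 < X) (hm : m ≤ ENNReal.ofReal (α * ω)) (hm' : ENNReal.ofReal (β / 16) ≤ m')
    (hωX : ω ^ n ≤ X * (α * β)) : m ^ n < ENNReal.ofReal (32 * X * α ^ (n + 1)) * m' := by
  have Xαβ_pos : 0 < X * (α * β) := by positivity
  calc m ^ n ≤ ENNReal.ofReal ((α * ω) ^ n) := by
        rw [ENNReal.ofReal_pow (by positivity)]
        gcongr
    _ < ENNReal.ofReal (32 * X * α ^ (n + 1) * (β / 16)) := by
        refine (ENNReal.ofReal_lt_ofReal_iff (by positivity)).mpr ?_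
        calc (α * ω) ^ n = α ^ n * ω ^ n := mul_pow _ _ _
          _ < α ^ n * (2 * (X * (α * β))) := by gcongr; linarith
          _ = 32 * X * α ^ (n + 1) * (β / 16) := by ring
    _ ≤ ENNReal.ofReal (32 * X * α ^ (n + 1)) * m' := by
        rw [ENNReal.ofReal_mul (by positivity)]
        gcongr

theorem exists_box_of_setLIntegral_volumeForm_le {k : ℕ} [Fact (Module.finrank ℝ V = k + 1)]
    (o : Orientation ℝ V (Fin (k + 1))) :
    ∃ C : ℝ, 0 < C ∧ ∀ (S : Set V) (c : V) (Φ : ℝ), volume S ≠ 0 → volume S ≠ ⊤ →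
      ∫⁻ v in Set.univ.pi fun _ => S, ‖o.volumeForm fun i => v i - c‖ₑ ≤ ENNReal.ofReal Φ →
      ∃ (b : OrthonormalBasis (Fin (k + 1)) ℝ V) (σ : Fin (k + 1) → ℝ) (g : ℝ),
        (∀ j, 0 < σ j) ∧ 0 < g ∧ g ≤ volume.real (S ∩ box b c σ) ∧
        volume.real S ^ ((k + 1) ^ 2 + (k + 1) + 1) ≤ C * g * Φ ^ (k + 1) ∧
        g ^ (k + 1) * ∏ j, σ j ≤ C * Φ := by
  obtain ⟨C, C_pos, hC⟩ := exists_box_of_lintegral_volumeForm_le o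
  refine ⟨C, C_pos, fun S c Φ hS₀ hS hΦ => ?_⟩
  have meas_sub : Measurable fun v : V => v - c := measurable_sub_const c
  have : IsFiniteMeasure (volume.restrict S) := isFiniteMeasure_restrict.mpr hS
  set μ := (volume.restrict S).map fun v => v - c with hμ
  have : SigmaFinite μ := inferInstance
  have le_volume : μ ≤ volume := by
    rw [← (measurePreserving_sub_right volume c).map_eq]
    exact Measure.map_mono Measure.restrict_le_self meas_sub
  have ne_zero : μ ≠ 0 := by
    rwa [ne_eq, Measure.map_eq_zero_iff meas_sub.aemeasurable, Measure.restrict_eq_zero]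
  have form_meas : Measurable fun v => ‖o.volumeForm v‖ₑ :=
    (volumeFormL o).cont.enorm.measurable
  have form_le : ∫⁻ v, ‖o.volumeForm v‖ₑ ∂(Measure.pi fun _ => μ) ≤ ENNReal.ofReal Φ := by
    rw [hμ, ← Measure.pi_map_pi fun _ => meas_sub.aemeasurable,
      lintegral_map form_meas (by fun_prop), ← Measure.restrict_pi_pi]
    exact hΦ
  obtain ⟨b, σ, g, σ_pos, g_pos, g_le, univ_le, prod_le⟩ := hC μ Φ le_volume ne_zero form_le
  refine ⟨b, σ, g, σ_pos, g_pos, ?_, ?_, prod_le⟩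
  · rw [hμ, map_measureReal_apply meas_sub (measurableSet_box _ _ _),
      measureReal_restrict_apply (meas_sub (measurableSet_box _ _ _)), Set.inter_comm] at g_le
    simpa [box] using g_le
  · rwa [hμ, map_measureReal_apply meas_sub .univ, Set.preimage_univ,
      measureReal_restrict_apply_univ] at univ_le

theorem box_parameter_bounds {n : ℕ} {X C f g D : ℝ} (hα : 0 < α) (hX : 0 < X) (hC : 0 < C)
    (hD : 0 < D) (hf : α / 16 ≤ f)
    (hfg : f ^ (n ^ 2 + n + 1) ≤ C * g * (32 * X * α ^ (n + 1)) ^ n)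
    (hgD : g ^ n * D ≤ C * (32 * X * α ^ (n + 1))) {K : ℝ}
    (hK : K = C * 32 ^ n * 16 ^ (n ^ 2 + n + 1)) :
    α ≤ K * X ^ n * g ∧ D ≤ K ^ n * (32 * C) * X ^ (n ^ 2 + 1) * α := by
  have K_pos : 0 < K := by rw [hK]; positivity
  have α_le : α ≤ K * X ^ n * g := by
    refine le_of_mul_le_mul_right ?_ (show 0 < α ^ (n ^ 2 + n) by positivity)
    calc α * α ^ (n ^ 2 + n) = 16 ^ (n ^ 2 + n + 1) * (α / 16) ^ (n ^ 2 + n + 1) := by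
          rw [← mul_pow]; ring
      _ ≤ 16 ^ (n ^ 2 + n + 1) * (C * g * (32 * X * α ^ (n + 1)) ^ n) := by
          gcongr
          exact (pow_le_pow_left₀ (by positivity) hf _).trans hfg
      _ = K * X ^ n * g * α ^ (n ^ 2 + n) := by rw [hK]; ring
  refine ⟨α_le, le_of_mul_le_mul_right ?_ (show 0 < α ^ n by positivity)⟩
  calc D * α ^ n ≤ D * (K * X ^ n * g) ^ n := by gcongr
    _ = K ^ n * X ^ n ^ 2 * (g ^ n * D) := by ring
    _ ≤ K ^ n * X ^ n ^ 2 * (C * (32 * X * α ^ (n + 1))) := by gcongr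
    _ = K ^ n * (32 * C) * X ^ (n ^ 2 + 1) * α * α ^ n := by ring

variable (V) in
theorem exists_box_subset_rich (k : ℕ) [Fact (Module.finrank ℝ V = k + 1)] :
    ∃ K : ℝ, 1 ≤ K ∧ ∀ (E F : Set (V × ℝ)) (α β ω X : ℝ), MeasurableSet E → MeasurableSet F →
      0 < α → 0 < β → 0 < ω → 0 < X → volume E ≤ ENNReal.ofReal (β * ω) →
      volume F ≤ ENNReal.ofReal (α * ω) → ENNReal.ofReal (α * β * ω) ≤ linInc E F →
      ω ^ (k + 1) ≤ X * (α * β) →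
      ∃ (b : OrthonormalBasis (Fin (k + 1)) ℝ V) (σ : Fin (k + 1) → ℝ) (h : V × ℝ) (c : V)
        (s : ℝ), (∀ j, 0 < σ j) ∧ 0 < s ∧
        ENNReal.ofReal s ≤ volume {y ∈ box b c σ |
          ENNReal.ofReal (β / 4) ≤ volume (slice (richPart E F (α / 2)) (incPt h y))} ∧
        α ≤ K * X ^ (k + 1) * s ∧ ∏ j, σ j ≤ K * X ^ ((k + 1) ^ 2 + 1) * α := by
  have o : Orientation ℝ V (Fin (k + 1)) :=
    ((stdOrthonormalBasis ℝ V).reindex (finCongr Fact.out)).toBasis.orientation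
  obtain ⟨C, C_pos, hC⟩ := exists_box_of_setLIntegral_volumeForm_le o
  set K := C * 32 ^ (k + 1) * 16 ^ ((k + 1) ^ 2 + (k + 1) + 1) with hK
  refine ⟨1 + K + K ^ (k + 1) * (32 * C), ?_, ?_⟩
  · have : 0 ≤ K + K ^ (k + 1) * (32 * C) := by positivity
    linarith
  intro E F α β ω X hE hF hα hβ hω hX hEe hFf ht hωX
  set E₁ := richPart E F (α / 2) with hE₁
  set F₁ := richPart F E₁ (β / 4) with hF₁
  have mE₁ : MeasurableSet E₁ := measurableSet_richPart hE hF _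
  have mF₁ : MeasurableSet F₁ := measurableSet_richPart hF mE₁ _
  obtain ⟨p, hp⟩ := exists_le_volume_slice_richPart hE hF hα hβ hω hEe hFf ht hE₁ hF₁
  obtain ⟨a, ha, form_le⟩ := exists_mem_slice_lintegral_volumeForm_le o
    (measurableSet_richPart mE₁ mF₁ (α / 8)) mF₁ (pow_lt_ofReal_mul hα hβ hω hX
      ((measure_mono (richPart_subset F E₁ _)).trans hFf) hp hωX)
  obtain ⟨S, -, S_sub, S_gt, S_lt⟩ := Measure.exists_subset_measure_lt_top
    (measurableSet_slice mF₁ (incPt p a)) (r := ENNReal.ofReal (α / 16))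
    (lt_of_lt_of_le (by rw [ENNReal.ofReal_lt_ofReal_iff (by positivity)]; linarith) ha.2)
  obtain ⟨b, σ, g, σ_pos, g_pos, g_le, univ_le, prod_le⟩ := hC S p.1 _ (pos_of_gt S_gt).ne'
    S_lt.ne ((lintegral_mono_set (Set.pi_mono fun _ _ => S_sub)).trans form_le)
  obtain ⟨α_le, D_le⟩ := box_parameter_bounds hα hX C_pos
    (Finset.prod_pos fun j _ => σ_pos j) ((ENNReal.ofReal_le_iff_le_toReal S_lt.ne).mp S_gt.le)
    univ_le prod_le hK
  refine ⟨b, σ, incPt p a, p.1, g, σ_pos, g_pos, ?_, α_le.trans ?_, D_le.trans ?_⟩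
  · refine (ENNReal.ofReal_le_ofReal g_le).trans ?_
    rw [ofReal_measureReal (measure_ne_top_of_subset Set.inter_subset_left S_lt.ne)]
    exact measure_mono fun y hy => ⟨hy.2, (S_sub hy.1).2⟩
  · have : 0 ≤ K ^ (k + 1) * (32 * C) := by positivity
    gcongr
    linarith
  · have : 0 ≤ K := by positivity
    gcongr
    linarith

end RichPart

section Localization

theorem ofReal_sub_le_measure_inter {Y : Type*} [MeasurableSpace Y] {μ : Measure Y} {A W : Set Y}
    {p q : ℝ} (hq : 0 ≤ q) (hA : ENNReal.ofReal p ≤ μ A) (hW : μ (A \ W) ≤ ENNReal.ofReal q) :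
    ENNReal.ofReal (p - q) ≤ μ (A ∩ W) := by
  rw [ENNReal.ofReal_sub _ hq, tsub_le_iff_right]
  exact hA.trans ((measure_le_inter_add_sdiff μ A W).trans (by gcongr))

theorem ofReal_sub_le_measure_lt {Y : Type*} [MeasurableSpace Y] {μ : Measure Y} {S : Set Y}
    {φ : Y → ℝ≥0∞} (hφ : Measurable φ) {s m c : ℝ} (hc : 0 < c) (hm : 0 ≤ m)
    (hs : ENNReal.ofReal s ≤ μ S) (hS : ∫⁻ y in S, φ y ∂μ ≤ ENNReal.ofReal (c * m)) :
    ENNReal.ofReal (s - m) ≤ μ {y ∈ S | φ y < ENNReal.ofReal c} := by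
  refine ofReal_sub_le_measure_inter hm hs (W := {y | φ y < ENNReal.ofReal c}) ?_
  have markov := (mul_meas_ge_le_lintegral (μ := μ.restrict S) hφ (ENNReal.ofReal c)).trans hS
  rw [Measure.restrict_apply (measurableSet_le measurable_const hφ), ENNReal.ofReal_mul hc.le,
    ENNReal.mul_le_mul_iff_right (ENNReal.ofReal_pos.mpr hc).ne' ENNReal.ofReal_ne_top] at markov
  refine (measure_mono ?_).trans markov
  exact fun y ⟨hyS, hy⟩ => ⟨show _ ≤ φ y from le_of_not_gt hy, hyS⟩

variable {V : Type*} [NormedAddCommGroup V] [InnerProductSpace ℝ V] {n : ℕ}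

/-- The projection to the first factor of the ball of the incidence manifold whose centre has
components above `c` and at `q`. -/
def linBall (b : OrthonormalBasis (Fin n) ℝ V) (c : V) (q : V × ℝ) (r : Fin n → ℝ) (ρ : ℝ) :
    Set (V × ℝ) :=
  {h | h.1 ∈ box b c r ∧ |(incPt h q.1).2 - q.2| < ρ}

theorem linBall_mono {b : OrthonormalBasis (Fin n) ℝ V} {c : V} {q : V × ℝ} {r : Fin n → ℝ}
    {ρ ρ' : ℝ} (hρ : ρ ≤ ρ') : linBall b c q r ρ ⊆ linBall b c q r ρ' :=
  fun _ hh => ⟨hh.1, hh.2.trans_le hρ⟩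

theorem incPt_incPt_mem_linBall {b : OrthonormalBasis (Fin n) ℝ V} {σ : Fin n → ℝ}
    (hσ : ∀ j, 0 < σ j) {h : V × ℝ} {a y y₀ : V} {l : ℝ} (hl : 0 < l)
    (ha : a ∈ box b h.1 fun j => l / σ j) (hy : y ∈ box b y₀ σ) :
    incPt (incPt h y) a ∈
      linBall b h.1 (incPt h y₀) (fun j => l / σ j) ((2 * n + 1) * l) := by
  have inner_le : |⟪a - h.1, y - y₀⟫| ≤ n * l := by
    simpa using abs_inner_sub_le_of_mem_box ha hy fun j => (div_mul_cancel₀ l (hσ j).ne').le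
  have height : (incPt (incPt (incPt h y) a) y₀).2 - (incPt h y₀).2 =
      -(2 * ⟪a - h.1, y - y₀⟫) := by
    simp only [incPt, inner_sub_left, inner_sub_right, real_inner_comm a y]
    ring
  refine ⟨ha, ?_⟩
  change |(incPt (incPt (incPt h y) a) y₀).2 - (incPt h y₀).2| < _
  rw [height, abs_neg, abs_mul, abs_two]
  linarith

theorem mem_box_of_mem_box_of_mem_box {b : OrthonormalBasis (Fin n) ℝ V} {u v w : V}
    {r s t : Fin n → ℝ} (hu : u ∈ box b v r) (hv : v ∈ box b w s) (hrst : ∀ j, r j + s j ≤ t j) :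
    u ∈ box b w t := fun j => by
  rw [← sub_add_sub_cancel u v w, inner_add_right]
  exact (abs_add_le _ _).trans_lt ((add_lt_add (hu j) (hv j)).trans_le (hrst j))

variable [MeasurableSpace V] [BorelSpace V] [FiniteDimensional ℝ V]

theorem measurableSet_linBall (b : OrthonormalBasis (Fin n) ℝ V) (c : V) (q : V × ℝ)
    (r : Fin n → ℝ) (ρ : ℝ) : MeasurableSet (linBall b c q r ρ) := by
  have height_meas : Measurable fun h : V × ℝ => |(incPt h q.1).2 - q.2| := by
    unfold incPt
    fun_prop
  exact (measurable_fst (measurableSet_box b c r)).inter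
    (measurableSet_lt height_meas measurable_const)

theorem volume_linBall (b : OrthonormalBasis (Fin n) ℝ V) (c : V) (q : V × ℝ) {r : Fin n → ℝ}
    (hr : ∀ j, 0 < r j) {ρ : ℝ} :
    volume (linBall b c q r ρ) = ENNReal.ofReal (2 ^ n * ∏ j, r j) * ENNReal.ofReal (2 * ρ) := by
  have fibre (v : V) : volume (Prod.mk v ⁻¹' linBall b c q r ρ) =
      (box b c r).indicator (fun _ => ENNReal.ofReal (2 * ρ)) v := by
    by_cases hv : v ∈ box b c r
    · have : Prod.mk v ⁻¹' linBall b c q r ρ = Metric.ball (2 * ⟪v, q.1⟫ - q.2) ρ := by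
        ext z
        simp only [linBall, incPt, Set.mem_preimage, Set.mem_ofPred_eq, hv, true_and,
          Metric.mem_ball, Real.dist_eq]
        rw [sub_right_comm, abs_sub_comm]
      rw [this, Real.volume_ball, Set.indicator_of_mem hv]
    · simp [Set.preimage, linBall, hv]
  rw [Measure.volume_eq_prod, Measure.prod_apply (measurableSet_linBall b c q r ρ)]
  simp_rw [fibre]
  rw [lintegral_indicator_const (measurableSet_box b c r), volume_box b c hr, Fintype.card_fin,
    mul_comm]

theorem measurable_volume_slice_diff {E : Set (V × ℝ)} (hE : MeasurableSet E) {W : Set V}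
    (hW : MeasurableSet W) (h : V × ℝ) :
    Measurable fun y => volume (slice E (incPt h y) \ W) :=
  (measurable_volume_slice (hE.diff (measurable_fst hW))).comp (measurable_incPt_right h)

theorem ofReal_half_le_volume_setOf_slice_diff_box_lt (b : OrthonormalBasis (Fin n) ℝ V)
    {σ : Fin n → ℝ} (hσ : ∀ j, 0 < σ j) {E : Set (V × ℝ)} (hE : MeasurableSet E) {e s l c : ℝ}
    (hEe : volume E ≤ ENNReal.ofReal e) (h : V × ℝ) {y₀ : V} {S : Set V}
    (hS : S ⊆ box b y₀ σ) (hs : 0 ≤ s) (hsS : ENNReal.ofReal s ≤ volume S) (hl : 0 < l) (hc : 0 < c)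
    (hlcs : 2 ^ n * (∏ j, σ j) * e * 2 ≤ l * c * s) :
    ENNReal.ofReal (s / 2) ≤ volume {y ∈ S |
      volume (slice E (incPt h y) \ box b h.1 fun j => l / σ j) < ENNReal.ofReal c} := by
  have D_pos : 0 < ∏ j, σ j := Finset.prod_pos fun j _ => hσ j
  rw [← sub_half s]
  refine ofReal_sub_le_measure_lt (measurable_volume_slice_diff hE (measurableSet_box b _ _) h) hc
    (by positivity) hsS ((lintegral_mono_set hS).trans ?_)
  rw [← ENNReal.mul_le_mul_iff_right (ENNReal.ofReal_pos.mpr hl).ne' ENNReal.ofReal_ne_top,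
    ← ENNReal.ofReal_mul hl.le]
  calc _ ≤ volume (box b y₀ σ) * volume E := mul_lintegral_volume_slice_diff_box_le b y₀ hσ hE h hl
    _ ≤ ENNReal.ofReal (2 ^ n * (∏ j, σ j)) * ENNReal.ofReal e := by
        rw [volume_box b y₀ hσ, Fintype.card_fin]
        gcongr
    _ = ENNReal.ofReal (2 ^ n * (∏ j, σ j) * e) := (ENNReal.ofReal_mul (by positivity)).symm
    _ ≤ ENNReal.ofReal (l * (c * (s / 2))) := ENNReal.ofReal_le_ofReal (by linarith)

theorem ofReal_mul_volume_le_volume_box_mul (b : OrthonormalBasis (Fin n) ℝ V)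
    {σ : Fin n → ℝ} (hσ : ∀ j, 0 < σ j) {E : Set (V × ℝ)} (hE : MeasurableSet E) (h : V × ℝ)
    {y₀ : V} {T : Set V} (hT : T ⊆ box b y₀ σ) {γ l : ℝ} (hγ : 0 ≤ γ) (hl : 0 < l)
    (hTγ : ∀ y ∈ T, ENNReal.ofReal (2 * γ) ≤ volume (slice E (incPt h y)))
    (hlγ : 2 ^ n * l ^ n ≤ (∏ j, σ j) * γ) :
    ENNReal.ofReal (l * γ) * volume T ≤ volume (box b y₀ σ) * volume E := by
  set W := box b h.1 fun j => l / σ j with hW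
  have W_le : volume W ≤ ENNReal.ofReal γ := by
    rw [hW, volume_box b _ fun j => div_pos hl (hσ j), Fintype.card_fin, Finset.prod_div_distrib,
      Finset.prod_const, Finset.card_fin]
    refine ENNReal.ofReal_le_ofReal ?_
    rwa [← mul_div_assoc, div_le_iff₀' (Finset.prod_pos fun j _ => hσ j)]
  have le_diff : ∀ y ∈ T, ENNReal.ofReal γ ≤ volume (slice E (incPt h y) \ W) := fun y hy => by
    have := ofReal_sub_le_measure_inter (W := Wᶜ) hγ (hTγ y hy)
      ((measure_mono fun a ha => not_not.mp ha.2).trans W_le)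
    rwa [two_mul, add_sub_cancel_right] at this
  refine le_trans ?_ (mul_lintegral_volume_slice_diff_box_le b y₀ hσ hE h hl)
  rw [ENNReal.ofReal_mul hl.le, mul_assoc]
  gcongr
  calc ENNReal.ofReal γ * volume T = ∫⁻ _ in T, ENNReal.ofReal γ := (setLIntegral_const _ _).symm
    _ ≤ ∫⁻ y in T, volume (slice E (incPt h y) \ W) := setLIntegral_mono
        (measurable_volume_slice_diff hE (measurableSet_box b _ _) h) le_diff
    _ ≤ _ := lintegral_mono_set hT

theorem ofReal_le_volume_slice_richPart_inter (b : OrthonormalBasis (Fin n) ℝ V)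
    {σ : Fin n → ℝ} (hσ : ∀ j, 0 < σ j) {E F : Set (V × ℝ)} (hF : MeasurableSet F)
    {f α β l l₂ K : ℝ} (hα : 0 < α) (hβ : 0 < β) (hFf : volume F ≤ ENNReal.ofReal f)
    (hl : 0 < l) (hl₂ : 0 < l₂) (hlf : 64 * 2 ^ n * l ^ n * f ≤ (∏ j, σ j) * l₂ * α * β)
    (hK : l₂ + l ≤ K * l) {h : V × ℝ} {y y₀ : V} (hy : y ∈ box b y₀ σ)
    (hβy : ENNReal.ofReal (β / 4) ≤ volume (slice (richPart E F (α / 2)) (incPt h y)))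
    (hdiff : volume (slice (richPart E F (α / 2)) (incPt h y) \ box b h.1 fun j => l / σ j) <
      ENNReal.ofReal (β / 8)) :
    ENNReal.ofReal (β / 16) ≤ volume (slice (richPart
      (E ∩ linBall b h.1 (incPt h y₀) (fun j => l / σ j) ((2 * n + 1) * l))
      (F ∩ Prod.fst ⁻¹' box b y₀ fun j => K * σ j) (α / 4)) (incPt h y)) := by
  have D_pos : 0 < ∏ j, σ j := Finset.prod_pos fun j _ => hσ j
  set p := incPt h y
  have inter_ge := ofReal_sub_le_measure_inter (by positivity) hβy hdiff.le
  have half_ge := ofReal_half_le_volume_setOf_slice_diff_box_lt b (c := α / 4)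
    (fun j => div_pos hl (hσ j)) hF hFf p Set.inter_subset_right (by linarith) inter_ge hl₂
    (by positivity) (by
      simp only [Finset.prod_div_distrib, Finset.prod_const, Finset.card_fin]
      rw [← mul_div_assoc, div_mul_eq_mul_div, div_mul_eq_mul_div, div_le_iff₀ D_pos]
      linarith)
  refine le_trans (ENNReal.ofReal_le_ofReal (by linarith)) (half_ge.trans (measure_mono ?_))
  rintro a ⟨⟨haE, ha⟩, ha_diff⟩
  refine ⟨⟨haE.1, incPt_incPt_mem_linBall hσ hl ha hy⟩, ?_⟩
  refine le_trans (ENNReal.ofReal_le_ofReal (by linarith))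
    ((ofReal_sub_le_measure_inter (by positivity) haE.2 ha_diff.le).trans (measure_mono ?_))
  refine fun v hv => ⟨hv.1, mem_box_of_mem_box_of_mem_box hv.2 hy fun j => ?_⟩
  rw [div_div_eq_mul_div, div_add' _ _ _ hl.ne', div_le_iff₀ hl]
  nlinarith [hσ j]

theorem ofReal_le_linInc_inter_box (b : OrthonormalBasis (Fin n) ℝ V) {σ : Fin n → ℝ}
    (hσ : ∀ j, 0 < σ j) {E F : Set (V × ℝ)} (hE : MeasurableSet E) (hF : MeasurableSet F)
    {e f α β s l l₂ l' K D : ℝ} (hα : 0 < α) (hβ : 0 < β) (hs : 0 ≤ s)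
    (hEe : volume E ≤ ENNReal.ofReal e) (hFf : volume F ≤ ENNReal.ofReal f) {h : V × ℝ} {y₀ : V}
    (hsS : ENNReal.ofReal s ≤ volume {y ∈ box b y₀ σ |
      ENNReal.ofReal (β / 4) ≤ volume (slice (richPart E F (α / 2)) (incPt h y))})
    (hD : D = ∏ j, σ j) (hl : 0 < l) (hl₂ : 0 < l₂) (hl' : 0 < l')
    (hle : 16 * 2 ^ n * D * e ≤ l * s * β) (hlf : 64 * 2 ^ n * l ^ n * f ≤ D * l₂ * α * β)
    (hK : l₂ + l ≤ K * l) (hl'β : 32 * 2 ^ n * l' ^ n ≤ D * β) :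
    ENNReal.ofReal (α * β * (l' * s) / (256 * 2 ^ n * D)) ≤
      linInc (E ∩ linBall b h.1 (incPt h y₀) (fun j => l / σ j) ((2 * n + 1) * l))
        (F ∩ Prod.fst ⁻¹' box b y₀ fun j => K * σ j) := by
  subst hD
  have D_pos : 0 < ∏ j, σ j := Finset.prod_pos fun j _ => hσ j
  set E' := E ∩ linBall b h.1 (incPt h y₀) (fun j => l / σ j) ((2 * n + 1) * l)
  set F' := F ∩ Prod.fst ⁻¹' box b y₀ fun j => K * σ j
  have mE₃ : MeasurableSet (richPart E' F' (α / 4)) := measurableSet_richPart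
    (hE.inter (measurableSet_linBall ..)) (hF.inter (measurable_fst (measurableSet_box ..))) _
  have half_ge := ofReal_half_le_volume_setOf_slice_diff_box_lt b hσ (c := β / 8)
    (measurableSet_richPart hE hF (α / 2)) ((measure_mono (richPart_subset E F _)).trans hEe) h
    (Set.sep_subset _ _) hs hsS hl (by positivity) (by linarith)
  have volume_ge := ofReal_mul_volume_le_volume_box_mul b hσ mE₃ h (γ := β / 32) (l := l')
    ((Set.sep_subset _ _).trans (Set.sep_subset _ _)) (by positivity) hl'
    (fun y hy => (ENNReal.ofReal_le_ofReal (by linarith)).trans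
      (ofReal_le_volume_slice_richPart_inter b hσ hF hα hβ hFf hl hl₂ hlf hK hy.1.1 hy.1.2 hy.2))
    (by linarith)
  rw [volume_box b y₀ hσ, Fintype.card_fin] at volume_ge
  have rich_le : ENNReal.ofReal (α / 4) * volume (richPart E' F' (α / 4)) ≤ linInc E' F' := by
    rw [← setLIntegral_const]
    exact (setLIntegral_mono' mE₃ fun q hq => hq.2).trans
      (lintegral_mono_set (richPart_subset _ _ _))
  calc _ = ENNReal.ofReal (α / 4) *
        ENNReal.ofReal (l' * (β / 32) * (s / 2) / (2 ^ n * ∏ j, σ j)) := by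
        rw [← ENNReal.ofReal_mul (by positivity)]
        congr 1
        ring
    _ ≤ ENNReal.ofReal (α / 4) * volume (richPart E' F' (α / 4)) := by
        gcongr
        rw [ENNReal.ofReal_div_of_pos (by positivity), ENNReal.ofReal_mul (by positivity)]
        exact ENNReal.div_le_of_le_mul' (le_trans (by gcongr) volume_ge)
    _ ≤ _ := rich_le

end Localization

section Pigeonhole

theorem exists_measure_le_card_mul {Q κ : Type*} [MeasurableSpace Q] (μ : Measure Q) {G : Set Q}
    {f : Q → κ} {cells : Finset κ} (hne : cells.Nonempty) (hf : Set.MapsTo f G cells) :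
    ∃ c, μ G ≤ cells.card * μ (G ∩ f ⁻¹' {c}) := by
  obtain ⟨c, -, c_max⟩ := cells.exists_max_image (fun c => μ (G ∩ f ⁻¹' {c})) hne
  refine ⟨c, ?_⟩
  calc μ G ≤ μ (⋃ c ∈ cells, G ∩ f ⁻¹' {c}) :=
        measure_mono fun q hq => Set.mem_biUnion (hf hq) ⟨hq, rfl⟩
    _ ≤ ∑ c' ∈ cells, μ (G ∩ f ⁻¹' {c'}) := measure_biUnion_finset_le _ _
    _ ≤ cells.card • μ (G ∩ f ⁻¹' {c}) := Finset.sum_le_card_nsmul _ _ _ c_max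
    _ = cells.card * μ (G ∩ f ⁻¹' {c}) := nsmul_eq_mul _ _

theorem card_Icc_neg_ceil_le {x : ℝ} (hx : 0 ≤ x) :
    ((Finset.Icc (-⌈x⌉) ⌈x⌉).card : ℝ) ≤ 2 * x + 3 := by
  have ceil_nonneg : 0 ≤ ⌈x⌉ := Int.ceil_nonneg hx
  have card_eq : ((⌈x⌉ + 1 - -⌈x⌉).toNat : ℤ) = 2 * ⌈x⌉ + 1 := by omega
  rw [Int.card_Icc, ← Int.cast_natCast, card_eq]
  push_cast
  linarith [Int.ceil_lt_add_one x]

theorem exists_subset_forall_abs_sub_lt {Q ι : Type*} [MeasurableSpace Q] [Fintype ι]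
    (μ : Measure Q) {G : Set Q} {X : Q → ι → ℝ} {R κ : ℝ} (hκ : 0 < κ) (hR : 0 ≤ R)
    (hX : ∀ q ∈ G, ∀ i, |X q i| ≤ R) :
    ∃ G' ⊆ G, μ G ≤ ENNReal.ofReal ((2 * (R / κ) + 3) ^ Fintype.card ι) * μ G' ∧
      ∀ q ∈ G', ∀ q' ∈ G', ∀ i, |X q i - X q' i| < κ := by
  classical
  set m : ℤ := ⌈R / κ⌉ with hm
  have m_nonneg : 0 ≤ m := Int.ceil_nonneg (by positivity)
  set f : Q → ι → ℤ := fun q i => ⌊X q i / κ⌋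
  have maps : Set.MapsTo f G
      (Fintype.piFinset fun _ : ι => Finset.Icc (-m) m : Finset (ι → ℤ)) := fun q hq => by
    refine Finset.mem_coe.mpr (Fintype.mem_piFinset.mpr fun i => ?_)
    have abs_le_m : |X q i / κ| ≤ m := by
      rw [abs_div, abs_of_pos hκ]
      exact (div_le_div_of_nonneg_right (hX q hq i) hκ.le).trans (Int.le_ceil _)
    refine Finset.mem_Icc.mpr ⟨Int.le_floor.mpr ?_, ?_⟩
    · exact_mod_cast (abs_le.mp abs_le_m).1
    · exact_mod_cast (Int.floor_le _).trans (abs_le.mp abs_le_m).2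
  obtain ⟨c, hc⟩ := exists_measure_le_card_mul μ (Fintype.piFinset_nonempty.mpr fun _ =>
    Finset.nonempty_Icc.mpr (by linarith)) maps
  refine ⟨G ∩ f ⁻¹' {c}, Set.inter_subset_left, hc.trans ?_, fun q hq q' hq' i => ?_⟩
  · rw [← ENNReal.ofReal_natCast, Fintype.card_piFinset, Finset.prod_const, Finset.card_univ,
      Nat.cast_pow]
    gcongr
    exact card_Icc_neg_ceil_le (by positivity)
  · have floor_eq : ⌊X q i / κ⌋ = ⌊X q' i / κ⌋ := (congrFun hq.2 i).trans (congrFun hq'.2 i).symm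
    have := Int.abs_sub_lt_one_of_floor_eq_floor floor_eq
    rwa [← sub_div, abs_div, abs_of_pos hκ, div_lt_one hκ] at this

variable {V : Type*} [NormedAddCommGroup V] [InnerProductSpace ℝ V] {n : ℕ}

theorem abs_incPt_snd_sub_incPt_snd_lt {b : OrthonormalBasis (Fin n) ℝ V} {r t : Fin n → ℝ}
    {ρ κ : ℝ} (hrt : ∀ j, r j * t j = ρ) {h h' : V × ℝ} {w y₀ : V}
    (hh : h.1 ∈ box b h'.1 fun j => κ * r j)
    (hy : |(incPt h y₀).2 - (incPt h' y₀).2| < κ * ρ) (hw : w ∈ box b y₀ t) :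
    |(incPt h w).2 - (incPt h' w).2| < (2 * n + 1) * κ * ρ := by
  have inner_le : |⟪h.1 - h'.1, w - y₀⟫| ≤ n * (κ * ρ) := by
    simpa using abs_inner_sub_le_of_mem_box hh hw (ρ := κ * ρ) fun j => by rw [mul_assoc, hrt]
  have height : (incPt h w).2 - (incPt h' w).2 =
      2 * ⟪h.1 - h'.1, w - y₀⟫ + ((incPt h y₀).2 - (incPt h' y₀).2) := by
    simp only [incPt, inner_sub_left, inner_sub_right]
    ring
  rw [height]
  refine (abs_add_le _ _).trans_lt ?_
  rw [abs_mul, abs_two]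
  linarith

variable [MeasurableSpace V] [BorelSpace V] [FiniteDimensional ℝ V]

theorem exists_subset_incPairs_forall_mem_box (b : OrthonormalBasis (Fin n) ℝ V)
    {r t : Fin n → ℝ} (hr : ∀ j, 0 < r j) (ht : ∀ j, 0 < t j) {ρ κ R : ℝ} (hρ : 0 < ρ)
    (hκ : 0 < κ) (hR : 1 ≤ R) {E F : Set (V × ℝ)} {c : V} {q : V × ℝ}
    (hE : E ⊆ linBall b c q r (R * ρ)) (hF : F ⊆ Prod.fst ⁻¹' box b q.1 t) :
    ∃ G ⊆ incPairs E F, volume (incPairs E F) ≤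
        ENNReal.ofReal ((2 * (R / κ) + 3) ^ (2 * n + 1)) * volume G ∧
      ∀ z ∈ G, ∀ z' ∈ G, z.1.1 ∈ box b z'.1.1 (fun j => κ * r j) ∧
        z.2 ∈ box b z'.2 (fun j => κ * t j) ∧
        |(incPt z.1 q.1).2 - (incPt z'.1 q.1).2| < κ * ρ := by
  have abs_div_le {x y : ℝ} (hy : 0 < y) (hxy : |x| < R * y) : |x / y| ≤ R := by
    rw [abs_div, abs_of_pos hy, div_le_iff₀ hy]
    exact hxy.le
  have abs_sub_lt {x x' y : ℝ} (hy : 0 < y) (hxy : |x / y - x' / y| < κ) : |x - x'| < κ * y := by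
    rwa [← sub_div, abs_div, abs_of_pos hy, div_lt_iff₀ hy] at hxy
  let X : (V × ℝ) × V → (Fin n ⊕ Fin n) ⊕ Unit → ℝ := fun z => Sum.elim
    (Sum.elim (fun j => ⟪b j, z.1.1 - c⟫ / r j) fun j => ⟪b j, z.2 - q.1⟫ / t j)
    fun _ => ((incPt z.1 q.1).2 - q.2) / ρ
  obtain ⟨G, G_sub, G_le, hG⟩ := exists_subset_forall_abs_sub_lt volume (G := incPairs E F) (X := X)
    hκ (zero_le_one.trans hR) <| by
      rintro z ⟨hzE, hzF⟩ ((j | j) | _)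
      · exact abs_div_le (hr j) (((hE hzE).1 j).trans_le (le_mul_of_one_le_left (hr j).le hR))
      · exact abs_div_le (ht j) ((hF hzF j).trans_le (le_mul_of_one_le_left (ht j).le hR))
      · exact abs_div_le hρ (hE hzE).2
  refine ⟨G, G_sub, ?_, fun z hz z' hz' => ⟨fun j => ?_, fun j => ?_, ?_⟩⟩
  · convert G_le using 3
    simp
    ring
  · have := abs_sub_lt (hr j) (hG z hz z' hz' (.inl (.inl j)))
    rwa [← inner_sub_right, sub_sub_sub_cancel_right] at this
  · have := abs_sub_lt (ht j) (hG z hz z' hz' (.inl (.inr j)))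
    rwa [← inner_sub_right, sub_sub_sub_cancel_right] at this
  · have := abs_sub_lt hρ (hG z hz z' hz' (.inr ()))
    rwa [sub_sub_sub_cancel_right] at this

theorem exists_linInc_le_mul_linInc_inter_linBall (b : OrthonormalBasis (Fin n) ℝ V)
    {r t : Fin n → ℝ} (hr : ∀ j, 0 < r j) (ht : ∀ j, 0 < t j) {ρ θ : ℝ} (hρ : 0 < ρ)
    (hrt : ∀ j, r j * t j = ρ) (hθ : 0 < θ) (hθ_le : θ ≤ 1) {E F : Set (V × ℝ)}
    (mE : MeasurableSet E) (mF : MeasurableSet F) {c : V} {q : V × ℝ}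
    (hE : E ⊆ linBall b c q r ((2 * n + 1) * ρ)) (hF : F ⊆ Prod.fst ⁻¹' box b q.1 t)
    (hEF : linInc E F ≠ 0) :
    ∃ (h : V × ℝ) (v : V), linInc E F ≤
      ENNReal.ofReal ((2 * ((2 * n + 1) ^ 2 / θ ^ 2) + 3) ^ (2 * n + 1)) *
        linInc (E ∩ linBall b h.1 (incPt h v) (fun j => θ * r j) (θ ^ 2 * ρ))
          (F ∩ linBall b v h (fun j => θ * t j) (θ ^ 2 * ρ)) := by
  set κ := θ ^ 2 / (2 * n + 1) with hκ
  have κ_pos : 0 < κ := by positivity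
  have κ_le : κ ≤ θ := by
    rw [hκ, div_le_iff₀ (by positivity), sq]
    have : 0 ≤ θ * (2 * n) := by positivity
    nlinarith
  have mul_κ : (2 * n + 1) * κ = θ ^ 2 := by rw [hκ]; field_simp
  obtain ⟨G, G_sub, G_le, hG⟩ := exists_subset_incPairs_forall_mem_box b hr ht hρ κ_pos
    (by linarith [show (0 : ℝ) ≤ n by positivity]) hE hF
  rw [volume_incPairs mE mF] at G_le
  obtain ⟨⟨h, v⟩, hvG⟩ : G.Nonempty := by
    refine Set.nonempty_iff_ne_empty.mpr fun hG₀ => hEF ?_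
    rwa [hG₀, measure_empty, mul_zero, nonpos_iff_eq_zero] at G_le
  refine ⟨h, v, G_le.trans ?_⟩
  rw [← volume_incPairs (mE.inter (measurableSet_linBall ..)) (mF.inter (measurableSet_linBall ..)),
    show (2 * n + 1) / κ = (2 * n + 1) ^ 2 / θ ^ 2 by
      rw [hκ, div_div_eq_mul_div, ← sq]]
  gcongr
  intro z hz
  obtain ⟨hzE, hzF⟩ := G_sub hz
  obtain ⟨h_mem, v_mem, height_lt⟩ := hG z hz _ hvG
  have height (w : V) (hw : w ∈ box b q.1 t) : |(incPt z.1 w).2 - (incPt h w).2| < θ ^ 2 * ρ :=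
    mul_κ ▸ abs_incPt_snd_sub_incPt_snd_lt hrt h_mem height_lt hw
  refine ⟨⟨hzE, fun j => (h_mem j).trans_le ?_, height v (hF (G_sub hvG).2)⟩, hzF,
    fun j => (v_mem j).trans_le ?_, ?_⟩
  · exact mul_le_mul_of_nonneg_right κ_le (hr j).le
  · exact mul_le_mul_of_nonneg_right κ_le (ht j).le
  · have := height z.2 (hF hzF)
    rw [abs_sub_comm] at this
    convert this using 2
    simp only [incPt, real_inner_comm h.1 z.2]
    ring

end Pigeonhole

section Parameters

variable {n : ℕ} {α β ω s D X : ℝ}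

theorem le_sq_mul_of_le_mul (hX : 0 ≤ X) (hα : α ≤ X * s) (hD : D ≤ X * α) : D ≤ X ^ 2 * s := by
  calc D ≤ X * (X * s) := hD.trans (by gcongr)
    _ = X ^ 2 * s := by ring

theorem pow_le_two_pow_mul_sq_mul (hX : 0 ≤ X) (hβ : 0 ≤ β) (hα : α ≤ X * s)
    (hs : s ≤ 2 ^ n * D) (hω : ω ^ n ≤ X * (α * β)) : ω ^ n ≤ 2 ^ n * X ^ 2 * (D * β) := by
  calc ω ^ n ≤ X * (X * (2 ^ n * D) * β) := hω.trans (by gcongr; exact hα.trans (by gcongr))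
    _ = 2 ^ n * X ^ 2 * (D * β) := by ring

theorem two_pow_mul_le_scale_mul (hβ : 0 ≤ β) (hω : 0 ≤ ω) (hD : 0 ≤ D) (hX : 16 * 2 ^ n ≤ X)
    (hDs : D ≤ X ^ 2 * s) : 16 * 2 ^ n * D * (β * ω) ≤ X ^ 3 * ω * s * β := by
  have X_pos : 0 < X := lt_of_lt_of_le (by positivity) hX
  calc 16 * 2 ^ n * D * (β * ω) ≤ X * (X ^ 2 * s) * (β * ω) := by gcongr
    _ = X ^ 3 * ω * s * β := by ring

theorem two_pow_mul_scale_pow_le (hα : 0 ≤ α) (hβ : 0 ≤ β) (hω : 0 ≤ ω) (hD : 0 ≤ D)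
    (hX : 64 * 4 ^ n ≤ X) (hωD : ω ^ n ≤ 2 ^ n * X ^ 2 * (D * β)) :
    64 * 2 ^ n * (X ^ 3 * ω) ^ n * (α * ω) ≤ D * (X ^ (3 * n) * (X ^ 3 * ω)) * α * β := by
  have X_pos : 0 < X := lt_of_lt_of_le (by positivity) hX
  calc 64 * 2 ^ n * (X ^ 3 * ω) ^ n * (α * ω)
      ≤ 64 * 2 ^ n * (X ^ (3 * n) * (2 ^ n * X ^ 2 * (D * β))) * (α * ω) := by
        rw [mul_pow, ← pow_mul]
        gcongr
    _ = 64 * 4 ^ n * X ^ (3 * n) * X ^ 2 * D * β * (α * ω) := by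
        rw [show (4 : ℝ) = 2 * 2 by norm_num, mul_pow]
        ring
    _ ≤ X * X ^ (3 * n) * X ^ 2 * D * β * (α * ω) := by gcongr
    _ = D * (X ^ (3 * n) * (X ^ 3 * ω)) * α * β := by ring

theorem two_pow_mul_div_pow_le (hn : n ≠ 0) (hβ : 0 ≤ β) (hD : 0 ≤ D) (hX : 64 * 4 ^ n ≤ X)
    (hωD : ω ^ n ≤ 2 ^ n * X ^ 2 * (D * β)) : 32 * 2 ^ n * (ω / X ^ 3) ^ n ≤ D * β := by
  have one_le : (1 : ℝ) ≤ 4 ^ n := one_le_pow₀ (by norm_num)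
  have X_one : 1 ≤ X := by linarith
  rw [div_pow, ← mul_div_assoc, div_le_iff₀ (by positivity)]
  calc 32 * 2 ^ n * ω ^ n ≤ 32 * 2 ^ n * (2 ^ n * X ^ 2 * (D * β)) := by gcongr
    _ = 32 * 4 ^ n * X ^ 2 * (D * β) := by
        rw [show (4 : ℝ) = 2 * 2 by norm_num, mul_pow]
        ring
    _ ≤ X * X ^ 2 * (D * β) := by gcongr; linarith
    _ = D * β * X ^ 3 := by ring
    _ ≤ D * β * (X ^ 3) ^ n := by
        gcongr
        exact le_self_pow₀ (one_le_pow₀ X_one) hn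

theorem inv_pow_mul_pow_le_one {a c : ℕ} (hX : 1 ≤ X) (m : ℕ) (h : c ≤ a * m) :
    ((X ^ a)⁻¹) ^ m * X ^ c ≤ 1 := by
  rw [inv_pow, ← pow_mul, inv_mul_le_one₀ (by positivity)]
  exact pow_le_pow_right₀ hX h

theorem left_volume_le (hβ : 0 ≤ β) (hω : 0 ≤ ω) (hD : 0 < D)
    (hX : 64 * 4 ^ n ≤ X) (hωD : ω ^ n ≤ 2 ^ n * X ^ 2 * (D * β)) {θ : ℝ}
    (hθ : θ = (X ^ (3 * n + 4))⁻¹) :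
    2 ^ n * (θ ^ n * ((X ^ 3 * ω) ^ n / D)) *
      (2 * (θ ^ 2 * (X ^ (3 * n + 1) * (X ^ 3 * ω)))) ≤ β * ω := by
  have one_le : (1 : ℝ) ≤ 4 ^ n := one_le_pow₀ (by norm_num)
  have X_one : 1 ≤ X := by linarith
  have θ_pos : 0 < θ := by rw [hθ]; positivity
  have θ_le : θ ^ (n + 2) * X ^ (6 * n + 7) ≤ 1 := by
    rw [hθ]
    exact inv_pow_mul_pow_le_one X_one _ (by nlinarith)
  have scale_le : (X ^ 3 * ω) ^ n / D ≤ X ^ (3 * n) * (2 ^ n * X ^ 2 * β) := by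
    rw [div_le_iff₀ hD, mul_pow, ← pow_mul, mul_assoc]
    gcongr
    exact hωD.trans_eq (by ring)
  calc _ ≤ 2 ^ n * (θ ^ n * (X ^ (3 * n) * (2 ^ n * X ^ 2 * β))) *
        (2 * (θ ^ 2 * (X ^ (3 * n + 1) * (X ^ 3 * ω)))) := by gcongr
    _ = 2 * 4 ^ n * (θ ^ (n + 2) * X ^ (6 * n + 6) * (β * ω)) := by
        rw [show (4 : ℝ) = 2 * 2 by norm_num, mul_pow]
        ring
    _ ≤ X * (θ ^ (n + 2) * X ^ (6 * n + 6) * (β * ω)) := by gcongr; linarith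
    _ = θ ^ (n + 2) * X ^ (6 * n + 7) * (β * ω) := by ring
    _ ≤ β * ω := mul_le_of_le_one_left (by positivity) θ_le

theorem right_volume_le (hα : 0 ≤ α) (hω : 0 ≤ ω) (hX : 64 * 4 ^ n ≤ X) (hD : D ≤ X * α) {θ : ℝ}
    (hθ : θ = (X ^ (3 * n + 4))⁻¹) :
    2 ^ n * (θ ^ n * ((X ^ (3 * n + 1)) ^ n * D)) *
      (2 * (θ ^ 2 * (X ^ (3 * n + 1) * (X ^ 3 * ω)))) ≤ α * ω := by
  have one_le : (1 : ℝ) ≤ 4 ^ n := one_le_pow₀ (by norm_num)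
  have two_le : (2 : ℝ) ^ n ≤ 4 ^ n := by gcongr; norm_num
  have X_one : 1 ≤ X := by linarith
  have θ_pos : 0 < θ := by rw [hθ]; positivity
  have θ_le : θ ^ (n + 2) * X ^ ((3 * n + 1) * (n + 1) + 5) ≤ 1 := by
    rw [hθ]
    exact inv_pow_mul_pow_le_one X_one _ (by nlinarith)
  calc _ ≤ 2 ^ n * (θ ^ n * ((X ^ (3 * n + 1)) ^ n * (X * α))) *
        (2 * (θ ^ 2 * (X ^ (3 * n + 1) * (X ^ 3 * ω)))) := by gcongr
    _ = 2 * 2 ^ n * (θ ^ (n + 2) * X ^ ((3 * n + 1) * (n + 1) + 4) * (α * ω)) := by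
        rw [← pow_mul]
        ring
    _ ≤ X * (θ ^ (n + 2) * X ^ ((3 * n + 1) * (n + 1) + 4) * (α * ω)) := by gcongr; linarith
    _ = θ ^ (n + 2) * X ^ ((3 * n + 1) * (n + 1) + 5) * (α * ω) := by ring
    _ ≤ α * ω := mul_le_of_le_one_left (by positivity) θ_le

theorem mul_le_pow_mul_scale_div (hα : 0 ≤ α) (hβ : 0 ≤ β) (hω : 0 ≤ ω) (hD : 0 < D)
    (hX : 64 * 4 ^ n ≤ X) (hDs : D ≤ X ^ 2 * s) :
    α * β * ω ≤ X ^ 7 * (α * β * (ω / X ^ 3 * s) / (256 * 2 ^ n * D)) := by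
  have one_le : (1 : ℝ) ≤ 4 ^ n := one_le_pow₀ (by norm_num)
  have two_le : (2 : ℝ) ^ n ≤ 4 ^ n := by gcongr; norm_num
  have X_ge : 64 ≤ X := by linarith
  have : 256 * 2 ^ n ≤ X ^ 2 := by nlinarith
  rw [← mul_div_assoc, le_div_iff₀ (by positivity)]
  calc α * β * ω * (256 * 2 ^ n * D) ≤ α * β * ω * (X ^ 2 * (X ^ 2 * s)) := by gcongr
    _ = X ^ 7 * (α * β * (ω / X ^ 3 * s)) := by field_simp

theorem two_mul_div_sq_add_three_pow_le {c : ℝ} (hc : 0 ≤ c) (hX : 1 ≤ X) (m p : ℕ) :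
    (2 * (c / ((X ^ m)⁻¹) ^ 2) + 3) ^ p ≤ (2 * c + 3) ^ p * X ^ (2 * m * p) := by
  have one_le : 1 ≤ X ^ (m * 2) := one_le_pow₀ hX
  rw [mul_comm 2 m, pow_mul X, ← mul_pow, inv_pow, div_inv_eq_mul, ← pow_mul]
  gcongr
  linarith

end Parameters

section LinearTheorem

variable {V : Type*} [NormedAddCommGroup V] [InnerProductSpace ℝ V] [MeasurableSpace V]
  [BorelSpace V] [FiniteDimensional ℝ V] {n : ℕ}

/-- Up to the factor `M`, the incidences between `E` and `F` come from the two projections of a ball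
of the incidence manifold, and neither projection has larger measure than the corresponding set. -/
def ConcentratesOnBall (n : ℕ) (M : ℝ) (E F : Set (V × ℝ)) : Prop :=
  ∃ (b : OrthonormalBasis (Fin n) ℝ V) (h : V × ℝ) (v : V) (r t : Fin n → ℝ) (ρ : ℝ),
    0 < ρ ∧ (∀ j, 0 < r j) ∧ (∀ j, 0 < t j) ∧ (∀ j, r j * t j = ρ) ∧
    linInc E F ≤ ENNReal.ofReal M *
      linInc (E ∩ linBall b h.1 (incPt h v) r ρ) (F ∩ linBall b v h t ρ) ∧
    volume (linBall b h.1 (incPt h v) r ρ) ≤ volume E ∧ volume (linBall b v h t ρ) ≤ volume F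

theorem le_two_pow_mul_prod_of_subset_box {b : OrthonormalBasis (Fin n) ℝ V} {c : V}
    {σ : Fin n → ℝ} (hσ : ∀ j, 0 < σ j) {S : Set V} (hS : S ⊆ box b c σ) {s : ℝ}
    (hs : ENNReal.ofReal s ≤ volume S) : s ≤ 2 ^ n * ∏ j, σ j := by
  have prod_pos : 0 < ∏ j, σ j := Finset.prod_pos fun j _ => hσ j
  have := hs.trans (measure_mono hS)
  rwa [volume_box b c hσ, Fintype.card_fin, ENNReal.ofReal_le_ofReal_iff (by positivity)] at this

theorem linInc_le_mul_linInc_inter_box (hn : n ≠ 0) (b : OrthonormalBasis (Fin n) ℝ V)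
    {σ : Fin n → ℝ} (hσ : ∀ j, 0 < σ j) {E F : Set (V × ℝ)} (mE : MeasurableSet E)
    (mF : MeasurableSet F) {α β ω s X : ℝ} (hα : 0 < α) (hβ : 0 < β) (hω : 0 < ω) (hs : 0 ≤ s)
    (hE : volume E ≤ ENNReal.ofReal (β * ω)) (hF : volume F ≤ ENNReal.ofReal (α * ω))
    (hEF : linInc E F ≤ ENNReal.ofReal (α * β * ω)) {h : V × ℝ} {y₀ : V}
    (hsS : ENNReal.ofReal s ≤ volume {y ∈ box b y₀ σ |
      ENNReal.ofReal (β / 4) ≤ volume (slice (richPart E F (α / 2)) (incPt h y))})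
    (hX : 64 * 4 ^ n ≤ X) (hσs : ∏ j, σ j ≤ X ^ 2 * s)
    (hωσ : ω ^ n ≤ 2 ^ n * X ^ 2 * ((∏ j, σ j) * β)) :
    linInc E F ≤ ENNReal.ofReal (X ^ 7) *
      linInc (E ∩ linBall b h.1 (incPt h y₀) (fun j => X ^ 3 * ω / σ j)
          ((2 * n + 1) * (X ^ 3 * ω)))
        (F ∩ Prod.fst ⁻¹' box b y₀ fun j => X ^ (3 * n + 1) * σ j) := by
  have D_pos : 0 < ∏ j, σ j := Finset.prod_pos fun j _ => hσ j
  have one_le : (1 : ℝ) ≤ 4 ^ n := one_le_pow₀ (by norm_num)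
  have two_le : (2 : ℝ) ^ n ≤ 4 ^ n := by gcongr; norm_num
  have X_two : 2 ≤ X := by linarith
  have K_ge : X ^ (3 * n) * (X ^ 3 * ω) + X ^ 3 * ω ≤ X ^ (3 * n + 1) * (X ^ 3 * ω) := by
    have : 1 ≤ X ^ (3 * n) := one_le_pow₀ (by linarith)
    rw [← add_one_mul, pow_succ X (3 * n)]
    exact mul_le_mul_of_nonneg_right (by nlinarith) (by positivity)
  refine hEF.trans ((ENNReal.ofReal_le_ofReal
    (mul_le_pow_mul_scale_div hα.le hβ.le hω.le D_pos hX hσs)).trans ?_)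
  rw [ENNReal.ofReal_mul (by positivity)]
  gcongr
  exact ofReal_le_linInc_inter_box b hσ mE mF hα hβ hs hE hF hsS rfl (by positivity)
    (l₂ := X ^ (3 * n) * (X ^ 3 * ω)) (l' := ω / X ^ 3) (by positivity) (by positivity)
    (two_pow_mul_le_scale_mul hβ.le hω.le D_pos.le (by linarith) hσs)
    (two_pow_mul_scale_pow_le hα.le hβ.le hω.le D_pos.le hX hωσ) K_ge
    (two_pow_mul_div_pow_le hn hβ.le D_pos.le hX hωσ)

theorem volume_linBall_div_le (b : OrthonormalBasis (Fin n) ℝ V) {σ : Fin n → ℝ}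
    (hσ : ∀ j, 0 < σ j) {β ω X θ : ℝ} (hβ : 0 ≤ β) (hω : 0 < ω) (hX : 64 * 4 ^ n ≤ X)
    (hωσ : ω ^ n ≤ 2 ^ n * X ^ 2 * ((∏ j, σ j) * β)) (hθ : θ = (X ^ (3 * n + 4))⁻¹) (c : V)
    (q : V × ℝ) :
    volume (linBall b c q (fun j => θ * (X ^ 3 * ω / σ j))
      (θ ^ 2 * (X ^ (3 * n + 1) * (X ^ 3 * ω)))) ≤ ENNReal.ofReal (β * ω) := by
  have X_pos : 0 < X := lt_of_lt_of_le (by positivity) hX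
  have θ_pos : 0 < θ := by rw [hθ]; positivity
  have r_pos (j) : 0 < θ * (X ^ 3 * ω / σ j) := by have := hσ j; positivity
  rw [volume_linBall b c q r_pos, ← ENNReal.ofReal_mul
      (mul_nonneg (by positivity) (Finset.prod_nonneg fun j _ => (r_pos j).le)),
    Finset.prod_mul_distrib, Finset.prod_div_distrib]
  simp only [Finset.prod_const, Finset.card_fin]
  exact ENNReal.ofReal_le_ofReal
    (left_volume_le hβ hω.le (Finset.prod_pos fun j _ => hσ j) hX hωσ hθ)

theorem volume_linBall_mul_le (b : OrthonormalBasis (Fin n) ℝ V) {σ : Fin n → ℝ}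
    (hσ : ∀ j, 0 < σ j) {α ω X θ : ℝ} (hα : 0 ≤ α) (hω : 0 ≤ ω) (hX : 64 * 4 ^ n ≤ X)
    (hσX : ∏ j, σ j ≤ X * α) (hθ : θ = (X ^ (3 * n + 4))⁻¹) (c : V) (q : V × ℝ) :
    volume (linBall b c q (fun j => θ * (X ^ (3 * n + 1) * σ j))
      (θ ^ 2 * (X ^ (3 * n + 1) * (X ^ 3 * ω)))) ≤ ENNReal.ofReal (α * ω) := by
  have X_pos : 0 < X := lt_of_lt_of_le (by positivity) hX
  have θ_pos : 0 < θ := by rw [hθ]; positivity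
  have t_pos (j) : 0 < θ * (X ^ (3 * n + 1) * σ j) := by have := hσ j; positivity
  rw [volume_linBall b c q t_pos, ← ENNReal.ofReal_mul
      (mul_nonneg (by positivity) (Finset.prod_nonneg fun j _ => (t_pos j).le)),
    Finset.prod_mul_distrib, Finset.prod_mul_distrib]
  simp only [Finset.prod_const, Finset.card_fin]
  exact ENNReal.ofReal_le_ofReal (right_volume_le hα hω hX hσX hθ)

theorem concentratesOnBall_of_rich_box (hn : n ≠ 0) (b : OrthonormalBasis (Fin n) ℝ V)
    {σ : Fin n → ℝ} (hσ : ∀ j, 0 < σ j) {E F : Set (V × ℝ)} (mE : MeasurableSet E)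
    (mF : MeasurableSet F) {α β ω s X : ℝ} (hα : 0 < α) (hβ : 0 < β) (hω : 0 < ω) (hs : 0 ≤ s)
    (hE : volume E = ENNReal.ofReal (β * ω)) (hF : volume F = ENNReal.ofReal (α * ω))
    (hEF : linInc E F = ENNReal.ofReal (α * β * ω)) {h : V × ℝ} {y₀ : V}
    (hsS : ENNReal.ofReal s ≤ volume {y ∈ box b y₀ σ |
      ENNReal.ofReal (β / 4) ≤ volume (slice (richPart E F (α / 2)) (incPt h y))})
    (hX : 64 * 4 ^ n ≤ X) (hαX : α ≤ X * s) (hσX : ∏ j, σ j ≤ X * α)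
    (hωX : ω ^ n ≤ X * (α * β)) :
    ConcentratesOnBall n ((2 * (2 * n + 1) ^ 2 + 3) ^ (2 * n + 1) *
      X ^ (2 * (3 * n + 4) * (2 * n + 1) + 7)) E F := by
  have one_le : (1 : ℝ) ≤ 4 ^ n := one_le_pow₀ (by norm_num)
  have X_one : 1 ≤ X := by linarith
  have hωσ := pow_le_two_pow_mul_sq_mul (by linarith) hβ.le hαX
    (le_two_pow_mul_prod_of_subset_box hσ (Set.sep_subset _ _) hsS) hωX
  have box_le := linInc_le_mul_linInc_inter_box hn b hσ mE mF hα hβ hω hs hE.le hF.le hEF.le hsS hX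
    (le_sq_mul_of_le_mul (by linarith) hαX hσX) hωσ
  have box_ne := right_ne_zero_of_mul (box_le.trans_lt' (by
    rw [hEF, ENNReal.ofReal_pos]
    positivity)).ne'
  set θ := (X ^ (3 * n + 4))⁻¹ with hθ
  have θ_pos : 0 < θ := by positivity
  have r_pos (j) : 0 < X ^ 3 * ω / σ j := by have := hσ j; positivity
  have t_pos (j) : 0 < X ^ (3 * n + 1) * σ j := by have := hσ j; positivity
  have mul_eq (j) : X ^ 3 * ω / σ j * (X ^ (3 * n + 1) * σ j) =
      X ^ (3 * n + 1) * (X ^ 3 * ω) := by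
    have := (hσ j).ne'
    field_simp
  obtain ⟨g, v, ball_le⟩ := exists_linInc_le_mul_linInc_inter_linBall b r_pos t_pos
    (by positivity) mul_eq θ_pos (inv_le_one_of_one_le₀ (one_le_pow₀ X_one))
    (mE.inter (measurableSet_linBall ..)) (mF.inter (measurable_fst (measurableSet_box ..)))
    (Set.inter_subset_right.trans (linBall_mono (mul_le_mul_of_nonneg_left
      (le_mul_of_one_le_left (by positivity) (one_le_pow₀ X_one)) (by positivity))))
    Set.inter_subset_right box_ne
  refine ⟨b, g, v, _, _, θ ^ 2 * (X ^ (3 * n + 1) * (X ^ 3 * ω)), by positivity,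
    fun j => mul_pos θ_pos (r_pos j), fun j => mul_pos θ_pos (t_pos j), fun j => ?_, ?_, ?_, ?_⟩
  · rw [mul_mul_mul_comm, mul_eq, ← sq]
  · refine box_le.trans ((mul_le_mul_right ball_le _).trans ?_)
    rw [← mul_assoc, ← ENNReal.ofReal_mul (by positivity)]
    refine mul_le_mul' (ENNReal.ofReal_le_ofReal ?_) (linInc_mono
      (Set.inter_subset_inter_left _ Set.inter_subset_left)
      (Set.inter_subset_inter_left _ Set.inter_subset_left))
    rw [pow_add X, ← mul_assoc, mul_comm]
    gcongr
    exact two_mul_div_sq_add_three_pow_le (by positivity) X_one _ _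
  · exact (volume_linBall_div_le b hσ hβ.le hω hX hωσ hθ _ _).trans_eq hE.symm
  · exact (volume_linBall_mul_le b hσ hα.le hω.le hX hσX hθ _ _).trans_eq hF.symm

theorem one_le_two_pow_mul_sq_mul {α s D K X : ℝ} (hα : 0 < α) (hK : 1 ≤ K)
    (hX : 0 < X) (hαs : α ≤ K * X ^ n * s) (hDα : D ≤ K * X ^ (n ^ 2 + 1) * α)
    (hsD : s ≤ 2 ^ n * D) : 1 ≤ 2 ^ n * K ^ 2 * X := by
  have one_le : (1 : ℝ) ≤ 2 ^ n * K ^ 2 :=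
    one_le_mul_of_one_le_of_one_le (one_le_pow₀ one_le_two) (one_le_pow₀ hK)
  rcases le_total 1 X with hX_one | hX_one
  · exact one_le_mul_of_one_le_of_one_le one_le hX_one
  have loop : 1 * α ≤ 2 ^ n * K ^ 2 * X ^ (n + (n ^ 2 + 1)) * α := by
    calc 1 * α ≤ K * X ^ n * (2 ^ n * (K * X ^ (n ^ 2 + 1) * α)) := by
          rw [one_mul]
          exact hαs.trans (by gcongr; exact hsD.trans (by gcongr))
      _ = 2 ^ n * K ^ 2 * X ^ (n + (n ^ 2 + 1)) * α := by ring
  refine (le_of_mul_le_mul_right loop hα).trans ?_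
  gcongr
  exact pow_le_of_le_one hX.le hX_one (by omega)

theorem mul_pow_le_quality {K M X : ℝ} (hK : 1 ≤ K) (hM : 1 ≤ M) (hX : 0 ≤ X) (hMX : 1 ≤ M * X)
    {m : ℕ} (hm : m ≤ n ^ 2 + 1) : K * X ^ m ≤ 64 * 4 ^ n * K * (M * X) ^ (n ^ 2 + 1) := by
  have one_le : (1 : ℝ) ≤ 4 ^ n := one_le_pow₀ (by norm_num)
  calc K * X ^ m ≤ K * (M * X) ^ (n ^ 2 + 1) := by
        gcongr
        exact (pow_le_pow_left₀ hX (le_mul_of_one_le_left hX hM) m).trans (pow_le_pow_right₀ hMX hm)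
    _ ≤ 64 * 4 ^ n * K * (M * X) ^ (n ^ 2 + 1) := by
        gcongr
        nlinarith

theorem exists_one_le_mul_and_concentratesOnBall (V : Type*) [NormedAddCommGroup V]
    [InnerProductSpace ℝ V] [MeasurableSpace V] [BorelSpace V] [FiniteDimensional ℝ V] (k : ℕ)
    [Fact (Module.finrank ℝ V = k + 1)] :
    ∃ (M C : ℝ) (P : ℕ), 0 < C ∧ 0 < P ∧ ∀ (E F : Set (V × ℝ)) (α β ω X : ℝ), MeasurableSet E →
      MeasurableSet F → 0 < α → 0 < β → 0 < ω → 0 < X → volume E = ENNReal.ofReal (β * ω) →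
      volume F = ENNReal.ofReal (α * ω) → linInc E F = ENNReal.ofReal (α * β * ω) →
      ω ^ (k + 1) ≤ X * (α * β) → 1 ≤ M * X ∧ ConcentratesOnBall (k + 1) (C * X ^ P) E F := by
  obtain ⟨K, hK, exists_box⟩ := exists_box_subset_rich V k
  set M := 2 ^ (k + 1) * K ^ 2
  have M_one : 1 ≤ M := one_le_mul_of_one_le_of_one_le (one_le_pow₀ one_le_two) (one_le_pow₀ hK)
  set c : ℝ := (2 * (2 * ((k + 1 : ℕ) : ℝ) + 1) ^ 2 + 3) ^ (2 * (k + 1) + 1)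
  set p := 2 * (3 * (k + 1) + 4) * (2 * (k + 1) + 1) + 7
  set q := (k + 1) ^ 2 + 1 with hq
  refine ⟨M, c * (64 * 4 ^ (k + 1) * K * M ^ q) ^ p, q * p, by positivity, by positivity, ?_⟩
  intro E F α β ω X mE mF hα hβ hω hX hE hF hEF hωX
  obtain ⟨b, σ, h, y, s, σ_pos, s_pos, hs, hαs, hσα⟩ := exists_box E F α β ω X mE mF hα hβ hω hX
    hE.le hF.le hEF.ge hωX
  have hMX : 1 ≤ M * X := one_le_two_pow_mul_sq_mul hα hK hX hαs hσα
    (le_two_pow_mul_prod_of_subset_box σ_pos (Set.sep_subset _ _) hs)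
  set Y := 64 * 4 ^ (k + 1) * K * (M * X) ^ q with hY
  have le_Y {m : ℕ} (hm : m ≤ q) : K * X ^ m ≤ Y := mul_pow_le_quality hK M_one hX.le hMX hm
  have X_le : X ≤ Y :=
    (le_mul_of_one_le_left hX.le hK).trans (by simpa using le_Y (m := 1) (by omega))
  have Y_ge : 64 * 4 ^ (k + 1) ≤ Y := by
    rw [hY, mul_assoc]
    exact le_mul_of_one_le_right (by positivity)
      (one_le_mul_of_one_le_of_one_le hK (one_le_pow₀ hMX))
  refine ⟨hMX, ?_⟩
  convert concentratesOnBall_of_rich_box k.succ_ne_zero b σ_pos mE mF hα hβ hω s_pos.le hE hF hEF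
    hs Y_ge (hαs.trans (by gcongr; exact le_Y (by nlinarith)))
    (hσα.trans (by gcongr; exact le_Y le_rfl)) (hωX.trans (by gcongr)) using 1
  rw [hY, mul_pow M, pow_mul, ← mul_assoc, mul_pow _ (X ^ q), mul_assoc]

theorem exists_one_le_mul_and_concentratesOnBall_of_pow_le (V : Type*) [NormedAddCommGroup V]
    [InnerProductSpace ℝ V] [MeasurableSpace V] [BorelSpace V] [FiniteDimensional ℝ V] (k : ℕ)
    [Fact (Module.finrank ℝ V = k + 1)] :
    ∃ (M C : ℝ) (P : ℕ), 0 < C ∧ 0 < P ∧ ∀ (E F : Set (V × ℝ)) (e f t X : ℝ), MeasurableSet E →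
      MeasurableSet F → 0 < e → 0 < f → 0 < t → 0 < X → volume E = ENNReal.ofReal e →
      volume F = ENNReal.ofReal f → linInc E F = ENNReal.ofReal t →
      (e * f) ^ (k + 2) ≤ X * t ^ (k + 3) →
      1 ≤ M * X ∧ ConcentratesOnBall (k + 1) (C * X ^ P) E F := by
  obtain ⟨M, C, P, hC, hP, concentrates⟩ := exists_one_le_mul_and_concentratesOnBall V k
  refine ⟨M, C, P, hC, hP, fun E F e f t X mE mF he hf ht hX hE hF hEF hle => ?_⟩
  refine concentrates E F (t / e) (t / f) (e * f / t) X mE mF (by positivity) (by positivity)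
    (by positivity) hX (hE.trans ?_) (hF.trans ?_) (hEF.trans ?_) ?_
  iterate 3
    congr 1
    field_simp
  rw [div_pow, div_mul_div_comm, ← mul_div_assoc, div_le_div_iff₀ (by positivity) (by positivity)]
  calc (e * f) ^ (k + 1) * (e * f) = (e * f) ^ (k + 2) := by ring
    _ ≤ X * t ^ (k + 3) := hle
    _ = X * (t * t) * t ^ (k + 1) := by ring

end LinearTheorem

section Quasiextremal

variable {V : Type*} [NormedAddCommGroup V] [InnerProductSpace ℝ V] [MeasurableSpace V]
  [BorelSpace V] [FiniteDimensional ℝ V] {E F : Set (V × ℝ)}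

theorem volume_ne_zero_of_linInc_ne_zero_left (h : linInc E F ≠ 0) : volume E ≠ 0 :=
  fun hE => h (setLIntegral_measure_zero E _ hE)

theorem volume_ne_zero_of_linInc_ne_zero_right (hE : MeasurableSet E) (hF : MeasurableSet F)
    (h : linInc E F ≠ 0) : volume F ≠ 0 :=
  volume_ne_zero_of_linInc_ne_zero_left (linInc_comm hE hF ▸ h)

theorem linInc_lt_top_of_subset_preimage_fst {B : Set V} (hF : F ⊆ Prod.fst ⁻¹' B)
    (hE : volume E ≠ ⊤) (hB : volume B ≠ ⊤) : linInc E F < ⊤ :=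
  calc linInc E F ≤ ∫⁻ _ in E, volume B := lintegral_mono fun _ => measure_mono fun _ hv => hF hv
    _ = volume B * volume E := setLIntegral_const E _
    _ < ⊤ := ENNReal.mul_lt_top hB.lt_top hE.lt_top

theorem linInc_eq_iSup_inter_preimage_ball (hE : MeasurableSet E) (hF : MeasurableSet F) :
    linInc E F = ⨆ R : ℕ, linInc E (F ∩ Prod.fst ⁻¹' Metric.ball 0 R) := by
  have union : incPairs E F = ⋃ R : ℕ, incPairs E (F ∩ Prod.fst ⁻¹' Metric.ball 0 R) := by
    ext ⟨q, v⟩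
    simpa [incPairs, slice, incPt] using fun _ _ => exists_nat_gt ‖v‖
  have mono : Monotone fun R : ℕ => incPairs E (F ∩ Prod.fst ⁻¹' Metric.ball 0 R) :=
    fun R S hRS _ hz => ⟨hz.1, hz.2.1, Metric.ball_subset_ball (Nat.cast_le.2 hRS) hz.2.2⟩
  rw [← volume_incPairs hE hF, union, mono.measure_iUnion]
  exact iSup_congr fun R =>
    volume_incPairs hE (hF.inter (measurable_fst measurableSet_ball))

/-- With `d = k + 2`, this is the restricted weak-type form of the estimate
`T : L^((d + 1) / d) → L^(d + 1)`. -/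
theorem exists_linInc_pow_le (V : Type*) [NormedAddCommGroup V] [InnerProductSpace ℝ V]
    [MeasurableSpace V] [BorelSpace V] [FiniteDimensional ℝ V] (k : ℕ)
    [Fact (Module.finrank ℝ V = k + 1)] :
    ∃ M : ℝ, ∀ E F : Set (V × ℝ), MeasurableSet E → MeasurableSet F → volume E ≠ ⊤ →
      volume F ≠ ⊤ → linInc E F ≠ ⊤ →
      linInc E F ^ (k + 3) ≤ ENNReal.ofReal M * (volume E * volume F) ^ (k + 2) := by
  obtain ⟨M, _, _, _, _, one_le⟩ := exists_one_le_mul_and_concentratesOnBall_of_pow_le V k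
  refine ⟨M, fun E F mE mF hE hF hEF => ?_⟩
  rcases eq_or_ne (linInc E F) 0 with h0 | h0
  · simp [h0]
  have e_pos := ENNReal.toReal_pos (volume_ne_zero_of_linInc_ne_zero_left h0) hE
  have f_pos := ENNReal.toReal_pos (volume_ne_zero_of_linInc_ne_zero_right mE mF h0) hF
  have t_pos := ENNReal.toReal_pos h0 hEF
  rw [← ofReal_toReal hE, ← ofReal_toReal hF, ← ofReal_toReal hEF]
  have hMX := (one_le E F _ _ _ (((volume E).toReal * (volume F).toReal) ^ (k + 2) /
    (linInc E F).toReal ^ (k + 3)) mE mF e_pos f_pos t_pos (by positivity) (ofReal_toReal hE).symm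
    (ofReal_toReal hF).symm (ofReal_toReal hEF).symm (div_mul_cancel₀ _ (by positivity)).ge).1
  rw [← mul_div_assoc, one_le_div (by positivity)] at hMX
  rw [← ofReal_mul e_pos.le, ← ofReal_pow t_pos.le, ← ofReal_pow (by positivity),
    ← ofReal_mul' (by positivity)]
  exact ofReal_le_ofReal hMX

theorem linInc_lt_top (k : ℕ) [Fact (Module.finrank ℝ V = k + 1)] (hE : MeasurableSet E)
    (hF : MeasurableSet F) (hE' : volume E ≠ ⊤) (hF' : volume F ≠ ⊤) : linInc E F < ⊤ := by
  obtain ⟨M, linInc_pow_le⟩ := exists_linInc_pow_le V k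
  have truncated (R : ℕ) : linInc E (F ∩ Prod.fst ⁻¹' Metric.ball 0 R) ≤
      max 1 (ENNReal.ofReal M * (volume E * volume F) ^ (k + 2)) := by
    rcases le_total (linInc E (F ∩ Prod.fst ⁻¹' Metric.ball 0 R)) 1 with h | h
    · exact le_max_of_le_left h
    have hFR := measure_mono (μ := volume) (Set.inter_subset_left (s := F)
      (t := Prod.fst ⁻¹' Metric.ball 0 R))
    refine le_max_of_le_right <| (le_self_pow h (by omega)).trans <| (linInc_pow_le E _ hE
      (hF.inter (measurable_fst measurableSet_ball)) hE' (ne_top_of_le_ne_top hF' hFR)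
      (linInc_lt_top_of_subset_preimage_fst Set.inter_subset_right hE'
        measure_ball_lt_top.ne).ne).trans ?_
    gcongr
  rw [linInc_eq_iSup_inter_preimage_ball hE hF]
  refine (iSup_le truncated).trans_lt (max_lt one_lt_top (ENNReal.mul_lt_top ofReal_lt_top ?_))
  exact ENNReal.pow_lt_top (ENNReal.mul_lt_top hE'.lt_top hF'.lt_top)

theorem pow_le_inv_pow_mul_pow_of_mul_rpow_le {e f t ε : ℝ} (k : ℕ) (he : 0 ≤ e) (hf : 0 ≤ f)
    (hε : 0 < ε) (h : ε * (e ^ ((k + 2 : ℝ) / (k + 3)) * f ^ ((k + 2 : ℝ) / (k + 3))) ≤ t) :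
    (e * f) ^ (k + 2) ≤ (ε ^ (k + 3))⁻¹ * t ^ (k + 3) := by
  rw [le_inv_mul_iff₀ (by positivity)]
  have rpow_pow {x : ℝ} (hx : 0 ≤ x) : (x ^ ((k + 2 : ℝ) / (k + 3))) ^ (k + 3) = x ^ (k + 2) := by
    rw [← Real.rpow_natCast, ← Real.rpow_mul hx, ← Real.rpow_natCast]
    push_cast
    rw [div_mul_cancel₀ _ (by positivity)]
  calc ε ^ (k + 3) * (e * f) ^ (k + 2)
      = (ε * (e ^ ((k + 2 : ℝ) / (k + 3)) * f ^ ((k + 2 : ℝ) / (k + 3)))) ^ (k + 3) := by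
        rw [mul_pow e, mul_pow ε, mul_pow (e ^ _), rpow_pow he, rpow_pow hf]
    _ ≤ t ^ (k + 3) := pow_le_pow_left₀ (by positivity) h _

theorem exists_concentratesOnBall_of_quasiextremal (V : Type*) [NormedAddCommGroup V]
    [InnerProductSpace ℝ V] [MeasurableSpace V] [BorelSpace V] [FiniteDimensional ℝ V] (k : ℕ)
    [Fact (Module.finrank ℝ V = k + 1)] :
    ∃ C A : ℝ, 0 < C ∧ 0 < A ∧ ∀ ε : ℝ, 0 < ε → ∀ E F : Set (V × ℝ), MeasurableSet E →
      MeasurableSet F → volume E ≠ 0 → volume E ≠ ⊤ → volume F ≠ 0 → volume F ≠ ⊤ →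
      ENNReal.ofReal ε * (volume E ^ ((k + 2 : ℝ) / (k + 3)) * volume F ^ ((k + 2 : ℝ) / (k + 3))) ≤
        linInc E F →
      ConcentratesOnBall (k + 1) (C * (ε ^ A)⁻¹) E F := by
  obtain ⟨_, C, P, hC, hP, concentrates⟩ :=
    exists_one_le_mul_and_concentratesOnBall_of_pow_le V k
  refine ⟨C, ((k + 3) * P : ℕ), hC, Nat.cast_pos.2 (by positivity), ?_⟩
  intro ε hε E F mE mF hE0 hE hF0 hF hEF
  have hT := (linInc_lt_top k mE mF hE hF).ne
  have e_pos := ENNReal.toReal_pos hE0 hE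
  have f_pos := ENNReal.toReal_pos hF0 hF
  rw [Real.rpow_natCast, pow_mul, ← inv_pow]
  have quasiextremal := ENNReal.toReal_mono hT hEF
  rw [toReal_mul, toReal_mul, ← toReal_rpow, ← toReal_rpow, toReal_ofReal hε.le] at quasiextremal
  exact (concentrates E F _ _ _ _ mE mF e_pos f_pos (lt_of_lt_of_le (by positivity) quasiextremal)
    (by positivity) (ofReal_toReal hE).symm (ofReal_toReal hF).symm (ofReal_toReal hT).symm
    (pow_le_inv_pow_mul_pow_of_mul_rpow_le k e_pos.le f_pos.le hε quasiextremal)).2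

end Quasiextremal

section Shears

variable {n : ℕ}

/-- The shear carrying the first factor of the incidence manifold to that of the relation of
`incPt`; it is an involution. -/
def shearLeft (x : Pt n) : Pt n := (x.1, ‖x.1‖ ^ 2 - x.2)

/-- The shear carrying the second factor of the relation of `incPt` to that of the incidence
manifold. -/
def shearRight : Pt n ≃ Pt n where
  toFun y := (y.1, y.2 - ‖y.1‖ ^ 2)
  invFun y := (y.1, y.2 + ‖y.1‖ ^ 2)
  left_inv y := by simp
  right_inv y := by simp

theorem shearLeft_involutive : Function.Involutive (shearLeft (n := n)) := fun x => by
  simp [shearLeft]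

theorem measurePreserving_shear (g : Vec n → ℝ → ℝ) (hg : Measurable (Function.uncurry g))
    (map_eq : ∀ a, Measure.map (g a) volume = volume) :
    MeasurePreserving fun x : Pt n => (x.1, g x.1 x.2) :=
  (MeasurePreserving.id volume).skew_product hg (.of_forall map_eq)

theorem measurePreserving_shearLeft : MeasurePreserving (shearLeft (n := n)) :=
  measurePreserving_shear (fun a s => ‖a‖ ^ 2 - s) (by fun_prop)
    fun a => Measure.map_sub_left_eq_self volume (‖a‖ ^ 2)

theorem measurePreserving_shearRight : MeasurePreserving (shearRight (n := n)) :=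
  measurePreserving_shear (fun a s => s - ‖a‖ ^ 2) (by fun_prop)
    fun a => map_sub_right_eq_self volume (‖a‖ ^ 2)

theorem measurePreserving_shearRight_symm : MeasurePreserving (shearRight (n := n)).symm :=
  measurePreserving_shear (fun a s => s + ‖a‖ ^ 2) (by fun_prop)
    fun a => map_add_right_eq_self volume (‖a‖ ^ 2)

theorem radonT_indicator_shearLeft {Es : Set (Pt n)} (hEs : MeasurableSet Es) (h : Pt n) :
    radonT n (Es.indicator 1) (shearLeft h) = volume (slice (shearRight ⁻¹' Es) h) := by
  have mF := measurePreserving_shearRight.measurable hEs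
  rw [radonT, ← lintegral_sub_left_eq_self _ h.1,
    ← lintegral_indicator_one (measurableSet_slice mF h)]
  refine lintegral_congr fun v => ?_
  have point : ((shearLeft h).1 - (h.1 - v), (shearLeft h).2 - ‖h.1 - v‖ ^ 2) =
      shearRight (incPt h v) := by
    refine Prod.ext (sub_sub_cancel h.1 v) ?_
    simp only [shearLeft, shearRight, incPt, Equiv.coe_fn_mk, norm_sub_sq_real]
    ring
  rw [point]
  rfl

theorem incT_eq_linInc {E Es : Set (Pt n)} (hE : MeasurableSet E) (hEs : MeasurableSet Es) :
    incT n E Es = linInc (shearLeft ⁻¹' E) (shearRight ⁻¹' Es) := by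
  have mF := measurePreserving_shearRight.measurable hEs
  have meas : Measurable (radonT n (Es.indicator 1)) := by
    have comp : radonT n (Es.indicator 1) =
        (fun h => volume (slice (shearRight ⁻¹' Es) h)) ∘ shearLeft := by
      funext x
      rw [Function.comp_apply, ← radonT_indicator_shearLeft hEs, shearLeft_involutive]
    rw [comp]
    exact (measurable_volume_slice mF).comp measurePreserving_shearLeft.measurable
  rw [incT, linInc, ← measurePreserving_shearLeft.setLIntegral_comp_preimage hE meas]
  simp_rw [radonT_indicator_shearLeft hEs]

variable (b : OrthonormalBasis (Fin n) ℝ (Vec n)) (h : Pt n) (v : Vec n) {r t : Fin n → ℝ} (ρ : ℝ)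

theorem fst_image_ballI (ht : ∀ j, 0 < t j) :
    Prod.fst '' ballI n (shearLeft h, shearRight (incPt h v)) b r t ρ =
      shearLeft ⁻¹' linBall b h.1 (incPt h v) r ρ := by
  have height (x : Pt n) : x.2 - (shearRight (incPt h v)).2 - ‖x.1 - v‖ ^ 2 =
      (incPt (shearLeft x) v).2 - (incPt h v).2 := by
    simp only [shearRight, shearLeft, incPt, Equiv.coe_fn_mk, norm_sub_sq_real]
    ring
  ext x
  constructor
  · rintro ⟨⟨x, y⟩, ⟨-, near, thin, -, -⟩, rfl⟩
    exact ⟨fun j => real_inner_comm _ (b j) ▸ near j, height x ▸ thin⟩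
  · rintro ⟨near, thin⟩
    have height' : x.2 - ‖v - x.1‖ ^ 2 - (shearLeft h).2 + ‖v - h.1‖ ^ 2 =
        (incPt (shearLeft x) v).2 - (incPt h v).2 := by
      simp only [shearLeft, incPt, norm_sub_sq_real, real_inner_comm v]
      ring
    refine ⟨(x, (v, x.2 - ‖v - x.1‖ ^ 2)), ⟨rfl, fun j => real_inner_comm (b j) _ ▸ near j, ?_,
      fun j => ?_, ?_⟩, rfl⟩
    · exact (height x).symm ▸ thin
    · simpa [shearRight, incPt] using ht j
    · exact height'.symm ▸ thin

theorem snd_image_ballI (hr : ∀ j, 0 < r j) :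
    Prod.snd '' ballI n (shearLeft h, shearRight (incPt h v)) b r t ρ =
      shearRight.symm ⁻¹' linBall b v h t ρ := by
  have height (y : Pt n) : |y.2 - (shearLeft h).2 + ‖y.1 - h.1‖ ^ 2| =
      |(incPt (shearRight.symm y) h.1).2 - h.2| := by
    rw [← abs_neg]
    simp only [shearRight, shearLeft, incPt, Equiv.coe_fn_symm_mk, norm_sub_sq_real]
    ring_nf
  ext y
  constructor
  · rintro ⟨⟨x, y⟩, ⟨-, -, -, near, thin⟩, rfl⟩
    exact ⟨fun j => real_inner_comm _ (b j) ▸ near j, height y ▸ thin⟩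
  · rintro ⟨near, thin⟩
    have height' : |y.2 + ‖y.1 - h.1‖ ^ 2 - (shearRight (incPt h v)).2 - ‖h.1 - v‖ ^ 2| =
        |(incPt (shearRight.symm y) h.1).2 - h.2| := by
      rw [← abs_neg]
      simp only [shearRight, incPt, Equiv.coe_fn_mk, Equiv.coe_fn_symm_mk, norm_sub_sq_real]
      ring_nf
    refine ⟨((h.1, y.2 + ‖y.1 - h.1‖ ^ 2), y), ⟨(add_sub_cancel_right _ _).symm, fun j => ?_, ?_,
      fun j => real_inner_comm (b j) _ ▸ near j, ?_⟩, rfl⟩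
    · simpa [shearLeft] using hr j
    · exact height'.trans_lt thin
    · exact (height y).trans_lt thin

theorem incT_inter_ballI {E Es : Set (Pt n)} (hE : MeasurableSet E) (hEs : MeasurableSet Es)
    (hr : ∀ j, 0 < r j) (ht : ∀ j, 0 < t j) :
    incT n (E ∩ Prod.fst '' ballI n (shearLeft h, shearRight (incPt h v)) b r t ρ)
        (Es ∩ Prod.snd '' ballI n (shearLeft h, shearRight (incPt h v)) b r t ρ) =
      linInc (shearLeft ⁻¹' E ∩ linBall b h.1 (incPt h v) r ρ)
        (shearRight ⁻¹' Es ∩ linBall b v h t ρ) := by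
  rw [fst_image_ballI b h v ρ ht, snd_image_ballI b h v ρ hr, incT_eq_linInc
    (hE.inter (measurePreserving_shearLeft.measurable (measurableSet_linBall ..)))
    (hEs.inter (measurePreserving_shearRight_symm.measurable (measurableSet_linBall ..))),
    Set.preimage_inter, Set.preimage_inter, ← Set.preimage_comp, shearLeft_involutive.comp_self,
    Set.preimage_id, Equiv.preimage_symm_preimage]

theorem isBallParams_shear {ρ : ℝ} (hρ : 0 < ρ) (hr : ∀ j, 0 < r j) (ht : ∀ j, 0 < t j)
    (hrt : ∀ j, r j * t j = ρ) :
    IsBallParams n (shearLeft h, shearRight (incPt h v)) b r t ρ := by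
  refine ⟨?_, hρ, b.orthonormal, hr, ht, hrt⟩
  simp only [shearLeft, shearRight, incPt, Equiv.coe_fn_mk, norm_sub_sq_real, real_inner_comm v]
  ring

theorem exists_ballI_of_concentratesOnBall {E Es : Set (Pt n)} {M : ℝ} (hM : 0 < M)
    (hE : MeasurableSet E) (hEs : MeasurableSet Es)
    (H : ConcentratesOnBall n M (shearLeft ⁻¹' E) (shearRight ⁻¹' Es)) :
    ∃ (zb : Pt n × Pt n) (e : Fin n → Vec n) (r rs : Fin n → ℝ) (ρ : ℝ),
      IsBallParams n zb e r rs ρ ∧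
      ENNReal.ofReal M⁻¹ * incT n E Es ≤
        incT n (E ∩ Prod.fst '' ballI n zb e r rs ρ) (Es ∩ Prod.snd '' ballI n zb e r rs ρ) ∧
      volume (Prod.fst '' ballI n zb e r rs ρ) ≤ volume E ∧
      volume (Prod.snd '' ballI n zb e r rs ρ) ≤ volume Es := by
  obtain ⟨b, h, v, r, t, ρ, hρ, hr, ht, hrt, inc, left, right⟩ := H
  refine ⟨_, b, r, t, ρ, isBallParams_shear b h v hρ hr ht hrt, ?_, ?_, ?_⟩
  · rwa [incT_inter_ballI b h v ρ hE hEs hr ht, incT_eq_linInc hE hEs, ofReal_inv_of_pos hM,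
      ENNReal.inv_mul_le_iff (ofReal_pos.2 hM).ne' ofReal_ne_top]
  · rwa [fst_image_ballI b h v ρ ht, measurePreserving_shearLeft.measure_preimage
      (measurableSet_linBall ..).nullMeasurableSet,
      ← measurePreserving_shearLeft.measure_preimage hE.nullMeasurableSet]
  · rwa [snd_image_ballI b h v ρ hr, measurePreserving_shearRight_symm.measure_preimage
      (measurableSet_linBall ..).nullMeasurableSet,
      ← measurePreserving_shearRight.measure_preimage hEs.nullMeasurableSet]

end Shears

/-- main theorem: any `ε`-quasiextremal pair `(E, E*)` interacts
strongly with the pair `(B, B*) = (π(ℬ), π*(ℬ))` of projections of some ball `ℬ`,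
with `|B| ≤ |E|` and `|B*| ≤ |E*|`. -/
theorem stmt3 (d : ℕ) (hd : 2 ≤ d) :
    ∃ C A : ℝ, 0 < C ∧ 0 < A ∧
      ∀ (ε : ℝ), 0 < ε →
      ∀ (E Es : Set (Pt (d - 1))), MeasurableSet E → MeasurableSet Es →
        0 < volume E → volume E < ⊤ → 0 < volume Es → volume Es < ⊤ →
        ENNReal.ofReal ε * (volume E ^ ((d : ℝ) / (d + 1)) *
            volume Es ^ ((d : ℝ) / (d + 1))) ≤ incT (d - 1) E Es →
        ∃ (zb : Pt (d - 1) × Pt (d - 1)) (e : Fin (d - 1) → Vec (d - 1))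
          (r rs : Fin (d - 1) → ℝ) (ρ : ℝ),
          IsBallParams (d - 1) zb e r rs ρ ∧
          ENNReal.ofReal (C⁻¹ * ε ^ A) * incT (d - 1) E Es ≤
            incT (d - 1) (E ∩ Prod.fst '' ballI (d - 1) zb e r rs ρ)
              (Es ∩ Prod.snd '' ballI (d - 1) zb e r rs ρ) ∧
          volume (Prod.fst '' ballI (d - 1) zb e r rs ρ) ≤ volume E ∧
          volume (Prod.snd '' ballI (d - 1) zb e r rs ρ) ≤ volume Es := by
  obtain ⟨k, rfl⟩ : ∃ k, d = k + 2 := ⟨d - 2, by omega⟩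
  have finrank : Fact (Module.finrank ℝ (Vec (k + 1)) = k + 1) := ⟨finrank_euclideanSpace_fin⟩
  have exponent : ((k + 2 : ℕ) : ℝ) / ((k + 2 : ℕ) + 1) = (k + 2) / (k + 3) := by
    push_cast
    ring
  obtain ⟨C, A, hC, hA, concentrates⟩ := exists_concentratesOnBall_of_quasiextremal (Vec (k + 1)) k
  refine ⟨C, A, hC, hA, fun ε hε E Es hE hEs hE0 hE' hEs0 hEs' quasiextremal => ?_⟩
  have volume_E := measurePreserving_shearLeft.measure_preimage hE.nullMeasurableSet
  have volume_Es := measurePreserving_shearRight.measure_preimage hEs.nullMeasurableSet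
  rw [exponent, incT_eq_linInc hE hEs, ← volume_E, ← volume_Es] at quasiextremal
  have H := concentrates ε hε _ _ (measurePreserving_shearLeft.measurable hE)
    (measurePreserving_shearRight.measurable hEs) (volume_E ▸ hE0.ne') (volume_E ▸ hE'.ne)
    (volume_Es ▸ hEs0.ne') (volume_Es ▸ hEs'.ne) quasiextremal
  simpa only [mul_inv, inv_inv] using exists_ballI_of_concentratesOnBall (by positivity) hE hEs H
end
end
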